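/- arXiv:2501.19286 — 2 statements merged into one kernel-verified Lean document; each statement's English description precedes it below -/
import Mathlib

section
/- Let d ≥ 2, let Σ ⊂ GL_d(ℝ) be a compact subset, let μ₀ be a Borel probability measure with supp(μ₀) = Σ and L_1(μ₀) > L_2(μ₀), let p ∈ [1, ∞], and let f ∈ L^p(μ₀) satisfy f ≥ 0 and ∫ f dμ₀ = 1. Then the map t ↦ L_1(((1−t) + t f) · μ₀), where ((1−t)+tf)·μ₀ denotes the measure with density (1−t)+tf with respect to μ₀, is given by a convergent power series near 0: there exist ε > 0 and real coefficients (a_k)_{k≥0} with Σ_k |a_k| ε^k < ∞ such that L_1(((1−t)+tf)·μ₀) = Σ_{k≥0} a_k t^k for all t ∈ [0, ε). -/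
open MeasureTheory Filter
open scoped LinearAlgebra.Projectivization

noncomputable section

abbrev GLd (d : ℕ) := GL (Fin d) ℝ
abbrev Ed (d : ℕ) := EuclideanSpace ℝ (Fin d)
abbrev Pd (d : ℕ) := ℙ ℝ (Ed d)

variable {d : ℕ}

instance : MeasurableSpace (GLd d) := borel _
instance : BorelSpace (GLd d) := ⟨rfl⟩

instance : TopologicalSpace (Pd d) :=
  (instTopologicalSpaceQuotient : TopologicalSpace (Quotient (projectivizationSetoid ℝ (Ed d))))
instance : MeasurableSpace (Pd d) := borel _
instance : BorelSpace (Pd d) := ⟨rfl⟩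

/-- The continuous linear map on Euclidean space induced by `g ∈ GL_d(ℝ)`. -/
def glCLM (g : GLd d) : Ed d →L[ℝ] Ed d :=
  Matrix.toEuclideanCLM (𝕜 := ℝ) (g : Matrix (Fin d) (Fin d) ℝ)

/-- The operator norm of `g ∈ GL_d(ℝ)`. -/
def gnorm (g : GLd d) : ℝ := ‖glCLM g‖

lemma glCLM_leftInv (g : GLd d) (v : Ed d) : glCLM g⁻¹ (glCLM g v) = v := by
  have h : glCLM (d := d) g⁻¹ * glCLM g = 1 := by
    rw [glCLM, glCLM, ← map_mul]
    norm_cast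
    rw [inv_mul_cancel g]
    exact map_one _
  calc glCLM g⁻¹ (glCLM g v) = (glCLM g⁻¹ * glCLM g) v := rfl
    _ = v := by rw [h]; rfl

lemma glLinear_injective (g : GLd d) : Function.Injective (glCLM g).toLinearMap :=
  Function.LeftInverse.injective (g := (glCLM g⁻¹)) (fun v => glCLM_leftInv g v)

/-- The projective action of `g ∈ GL_d(ℝ)` on `ℙ(ℝ^d)`. -/
def pact (g : GLd d) : Pd d → Pd d :=
  Projectivization.map (glCLM g).toLinearMap (glLinear_injective g)

/-- The projective distance `δ` on `ℙ(ℝ^d)`, computed on representatives. -/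
def pdelta (x y : Pd d) : ℝ :=
  Real.sqrt (‖x.rep‖ ^ 2 * ‖y.rep‖ ^ 2 - (inner ℝ x.rep y.rep : ℝ) ^ 2) /
    (‖x.rep‖ * ‖y.rep‖)

/-- Convolution of two measures on `GL_d(ℝ)`. -/
def mconv (μ ν : Measure (GLd d)) : Measure (GLd d) :=
  (μ.prod ν).map (fun p => p.1 * p.2)

/-- `n`-fold convolution power of a measure on `GL_d(ℝ)`. -/
def mconvN (μ : Measure (GLd d)) : ℕ → Measure (GLd d)
  | 0 => Measure.dirac 1
  | n + 1 => if n = 0 then μ else mconv (mconvN μ n) μ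

/-- The top Lyapunov exponent of a (compactly supported) measure on `GL_d(ℝ)`. -/
def L1 (μ : Measure (GLd d)) : ℝ :=
  limUnder atTop (fun n : ℕ => (n : ℝ)⁻¹ * ∫ g, Real.log (gnorm g) ∂(mconvN μ n))

/-- `N₂ g = s₁(g)s₂(g)`, the product of the two largest singular values. -/
def N2 (g : GLd d) : ℝ :=
  sSup { x | ∃ p q : Ed d, ‖p‖ = 1 ∧ ‖q‖ = 1 ∧ (inner ℝ p q : ℝ) = 0 ∧
    x = Real.sqrt (‖glCLM g p‖ ^ 2 * ‖glCLM g q‖ ^ 2 -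
      (inner ℝ (glCLM g p) (glCLM g q) : ℝ) ^ 2) }

/-- `L₁(μ) + L₂(μ)`. -/
def L12 (μ : Measure (GLd d)) : ℝ :=
  limUnder atTop (fun n : ℕ => (n : ℝ)⁻¹ * ∫ g, Real.log (N2 g) ∂(mconvN μ n))

/-- The second Lyapunov exponent. -/
def L2 (μ : Measure (GLd d)) : ℝ := L12 μ - L1 μ

/-- The top Lyapunov exponent of the restriction of `μ` to an (invariant) subspace `V`. -/
def L1rest (μ : Measure (GLd d)) (V : Submodule ℝ (Ed d)) : ℝ :=
  limUnder atTop (fun n : ℕ => (n : ℝ)⁻¹ *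
    ∫ g, Real.log ‖LinearMap.toContinuousLinearMap ((glCLM g).toLinearMap.domRestrict V)‖
      ∂(mconvN μ n))

/-- Quasi-irreducibility of a measure on `GL_d(ℝ)`. -/
def QuasiIrreducible (μ : Measure (GLd d)) : Prop :=
  ¬ ∃ V : Submodule ℝ (Ed d), V ≠ ⊥ ∧ V ≠ ⊤ ∧
    (∀ᵐ g ∂μ, V.map (glCLM g).toLinearMap = V) ∧ L1rest μ V < L1 μ

/-- Irreducibility of a measure on `GL_d(ℝ)`. -/
def Irred (μ : Measure (GLd d)) : Prop :=
  ¬ ∃ V : Submodule ℝ (Ed d), V ≠ ⊥ ∧ V ≠ ⊤ ∧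
    (∀ᵐ g ∂μ, V.map (glCLM g).toLinearMap = V)

/-- The Markov operator associated with a measure on `GL_d(ℝ)`. -/
def Qop (μ : Measure (GLd d)) (φ : Pd d → ℝ) : Pd d → ℝ :=
  fun v => ∫ g, φ (pact g v) ∂μ

/-- The average `α`-Hölder constant of a measure on `GL_d(ℝ)`. -/
def kalpha (α : ℝ) (μ : Measure (GLd d)) : ℝ :=
  sSup { x | ∃ v₁ v₂ : Pd d, v₁ ≠ v₂ ∧
    x = ∫ g, (pdelta (pact g v₁) (pact g v₂) / pdelta v₁ v₂) ^ α ∂μ }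

/-- The `α`-Hölder seminorm of an observable on `ℙ(ℝ^d)`. -/
def valpha (α : ℝ) (φ : Pd d → ℝ) : ℝ :=
  sSup { x | ∃ v₁ v₂ : Pd d, v₁ ≠ v₂ ∧ x = |φ v₁ - φ v₂| / pdelta v₁ v₂ ^ α }

/-- `φ` is `α`-Hölder: `v_α(φ) < ∞`. -/
def IsHolder (α : ℝ) (φ : Pd d → ℝ) : Prop :=
  BddAbove { x | ∃ v₁ v₂ : Pd d, v₁ ≠ v₂ ∧ x = |φ v₁ - φ v₂| / pdelta v₁ v₂ ^ α }

/-- The total variation distance between two finite measures. -/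
def tvDist (μ ν : Measure (GLd d)) [IsFiniteMeasure μ] [IsFiniteMeasure ν] : ℝ :=
  ((μ.toSignedMeasure - ν.toSignedMeasure).totalVariation Set.univ).toReal

/-- A measure is compactly supported. -/
def CompactlySupported (μ : Measure (GLd d)) : Prop :=
  ∃ K : Set (GLd d), IsCompact K ∧ μ Kᶜ = 0

/-- `S` is the (topological) support of `μ`. -/
def IsSupport (μ : Measure (GLd d)) (S : Set (GLd d)) : Prop :=
  μ Sᶜ = 0 ∧ ∀ x ∈ S, ∀ U : Set (GLd d), IsOpen U → x ∈ U → 0 < μ U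

/-- A measure `η` on `ℙ(ℝ^d)` is `μ`-stationary. -/
def Stationary (μ : Measure (GLd d)) (η : Measure (Pd d)) : Prop :=
  ∀ φ : Pd d → ℝ, Continuous φ → (∃ C, ∀ v, |φ v| ≤ C) →
    ∫ v, φ v ∂η = ∫ g, ∫ v, φ (pact g v) ∂η ∂μ

open scoped ENNReal NNReal Topology

/-!
On an endomorphism `h` of rank one, `g ↦ log ‖g‖` is additive under multiplication on both sides:
the second difference `log ‖a h b‖ - log ‖a h‖ - log ‖h b‖ + log ‖h‖` vanishes. For general `h` it
is at most a constant times the ratio `s₂(h) / s₁(h)` of the two largest singular values. For a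
random product `h` of length `n`, small moments of this ratio decay exponentially in `n` as soon as
`L₂ < L₁`, and they still do after a small finite measure, absolutely continuous with respect to
`μ₀`, has been added to the law of the factors. Now `L₁` is the mean of `log ‖g‖` for a single
factor plus the means of the second differences over all lengths `n ≥ 0`. Each of these is a
polynomial in `t` with a majorant that is an integral against such an enlarged measure, so the sum
is a power series.

The decay of the moments has two halves. The upper bound for `log (s₁ s₂)` is that of a bounded
subadditive cocycle, whose exponential moments at one large time determine all others. The lower
bound for `log s₁` is obtained by induction on the dimension: an irreducible walk expands all
vectors at the same rate, and a reducible one grows at the rate of one of its diagonal blocks.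
-/

/-! ### Convolution powers and exponential moments -/

section ConvPow

variable {M : Type*} [Monoid M] [MeasurableSpace M]

/-- The `n`-fold convolution power of a measure on a monoid, with `convPow κ 0 = δ₁`. In contrast
to `mconvN`, it makes sense on every measurable monoid and has no special case at `n = 1`. -/
def convPow (κ : Measure M) : ℕ → Measure M
  | 0 => Measure.dirac 1
  | n + 1 => convPow κ n ∗ₘ κ

lemma convPow_zero (κ : Measure M) : convPow κ 0 = Measure.dirac 1 := rfl

lemma convPow_succ (κ : Measure M) (n : ℕ) : convPow κ (n + 1) = convPow κ n ∗ₘ κ := rfl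

variable [MeasurableMul₂ M]

instance (κ : Measure M) [IsFiniteMeasure κ] (n : ℕ) : IsFiniteMeasure (convPow κ n) := by
  induction n with
  | zero => rw [convPow_zero]; infer_instance
  | succ n ih => rw [convPow_succ]; infer_instance

instance (κ : Measure M) [IsProbabilityMeasure κ] (n : ℕ) :
    IsProbabilityMeasure (convPow κ n) := by
  induction n with
  | zero => rw [convPow_zero]; infer_instance
  | succ n ih => rw [convPow_succ]; infer_instance

lemma convPow_one (κ : Measure M) [SFinite κ] : convPow κ 1 = κ := by
  rw [convPow_succ, convPow_zero, Measure.dirac_one_mconv]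

lemma convPow_add (κ : Measure M) [IsFiniteMeasure κ] (m n : ℕ) :
    convPow κ (m + n) = convPow κ m ∗ₘ convPow κ n := by
  induction n with
  | zero => rw [add_zero, convPow_zero, Measure.mconv_dirac_one]
  | succ n ih => rw [← add_assoc, convPow_succ, ih, convPow_succ, Measure.mconv_assoc]

lemma convPow_succ' (κ : Measure M) [IsFiniteMeasure κ] (n : ℕ) :
    convPow κ (n + 1) = κ ∗ₘ convPow κ n := by
  rw [add_comm, convPow_add, convPow_one]

lemma integrable_mul_prod_convPow {κ : Measure M} [IsFiniteMeasure κ] {φ : M → ℝ} {m n : ℕ}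
    (h : Integrable φ (convPow κ (m + n))) :
    Integrable (fun p : M × M => φ (p.1 * p.2)) ((convPow κ m).prod (convPow κ n)) := by
  rw [convPow_add] at h
  exact h.comp_measurable (by fun_prop)

lemma integral_mul_prod_convPow {κ : Measure M} [IsFiniteMeasure κ] {φ : M → ℝ} {m n : ℕ}
    (h : Integrable φ (convPow κ (m + n))) :
    ∫ p : M × M, φ (p.1 * p.2) ∂(convPow κ m).prod (convPow κ n) =
      ∫ g, φ g ∂convPow κ (m + n) := by
  rw [convPow_add] at h ⊢
  exact (integral_map (by fun_prop) h.aestronglyMeasurable).symm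

lemma mconv_univ (μ ν : Measure M) [SFinite ν] :
    (μ ∗ₘ ν) Set.univ = μ Set.univ * ν Set.univ := by
  rw [Measure.mconv, Measure.map_apply (by fun_prop) .univ, Set.preimage_univ,
    ← Set.univ_prod_univ, Measure.prod_prod]

lemma convPow_univ (κ : Measure M) [IsFiniteMeasure κ] (n : ℕ) :
    convPow κ n Set.univ = κ Set.univ ^ n := by
  induction n with
  | zero => simp [convPow_zero]
  | succ n ih => rw [convPow_succ, mconv_univ, ih, pow_succ]

lemma ae_mconv_mem {μ ν : Measure M} {A B C : Set M}
    (hC : MeasurableSet C) (hmul : ∀ a ∈ A, ∀ b ∈ B, a * b ∈ C)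
    (hA : ∀ᵐ g ∂μ, g ∈ A) (hB : ∀ᵐ g ∂ν, g ∈ B) : ∀ᵐ g ∂(μ ∗ₘ ν), g ∈ C := by
  refine (ae_map_iff (p := (· ∈ C)) (by fun_prop) hC).2 ?_
  filter_upwards [Measure.quasiMeasurePreserving_fst.ae hA,
    Measure.quasiMeasurePreserving_snd.ae hB] with p hp₁ hp₂ using hmul _ hp₁ _ hp₂

lemma ae_convPow_mem {κ : Measure M} {P : ℕ → Set M} {A : Set M}
    (hP : ∀ n, MeasurableSet (P n)) (h_one : 1 ∈ P 0)
    (hmul : ∀ n, ∀ a ∈ P n, ∀ b ∈ A, a * b ∈ P (n + 1)) (hA : ∀ᵐ g ∂κ, g ∈ A) (n : ℕ) :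
    ∀ᵐ g ∂convPow κ n, g ∈ P n := by
  induction n with
  | zero => exact (ae_dirac_iff (p := (· ∈ P 0)) (hP 0)).2 h_one
  | succ n ih => exact ae_mconv_mem (hP _) (hmul n) ih hA

lemma ae_convPow_mem_submonoid {κ : Measure M} {S : Submonoid M}
    (hS : MeasurableSet (S : Set M)) (hκ : ∀ᵐ g ∂κ, g ∈ S) (n : ℕ) :
    ∀ᵐ g ∂convPow κ n, g ∈ S :=
  ae_convPow_mem (P := fun _ => S) (fun _ => hS) S.one_mem
    (fun _ _ ha _ hb => S.mul_mem ha hb) hκ n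

lemma absolutelyContinuous_convPow {κ κ' : Measure M} [SFinite κ'] (h : κ ≪ κ') (n : ℕ) :
    convPow κ n ≪ convPow κ' n := by
  induction n with
  | zero => exact .rfl
  | succ n ih => exact (ih.prod h).map (by fun_prop)

lemma exists_convPow_add_eq (ν τ : Measure M) [IsProbabilityMeasure ν] [IsFiniteMeasure τ]
    (n : ℕ) :
    ∃ ρ : Measure M, IsFiniteMeasure ρ ∧ convPow (ν + τ) n = convPow ν n + ρ ∧
      ρ Set.univ = (1 + τ Set.univ) ^ n - 1 := by
  suffices ∃ ρ : Measure M, IsFiniteMeasure ρ ∧ convPow (ν + τ) n = convPow ν n + ρ by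
    obtain ⟨ρ, hρ, h⟩ := this
    refine ⟨ρ, hρ, h, ?_⟩
    have h_univ := congrArg (fun m : Measure M => m Set.univ) h
    simp only [convPow_univ, Measure.add_apply, measure_univ] at h_univ
    rw [h_univ]
    exact (ENNReal.add_sub_cancel_left ENNReal.one_ne_top).symm
  induction n with
  | zero => exact ⟨0, inferInstance, by simp [convPow_zero]⟩
  | succ n ih =>
    obtain ⟨ρ, hρ, h⟩ := ih
    refine ⟨convPow ν n ∗ₘ τ + ρ ∗ₘ (ν + τ), inferInstance, ?_⟩
    rw [convPow_succ, convPow_succ, h, Measure.add_mconv, Measure.mconv_add, add_assoc]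

lemma map_convPow {N : Type*} [Monoid N] [MeasurableSpace N] [MeasurableMul₂ N]
    {κ : Measure M} [IsFiniteMeasure κ] {r : M → N} (hr : Measurable r) {S : Submonoid M}
    (hS : MeasurableSet (S : Set M)) (hr_one : r 1 = 1)
    (hr_mul : ∀ a ∈ S, ∀ b ∈ S, r (a * b) = r a * r b) (hκ : ∀ᵐ g ∂κ, g ∈ S) (n : ℕ) :
    (convPow κ n).map r = convPow (κ.map r) n := by
  induction n with
  | zero => rw [convPow_zero, convPow_zero, Measure.map_dirac' hr, hr_one]
  | succ n ih =>
    rw [convPow_succ, convPow_succ, ← ih, Measure.mconv, Measure.mconv,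
      Measure.map_map hr (by fun_prop), Measure.map_prod_map _ _ hr hr,
      Measure.map_map (by fun_prop) (by fun_prop)]
    apply Measure.map_congr
    filter_upwards [Measure.quasiMeasurePreserving_fst.ae (ae_convPow_mem_submonoid hS hκ n),
      Measure.quasiMeasurePreserving_snd.ae hκ] with p hp₁ hp₂
    exact hr_mul _ hp₁ _ hp₂

end ConvPow

lemma absolutelyContinuous_add_right_self {Ω : Type*} [MeasurableSpace Ω] {ν τ : Measure Ω}
    (h : τ ≪ ν) : ν + τ ≪ ν := fun s hs => by
  simp [hs, h hs]

section ExpMoment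

variable {Ω : Type*} [MeasurableSpace Ω]

/-- The moment generating function of `φ` at `α`, with values in `ℝ≥0∞` so that no integrability
is required. -/
def expMoment (α : ℝ) (φ : Ω → ℝ) (κ : Measure Ω) : ℝ≥0∞ :=
  ∫⁻ g, ENNReal.ofReal (Real.exp (α * φ g)) ∂κ

lemma measurable_ofReal_exp_mul {φ : Ω → ℝ} (hφ : Measurable φ) (α : ℝ) :
    Measurable fun g => ENNReal.ofReal (Real.exp (α * φ g)) := by
  fun_prop

lemma expMoment_map {Ω' : Type*} [MeasurableSpace Ω'] {r : Ω → Ω'} (hr : Measurable r)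
    {φ : Ω' → ℝ} (hφ : Measurable φ) (α : ℝ) (κ : Measure Ω) :
    expMoment α φ (κ.map r) = expMoment α (φ ∘ r) κ :=
  lintegral_map (measurable_ofReal_exp_mul hφ α) hr

lemma expMoment_mono_ae {α : ℝ} (hα : 0 ≤ α) {φ φ' : Ω → ℝ} {κ : Measure Ω}
    (h : ∀ᵐ g ∂κ, φ g ≤ φ' g) : expMoment α φ κ ≤ expMoment α φ' κ := by
  apply lintegral_mono_ae
  filter_upwards [h] with g hg
  gcongr

lemma expMoment_le_of_ae_le {α : ℝ} (hα : 0 ≤ α) {φ : Ω → ℝ} {c : ℝ} {κ : Measure Ω}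
    (h : ∀ᵐ g ∂κ, φ g ≤ c) :
    expMoment α φ κ ≤ ENNReal.ofReal (Real.exp (α * c)) * κ Set.univ :=
  (expMoment_mono_ae hα h).trans_eq (lintegral_const _)

lemma expMoment_add_le {φ ψ : Ω → ℝ} (hφ : Measurable φ) (hψ : Measurable ψ) (α : ℝ)
    (κ : Measure Ω) :
    expMoment α (fun g => φ g + ψ g) κ ≤
      expMoment (2 * α) φ κ ^ (1 / 2 : ℝ) * expMoment (2 * α) ψ κ ^ (1 / 2 : ℝ) := by
  have exp_sq : ∀ x : ℝ, ENNReal.ofReal (Real.exp (α * x)) ^ (2 : ℝ) =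
      ENNReal.ofReal (Real.exp (2 * α * x)) := fun x => by
    rw [ENNReal.rpow_two, ← ENNReal.ofReal_pow (Real.exp_pos _).le, ← Real.exp_nat_mul]
    ring_nf
  have holder := ENNReal.lintegral_mul_le_Lp_mul_Lq κ (p := 2) (q := 2)
    (Real.holderConjugate_iff.2 ⟨by norm_num, by norm_num⟩)
    (measurable_ofReal_exp_mul hφ α).aemeasurable (measurable_ofReal_exp_mul hψ α).aemeasurable
  simp only [exp_sq] at holder
  refine le_trans (lintegral_mono fun g => le_of_eq ?_) holder
  rw [Pi.mul_apply, ← ENNReal.ofReal_mul (Real.exp_pos _).le, ← Real.exp_add, mul_add]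

lemma expMoment_le_exp_of_integral_le {κ : Measure Ω} [IsProbabilityMeasure κ] {φ : Ω → ℝ}
    (hφ : AEStronglyMeasurable φ κ) {R m α : ℝ} (hR : ∀ᵐ g ∂κ, |φ g| ≤ R) (hα : 0 ≤ α)
    (hαR : α * R ≤ 1) (hm : ∫ g, φ g ∂κ ≤ m) :
    expMoment α φ κ ≤ ENNReal.ofReal (Real.exp (α * m + (α * R) ^ 2)) := by
  have hint : Integrable φ κ := .of_bound hφ R hR
  have hquad : ∀ᵐ g ∂κ, Real.exp (α * φ g) ≤ 1 + α * φ g + (α * R) ^ 2 := by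
    filter_upwards [hR] with g hg
    have h_abs : |α * φ g| ≤ α * R := by rw [abs_mul, abs_of_nonneg hα]; gcongr
    have h_taylor := (abs_le.1 (Real.abs_exp_sub_one_sub_id_le (h_abs.trans hαR))).2
    have h_sq := sq_le_sq' (neg_le_of_abs_le h_abs) (le_of_abs_le h_abs)
    linarith
  have hint_lin : Integrable (fun g => 1 + α * φ g) κ :=
    (integrable_const _).add (hint.const_mul α)
  have hint_quad : Integrable (fun g => 1 + α * φ g + (α * R) ^ 2) κ :=
    hint_lin.add (integrable_const _)
  calc expMoment α φ κ
      ≤ ∫⁻ g, ENNReal.ofReal (1 + α * φ g + (α * R) ^ 2) ∂κ := lintegral_mono_ae <| by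
        filter_upwards [hquad] with g hg using ENNReal.ofReal_le_ofReal hg
    _ = ENNReal.ofReal (∫ g, (1 + α * φ g + (α * R) ^ 2) ∂κ) := by
        rw [ofReal_integral_eq_lintegral_ofReal hint_quad]
        filter_upwards [hquad] with g hg using (Real.exp_pos _).le.trans hg
    _ = ENNReal.ofReal (1 + α * ∫ g, φ g ∂κ + (α * R) ^ 2) := by
        rw [integral_add hint_lin (integrable_const _),
          integral_add (integrable_const _) (hint.const_mul α), integral_const_mul]
        simp
    _ ≤ ENNReal.ofReal (Real.exp (α * m + (α * R) ^ 2)) := by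
        gcongr
        have := mul_le_mul_of_nonneg_left hm hα
        linarith [Real.add_one_le_exp (α * m + (α * R) ^ 2)]

end ExpMoment

/-! ### Subadditive cocycles -/

section RobustExpRate

variable {M X : Type*} [Monoid M] [MeasurableSpace M]

/-- The exponential moments of `ψ` along the convolution powers of `ν` grow at rate at most `b`,
for all small exponents, and this persists when a small measure dominated by `ν` is added
to `ν`. -/
def HasRobustExpRate (ν : Measure M) (ψ : M → X → ℝ) (D : Set X) (b : ℝ) : Prop :=
  ∃ α₀ : ℝ, 0 < α₀ ∧ ∀ α, 0 < α → α ≤ α₀ → ∃ θ : ℝ, 0 < θ ∧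
    ∀ τ : Measure M, IsFiniteMeasure τ → τ ≪ ν → τ.real Set.univ ≤ θ →
      ∃ C : ℝ, 0 ≤ C ∧ ∀ n : ℕ, ∀ x ∈ D, expMoment α (ψ · x) (convPow (ν + τ) n) ≤
        ENNReal.ofReal (C * Real.exp (n * (α * b)))

namespace HasRobustExpRate

variable {ν : Measure M} {ψ φ : M → X → ℝ} {D : Set X} {a b : ℝ}

lemma const_mul {c : ℝ} (hc : 0 < c) (h : HasRobustExpRate ν ψ D b) :
    HasRobustExpRate ν (fun g x => c * ψ g x) D (c * b) := by
  obtain ⟨α₀, hα₀, h⟩ := h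
  refine ⟨α₀ / c, by positivity, fun α hα hαα₀ => ?_⟩
  convert h (α * c) (by positivity) ((le_div_iff₀ hc).1 hαα₀) using 13
  · simp only [expMoment, mul_assoc]

lemma exists_expMoment_le (h : HasRobustExpRate ν ψ D b) :
    ∃ α₀ : ℝ, 0 < α₀ ∧ ∀ α, 0 < α → α ≤ α₀ → ∃ C : ℝ, 0 ≤ C ∧ ∀ n : ℕ, ∀ x ∈ D,
      expMoment α (ψ · x) (convPow ν n) ≤ ENNReal.ofReal (C * Real.exp (n * (α * b))) := by
  obtain ⟨α₀, hα₀, h⟩ := h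
  refine ⟨α₀, hα₀, fun α hα hαα₀ => ?_⟩
  obtain ⟨θ, hθ, h⟩ := h α hα hαα₀
  simpa using h 0 inferInstance (.zero _) (by simpa using hθ.le)

lemma add (hψ_meas : ∀ x, Measurable (ψ · x)) (hφ_meas : ∀ x, Measurable (φ · x))
    (hψ : HasRobustExpRate ν ψ D a) (hφ : HasRobustExpRate ν φ D b) :
    HasRobustExpRate ν (fun g x => ψ g x + φ g x) D (a + b) := by
  obtain ⟨α₁, hα₁, hψ⟩ := hψ
  obtain ⟨α₂, hα₂, hφ⟩ := hφ
  refine ⟨min α₁ α₂ / 2, by positivity, fun α hα hαα₀ => ?_⟩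
  have h2α : 2 * α ≤ min α₁ α₂ := by linarith
  obtain ⟨θ₁, hθ₁, hψ⟩ := hψ (2 * α) (by positivity) (h2α.trans (min_le_left _ _))
  obtain ⟨θ₂, hθ₂, hφ⟩ := hφ (2 * α) (by positivity) (h2α.trans (min_le_right _ _))
  refine ⟨min θ₁ θ₂, by positivity, fun τ hτ_fin hτ hτθ => ?_⟩
  obtain ⟨C₁, hC₁, hψ⟩ := hψ τ hτ_fin hτ (hτθ.trans (min_le_left _ _))
  obtain ⟨C₂, hC₂, hφ⟩ := hφ τ hτ_fin hτ (hτθ.trans (min_le_right _ _))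
  refine ⟨√C₁ * √C₂, by positivity, fun n x hx => ?_⟩
  calc expMoment α (fun g => ψ g x + φ g x) (convPow (ν + τ) n)
      ≤ expMoment (2 * α) (ψ · x) (convPow (ν + τ) n) ^ (1 / 2 : ℝ) *
          expMoment (2 * α) (φ · x) (convPow (ν + τ) n) ^ (1 / 2 : ℝ) :=
        expMoment_add_le (hψ_meas x) (hφ_meas x) α _
    _ ≤ ENNReal.ofReal (C₁ * Real.exp (n * (2 * α * a))) ^ (1 / 2 : ℝ) *
          ENNReal.ofReal (C₂ * Real.exp (n * (2 * α * b))) ^ (1 / 2 : ℝ) := by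
        gcongr
        exacts [hψ n x hx, hφ n x hx]
    _ = ENNReal.ofReal (√C₁ * √C₂ * Real.exp (n * (α * (a + b)))) := by
        rw [ENNReal.ofReal_rpow_of_nonneg (by positivity) (by norm_num),
          ENNReal.ofReal_rpow_of_nonneg (by positivity) (by norm_num),
          ← ENNReal.ofReal_mul (by positivity), ← Real.sqrt_eq_rpow, ← Real.sqrt_eq_rpow,
          Real.sqrt_mul hC₁, Real.sqrt_mul hC₂, ← Real.exp_half, ← Real.exp_half,
          mul_mul_mul_comm, ← Real.exp_add]
        ring_nf

variable [MeasurableMul₂ M]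

lemma of_ae_le {Y : Type*} {φ : M → Y → ℝ} {E : Set Y} [IsFiniteMeasure ν]
    (h : HasRobustExpRate ν φ E b)
    (hle : ∀ x ∈ D, ∃ y ∈ E, ∀ n, ∀ᵐ g ∂convPow ν n, ψ g x ≤ φ g y) :
    HasRobustExpRate ν ψ D b := by
  obtain ⟨α₀, hα₀, h⟩ := h
  refine ⟨α₀, hα₀, fun α hα hαα₀ => ?_⟩
  obtain ⟨θ, hθ, h⟩ := h α hα hαα₀
  refine ⟨θ, hθ, fun τ hτ_fin hτ hτθ => ?_⟩
  obtain ⟨C, hC, h⟩ := h τ hτ_fin hτ hτθ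
  refine ⟨C, hC, fun n x hx => ?_⟩
  obtain ⟨y, hy, hxy⟩ := hle x hx
  have hac := absolutelyContinuous_convPow (absolutelyContinuous_add_right_self hτ) n
  exact (expMoment_mono_ae hα.le (hac.ae_le (hxy n))).trans (h n y hy)

lemma of_map {N : Type*} [Monoid N] [MeasurableSpace N] [MeasurableMul₂ N] {ν : Measure N}
    [IsFiniteMeasure ν] {r : N → M} (hr : Measurable r) {S : Submonoid N}
    (hS : MeasurableSet (S : Set N)) (hr_one : r 1 = 1)
    (hr_mul : ∀ g ∈ S, ∀ h ∈ S, r (g * h) = r g * r h) (hν : ∀ᵐ g ∂ν, g ∈ S)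
    (hψ_meas : ∀ x, Measurable (ψ · x)) (h : HasRobustExpRate (ν.map r) ψ D b) :
    HasRobustExpRate ν (fun g => ψ (r g)) D b := by
  obtain ⟨α₀, hα₀, h⟩ := h
  refine ⟨α₀, hα₀, fun α hα hαα₀ => ?_⟩
  obtain ⟨θ, hθ, h⟩ := h α hα hαα₀
  refine ⟨θ, hθ, fun τ _ hτ hτθ => ?_⟩
  obtain ⟨C, hC, h⟩ := h (τ.map r) inferInstance (hτ.map hr)
    (by rwa [map_measureReal_apply hr .univ])
  refine ⟨C, hC, fun n x hx => ?_⟩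
  have hντ := (absolutelyContinuous_add_right_self hτ).ae_le hν
  have hn := h n x hx
  rwa [← Measure.map_add _ _ hr, ← map_convPow hr hS hr_one hr_mul hντ,
    expMoment_map hr (hψ_meas x)] at hn

end HasRobustExpRate

end RobustExpRate

section Subcocycle

variable {M X : Type*} [Monoid M] [MeasurableSpace M] [SMul M X]

/-- `ψ` is a subadditive cocycle over the action of `M` on the invariant set `D ⊆ X`, and it grows
at most linearly, with slope `B`, along the random walk driven by `ν`. Subadditivity and
invariance are only required on a measurable submonoid carrying `ν`, so that they may fail at
singular matrices. -/
structure IsBoundedSubcocycle (ν : Measure M) (ψ : M → X → ℝ) (D : Set X) (B : ℝ) : Prop where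
  measurable : ∀ x, Measurable (ψ · x)
  exists_submonoid : ∃ S : Submonoid M, MeasurableSet (S : Set M) ∧ (∀ᵐ g ∂ν, g ∈ S) ∧
    (∀ h ∈ S, ∀ x ∈ D, h • x ∈ D) ∧ ∀ g ∈ S, ∀ h ∈ S, ∀ x ∈ D, ψ (g * h) x ≤ ψ g (h • x) + ψ h x
  ae_abs_le : ∀ n : ℕ, ∀ᵐ g ∂convPow ν n, ∀ x ∈ D, |ψ g x| ≤ n * B
  nonneg : 0 ≤ B

namespace IsBoundedSubcocycle

variable {ν κ : Measure M} {ψ : M → X → ℝ} {D : Set X} {B α : ℝ}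

lemma expMoment_le (hψ : IsBoundedSubcocycle ν ψ D B) (hα : 0 ≤ α) {m : ℕ}
    (hκ : κ ≪ convPow ν m) {x : X} (hx : x ∈ D) :
    expMoment α (ψ · x) κ ≤ ENNReal.ofReal (Real.exp (α * (m * B))) * κ Set.univ :=
  expMoment_le_of_ae_le hα <| by
    filter_upwards [hκ.ae_le (hψ.ae_abs_le m)] with g hg using (le_abs_self _).trans (hg x hx)

lemma integrable [IsFiniteMeasure ν] (hψ : IsBoundedSubcocycle ν ψ D B) (n : ℕ) {x : X}
    (hx : x ∈ D) : Integrable (ψ · x) (convPow ν n) :=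
  .of_bound (hψ.measurable x).aestronglyMeasurable (n * B)
    ((hψ.ae_abs_le n).mono fun _ hg => hg x hx)

variable [MeasurableMul₂ M]

lemma expMoment_convPow_add_le (hψ : IsBoundedSubcocycle ν ψ D B) (hα : 0 < α)
    [IsFiniteMeasure κ] (hκ : κ ≪ ν) {m n : ℕ} {k l : ℝ≥0∞}
    (hm : ∀ x ∈ D, expMoment α (ψ · x) (convPow κ m) ≤ k)
    (hn : ∀ x ∈ D, expMoment α (ψ · x) (convPow κ n) ≤ l) {x : X} (hx : x ∈ D) :
    expMoment α (ψ · x) (convPow κ (m + n)) ≤ k * l := by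
  obtain ⟨S, hS, hνS, hSD, hsub⟩ := hψ.exists_submonoid
  have hκS := ae_convPow_mem_submonoid hS (hκ.ae_le hνS)
  have hmeas := fun y => measurable_ofReal_exp_mul (hψ.measurable y) α
  have fiber_le : ∀ h ∈ S, ∫⁻ g, ENNReal.ofReal (Real.exp (α * ψ (g * h) x)) ∂convPow κ m ≤
      k * ENNReal.ofReal (Real.exp (α * ψ h x)) := fun h hh => calc
    _ ≤ ∫⁻ g, ENNReal.ofReal (Real.exp (α * ψ g (h • x))) *
          ENNReal.ofReal (Real.exp (α * ψ h x)) ∂convPow κ m := by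
        apply lintegral_mono_ae
        filter_upwards [hκS m] with g hg
        rw [← ENNReal.ofReal_mul (Real.exp_pos _).le, ← Real.exp_add, ← mul_add]
        gcongr
        exact hsub g hg h hh x hx
    _ = expMoment α (ψ · (h • x)) (convPow κ m) * ENNReal.ofReal (Real.exp (α * ψ h x)) :=
        lintegral_mul_const _ (hmeas _)
    _ ≤ k * ENNReal.ofReal (Real.exp (α * ψ h x)) := by gcongr; exact hm _ (hSD h hh x hx)
  calc expMoment α (ψ · x) (convPow κ (m + n))
      = ∫⁻ h, ∫⁻ g, ENNReal.ofReal (Real.exp (α * ψ (g * h) x)) ∂convPow κ m ∂convPow κ n := by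
        rw [expMoment, convPow_add, Measure.mconv, lintegral_map (hmeas x) (by fun_prop)]
        exact lintegral_prod_symm' _ ((hmeas x).comp measurable_mul)
    _ ≤ ∫⁻ h, k * ENNReal.ofReal (Real.exp (α * ψ h x)) ∂convPow κ n :=
        lintegral_mono_ae ((hκS n).mono fiber_le)
    _ = k * expMoment α (ψ · x) (convPow κ n) := lintegral_const_mul _ (hmeas x)
    _ ≤ k * l := by gcongr; exact hn x hx

lemma expMoment_convPow_mul_le (hψ : IsBoundedSubcocycle ν ψ D B) (hα : 0 < α)
    [IsFiniteMeasure κ] (hκ : κ ≪ ν) {m : ℕ} {σ : ℝ}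
    (hm : ∀ x ∈ D, expMoment α (ψ · x) (convPow κ m) ≤ ENNReal.ofReal (Real.exp (m * σ)))
    {r : ℕ} {R : ℝ} (hr : ∀ x ∈ D, expMoment α (ψ · x) (convPow κ r) ≤ ENNReal.ofReal R)
    (q : ℕ) : ∀ x ∈ D, expMoment α (ψ · x) (convPow κ (m * q + r)) ≤
      ENNReal.ofReal (Real.exp (m * q * σ) * R) := by
  induction q with
  | zero => simpa using hr
  | succ q ih =>
    intro x hx
    convert hψ.expMoment_convPow_add_le hα hκ hm ih hx using 1
    · ring_nf
    · rw [← ENNReal.ofReal_mul (Real.exp_pos _).le, ← mul_assoc, ← Real.exp_add]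
      push_cast
      ring_nf

lemma exists_expMoment_convPow_le_of_lt (hψ : IsBoundedSubcocycle ν ψ D B) (hα : 0 ≤ α)
    [IsFiniteMeasure ν] [IsFiniteMeasure κ] (hκ : κ ≪ ν) (m : ℕ) :
    ∃ R : ℝ, 0 ≤ R ∧ ∀ r < m, ∀ x ∈ D,
      expMoment α (ψ · x) (convPow κ r) ≤ ENNReal.ofReal R := by
  have bound : ∀ r, ∃ R : ℝ≥0, ∀ x ∈ D, expMoment α (ψ · x) (convPow κ r) ≤ R := fun r =>
    ⟨(ENNReal.ofReal (Real.exp (α * (r * B))) * convPow κ r Set.univ).toNNReal, fun x hx => by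
      rw [ENNReal.coe_toNNReal (by finiteness)]
      exact hψ.expMoment_le hα (absolutelyContinuous_convPow hκ r) hx⟩
  choose R hR using bound
  refine ⟨∑ r ∈ Finset.range m, R r, by positivity, fun r hrm x hx => (hR r x hx).trans ?_⟩
  rw [← NNReal.coe_sum, ENNReal.ofReal_coe_nnreal, ENNReal.coe_le_coe]
  exact Finset.single_le_sum (f := R) (fun _ _ => zero_le) (Finset.mem_range.2 hrm)

lemma exists_expMoment_convPow_le (hψ : IsBoundedSubcocycle ν ψ D B) (hα : 0 < α)
    [IsFiniteMeasure ν] [IsFiniteMeasure κ] (hκ : κ ≪ ν) {m : ℕ} (hm : m ≠ 0) {σ : ℝ}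
    (h : ∀ x ∈ D, expMoment α (ψ · x) (convPow κ m) ≤ ENNReal.ofReal (Real.exp (m * σ))) :
    ∃ C : ℝ, 0 ≤ C ∧ ∀ n : ℕ, ∀ x ∈ D,
      expMoment α (ψ · x) (convPow κ n) ≤ ENNReal.ofReal (C * Real.exp (n * σ)) := by
  obtain ⟨R, hR, hr⟩ := hψ.exists_expMoment_convPow_le_of_lt hα.le hκ m
  refine ⟨R * Real.exp (m * |σ|), by positivity, fun n x hx => ?_⟩
  have hmod : n % m < m := Nat.mod_lt _ (by lia)
  have hblocks := hψ.expMoment_convPow_mul_le hα hκ h (hr _ hmod) (n / m) x hx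
  rw [Nat.div_add_mod] at hblocks
  refine hblocks.trans (ENNReal.ofReal_le_ofReal ?_)
  rw [mul_comm, mul_assoc, mul_assoc, ← Real.exp_add]
  gcongr R * Real.exp ?_
  have hn : (n : ℝ) = m * (n / m : ℕ) + (n % m : ℕ) := by exact_mod_cast (Nat.div_add_mod n m).symm
  have h_rem : -((n % m : ℕ) * σ) ≤ m * |σ| := by
    calc -((n % m : ℕ) * σ) ≤ |((n % m : ℕ) : ℝ) * σ| := neg_le_abs _
      _ = ((n % m : ℕ) : ℝ) * |σ| := by rw [abs_mul, Nat.abs_cast]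
      _ ≤ m * |σ| := by gcongr
  rw [hn, add_mul]
  linarith

lemma expMoment_convPow_add_measure_le [IsProbabilityMeasure ν]
    (hψ : IsBoundedSubcocycle ν ψ D B) (hα : 0 ≤ α) {τ : Measure M} [IsFiniteMeasure τ]
    (hτ : τ ≪ ν) {θ : ℝ} (hτθ : τ.real Set.univ ≤ θ) (m : ℕ) {x : X} (hx : x ∈ D) :
    expMoment α (ψ · x) (convPow (ν + τ) m) ≤ expMoment α (ψ · x) (convPow ν m) +
      ENNReal.ofReal (Real.exp (α * (m * B)) * ((1 + θ) ^ m - 1)) := by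
  have hθ : 0 ≤ θ := measureReal_nonneg.trans hτθ
  obtain ⟨ρ, _, hρ, hρ_univ⟩ := exists_convPow_add_eq ν τ m
  have hρ_ac : ρ ≪ convPow ν m :=
    (hρ ▸ Measure.le_add_left le_rfl : ρ ≤ convPow (ν + τ) m).absolutelyContinuous.trans
      (absolutelyContinuous_convPow (absolutelyContinuous_add_right_self hτ) m)
  have hρ_le : ρ Set.univ ≤ ENNReal.ofReal ((1 + θ) ^ m - 1) := by
    rw [hρ_univ, ENNReal.ofReal_sub _ zero_le_one, ENNReal.ofReal_one,
      ENNReal.ofReal_pow (by positivity), ENNReal.ofReal_add zero_le_one hθ, ENNReal.ofReal_one]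
    gcongr
    rw [← ofReal_measureReal]
    exact ENNReal.ofReal_le_ofReal hτθ
  rw [hρ, expMoment, lintegral_add_measure, ENNReal.ofReal_mul (Real.exp_pos _).le]
  gcongr
  · exact le_rfl
  · exact (hψ.expMoment_le hα hρ_ac hx).trans (by gcongr)

/-- For small `α`, expanding `exp (α ψ)` to second order turns the bound on the mean of `ψ` at
time `m` into a bound on its exponential moment at time `m`. The latter is an open condition on
the measure, and submultiplicativity propagates it to all times. -/
theorem hasRobustExpRate [IsProbabilityMeasure ν] (hψ : IsBoundedSubcocycle ν ψ D B) {m : ℕ}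
    (hm : m ≠ 0) {b b' : ℝ} (hb : b < b') (h : ∀ x ∈ D, ∫ g, ψ g x ∂convPow ν m ≤ m * b) :
    HasRobustExpRate ν ψ D b' := by
  have hB := hψ.nonneg
  refine ⟨min (1 / (m * B + 1)) ((b' - b) / (2 * (m * B ^ 2 + 1))),
    lt_min (by positivity) (div_pos (by linarith) (by positivity)), fun α hα hα₀ => ?_⟩
  have hα_lin : α * (m * B) ≤ 1 := by
    have := hα₀.trans (min_le_left _ _)
    rw [le_div_iff₀ (by positivity)] at this
    linarith
  have hα_quad : α * (m * B ^ 2) ≤ (b' - b) / 2 := by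
    have := hα₀.trans (min_le_right _ _)
    rw [le_div_iff₀ (by positivity)] at this
    linarith
  have moment_le : ∀ x ∈ D, expMoment α (ψ · x) (convPow ν m) ≤
      ENNReal.ofReal (Real.exp (m * (α * ((b + b') / 2)))) := fun x hx => by
    refine (expMoment_le_exp_of_integral_le (hψ.measurable x).aestronglyMeasurable
      ((hψ.ae_abs_le m).mono fun _ hg => hg x hx) hα.le hα_lin (h x hx)).trans ?_
    gcongr
    calc α * (m * b) + (α * (m * B)) ^ 2 = α * m * b + α * m * (α * (m * B ^ 2)) := by ring
      _ ≤ α * m * b + α * m * ((b' - b) / 2) := by gcongr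
      _ = m * (α * ((b + b') / 2)) := by ring
  obtain ⟨θ, hθ, hθ_small⟩ : ∃ θ : ℝ, 0 < θ ∧ Real.exp (α * (m * B)) * ((1 + θ) ^ m - 1) <
      Real.exp (m * (α * b')) - Real.exp (m * (α * ((b + b') / 2))) := by
    have hgap : Real.exp (m * (α * ((b + b') / 2))) < Real.exp (m * (α * b')) := by
      gcongr; linarith
    have hcont : Continuous fun θ : ℝ => Real.exp (α * (m * B)) * ((1 + θ) ^ m - 1) := by fun_prop
    have hev := (hcont.tendsto 0).eventually_lt_const
      (by rw [add_zero, one_pow, sub_self, mul_zero]; exact sub_pos.2 hgap)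
    exact ((hev.filter_mono nhdsWithin_le_nhds).and
      (self_mem_nhdsWithin (s := Set.Ioi 0))).exists.imp fun _ h => ⟨h.2, h.1⟩
  refine ⟨θ, hθ, fun τ _ hτ hτθ =>
    hψ.exists_expMoment_convPow_le hα (absolutelyContinuous_add_right_self hτ) hm fun x hx => ?_⟩
  refine (hψ.expMoment_convPow_add_measure_le hα.le hτ hτθ m hx).trans ?_
  have hpow : 1 ≤ (1 + θ) ^ m := one_le_pow₀ (by linarith)
  refine (add_le_add_left (moment_le x hx) _).trans ?_
  rw [← ENNReal.ofReal_add (Real.exp_pos _).le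
    (mul_nonneg (Real.exp_pos _).le (sub_nonneg.2 hpow))]
  exact ENNReal.ofReal_le_ofReal (by linarith)

end IsBoundedSubcocycle

end Subcocycle

/-! ### Bilipschitz endomorphisms -/

lemma abs_log_le_log {x C : ℝ} (hx : 0 < x) (hxC : x ≤ C) (hCx : 1 ≤ C * x) :
    |Real.log x| ≤ Real.log C := by
  refine abs_le.2 ⟨?_, Real.log_le_log hx hxC⟩
  have := Real.log_nonneg hCx
  rw [Real.log_mul (hx.trans_le hxC).ne' hx.ne'] at this
  linarith

section Bilipschitz

variable {U : Type*} [NormedAddCommGroup U] [NormedSpace ℝ U] {C : ℝ} {g h : U →L[ℝ] U}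

/-- `C` bounds the distortion of norms by `g` in both directions. -/
structure IsBilipschitz (C : ℝ) (g : U →L[ℝ] U) : Prop where
  one_le : 1 ≤ C
  norm_le : ‖g‖ ≤ C
  le_mul_norm : ∀ v, ‖v‖ ≤ C * ‖g v‖

namespace IsBilipschitz

lemma one : IsBilipschitz 1 (1 : U →L[ℝ] U) :=
  ⟨le_rfl, ContinuousLinearMap.norm_id_le, fun v => by simp⟩

lemma mono {D : ℝ} (hg : IsBilipschitz C g) (hCD : C ≤ D) : IsBilipschitz D g :=
  ⟨hg.one_le.trans hCD, hg.norm_le.trans hCD, fun v => (hg.le_mul_norm v).trans (by gcongr)⟩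

lemma mul {D : ℝ} (hg : IsBilipschitz C g) (hh : IsBilipschitz D h) :
    IsBilipschitz (C * D) (g * h) where
  one_le := one_le_mul_of_one_le_of_one_le hg.one_le hh.one_le
  norm_le := (norm_mul_le _ _).trans
    (mul_le_mul hg.norm_le hh.norm_le (norm_nonneg _) (zero_le_one.trans hg.one_le))
  le_mul_norm v := calc
    ‖v‖ ≤ D * ‖h v‖ := hh.le_mul_norm v
    _ ≤ D * (C * ‖g (h v)‖) :=
      mul_le_mul_of_nonneg_left (hg.le_mul_norm _) (zero_le_one.trans hh.one_le)
    _ = C * D * ‖(g * h) v‖ := by rw [← mul_assoc, mul_comm D]; rfl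

lemma norm_pos [Nontrivial U] (hg : IsBilipschitz C g) : 0 < ‖g‖ := by
  obtain ⟨v, hv⟩ := exists_ne (0 : U)
  refine norm_pos_iff.2 fun h0 => hv (norm_le_zero_iff.1 ?_)
  simpa [h0] using hg.le_mul_norm v

lemma apply_ne_zero (hg : IsBilipschitz C g) {v : U} (hv : v ≠ 0) : g v ≠ 0 := fun h0 =>
  hv (norm_le_zero_iff.1 (by simpa [h0] using hg.le_mul_norm v))

lemma norm_apply_le (hg : IsBilipschitz C g) (v : U) : ‖g v‖ ≤ C * ‖v‖ :=
  g.le_of_opNorm_le hg.norm_le v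

lemma abs_log_norm_le [Nontrivial U] (hg : IsBilipschitz C g) :
    |Real.log ‖g‖| ≤ Real.log C := by
  refine abs_log_le_log hg.norm_pos hg.norm_le ?_
  obtain ⟨v, hv⟩ := exists_ne (0 : U)
  refine le_of_mul_le_mul_right ?_ (norm_pos_iff.2 hv)
  calc 1 * ‖v‖ ≤ C * ‖g v‖ := by rw [one_mul]; exact hg.le_mul_norm v
    _ ≤ C * (‖g‖ * ‖v‖) :=
      mul_le_mul_of_nonneg_left (g.le_opNorm v) (zero_le_one.trans hg.one_le)
    _ = C * ‖g‖ * ‖v‖ := (mul_assoc _ _ _).symm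

lemma abs_log_norm_apply_div_le (hg : IsBilipschitz C g) {v : U} (hv : v ≠ 0) :
    |Real.log (‖g v‖ / ‖v‖)| ≤ Real.log C := by
  have hv' : 0 < ‖v‖ := norm_pos_iff.2 hv
  have hgv : 0 < ‖g v‖ := norm_pos_iff.2 (hg.apply_ne_zero hv)
  refine abs_log_le_log (by positivity) ((div_le_iff₀ hv').2 (hg.norm_apply_le v)) ?_
  rw [← mul_div_assoc, one_le_div hv']
  exact hg.le_mul_norm v

end IsBilipschitz

lemma isClosed_setOf_isBilipschitz (C : ℝ) :
    IsClosed {g : U →L[ℝ] U | IsBilipschitz C g} := by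
  have eq_inter : {g : U →L[ℝ] U | IsBilipschitz C g} =
      {_g | 1 ≤ C} ∩ {g | ‖g‖ ≤ C} ∩ ⋂ v, {g | ‖v‖ ≤ C * ‖g v‖} := by
    ext g
    simpa [and_assoc] using
      ⟨fun h => ⟨h.one_le, h.norm_le, h.le_mul_norm⟩, fun h => ⟨h.1, h.2.1, h.2.2⟩⟩
  rw [eq_inter]
  exact (isClosed_const.inter (isClosed_le (by fun_prop) (by fun_prop))).inter
    (isClosed_iInter fun v => isClosed_le (by fun_prop) (by fun_prop))

variable (U) in
/-- The monoid of bilipschitz endomorphisms, on which norms and stretches are positive and hence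
logarithms are genuine cocycles. -/
def bilipschitzSubmonoid : Submonoid (U →L[ℝ] U) where
  carrier := {g | ∃ C, IsBilipschitz C g}
  one_mem' := ⟨1, .one⟩
  mul_mem' := fun ⟨_, hg⟩ ⟨_, hh⟩ => ⟨_, hg.mul hh⟩

lemma measurableSet_bilipschitzSubmonoid :
    MeasurableSet (bilipschitzSubmonoid U : Set (U →L[ℝ] U)) := by
  have eq_iUnion : (bilipschitzSubmonoid U : Set (U →L[ℝ] U)) =
      ⋃ n : ℕ, {g | IsBilipschitz (n : ℝ) g} := by
    ext g
    rw [Set.mem_iUnion]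
    refine ⟨fun ⟨C, hC⟩ => ?_, fun ⟨n, hn⟩ => ⟨n, hn⟩⟩
    obtain ⟨n, hn⟩ := exists_nat_ge C
    exact ⟨n, hC.mono hn⟩
  rw [eq_iUnion]
  exact .iUnion fun n => (isClosed_setOf_isBilipschitz _).measurableSet

variable {ν : Measure (U →L[ℝ] U)}

lemma one_le_of_ae_isBilipschitz [NeZero ν] (hν : ∀ᵐ g ∂ν, IsBilipschitz C g) : 1 ≤ C :=
  hν.exists.choose_spec.one_le

/-- The logarithm of the factor by which `g` contracts the vector `v`. -/
def logContraction (g : U →L[ℝ] U) (v : U) : ℝ := -Real.log (‖g v‖ / ‖v‖)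

lemma measurable_logContraction (v : U) : Measurable (logContraction · v) := by
  have : Measurable fun g : U →L[ℝ] U => ‖g v‖ :=
    (by fun_prop : Continuous fun g : U →L[ℝ] U => ‖g v‖).measurable
  unfold logContraction
  fun_prop

lemma logContraction_mul (hg : g ∈ bilipschitzSubmonoid U) (hh : h ∈ bilipschitzSubmonoid U)
    {v : U} (hv : v ≠ 0) :
    logContraction (g * h) v = logContraction g (h v) + logContraction h v := by
  obtain ⟨C, hg⟩ := hg
  obtain ⟨D, hh⟩ := hh
  have hhv := hh.apply_ne_zero hv
  have hghv := hg.apply_ne_zero hhv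
  rw [← norm_ne_zero_iff] at hv hhv hghv
  change -Real.log (‖g (h v)‖ / ‖v‖) = _
  rw [logContraction, logContraction, ← neg_add, ← Real.log_mul (by positivity) (by positivity),
    div_mul_div_cancel₀ hhv]

variable [FiniteDimensional ℝ U]

instance : SecondCountableTopology (U →L[ℝ] U) :=
  haveI : ProperSpace (U →L[ℝ] U) := FiniteDimensional.proper ℝ _
  inferInstance

instance : MeasurableMul₂ (U →L[ℝ] U) := ContinuousMul.measurableMul₂

lemma ae_convPow_isBilipschitz (hν : ∀ᵐ g ∂ν, IsBilipschitz C g) (n : ℕ) :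
    ∀ᵐ g ∂convPow ν n, IsBilipschitz (C ^ n) g :=
  ae_convPow_mem (P := fun n => {g | IsBilipschitz (C ^ n) g}) (A := {g | IsBilipschitz C g})
    (fun n => (isClosed_setOf_isBilipschitz _).measurableSet) (by simpa using IsBilipschitz.one)
    (fun n _ ha _ hb => by simpa [pow_succ] using IsBilipschitz.mul ha hb) hν n

lemma isBoundedSubcocycle_logContraction [IsProbabilityMeasure ν]
    (hν : ∀ᵐ g ∂ν, IsBilipschitz C g) :
    IsBoundedSubcocycle ν (logContraction (U := U)) {v | v ≠ 0} (Real.log C) where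
  measurable := measurable_logContraction
  exists_submonoid := ⟨bilipschitzSubmonoid U, measurableSet_bilipschitzSubmonoid,
    hν.mono fun _ hg => ⟨C, hg⟩, fun _ ⟨_, hh⟩ _ hv => hh.apply_ne_zero hv,
    fun _ hg _ hh _ hv => (logContraction_mul hg hh hv).le⟩
  ae_abs_le n := by
    filter_upwards [ae_convPow_isBilipschitz hν n] with g hg v hv
    rw [logContraction, abs_neg, ← Real.log_pow]
    exact hg.abs_log_norm_apply_div_le hv
  nonneg := Real.log_nonneg (one_le_of_ae_isBilipschitz hν)

lemma isBoundedSubcocycle_log [IsProbabilityMeasure ν] {F : (U →L[ℝ] U) → ℝ}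
    (hF : Measurable F) (hF_pos : ∀ g ∈ bilipschitzSubmonoid U, 0 < F g)
    (hF_mul : ∀ g h, F (g * h) ≤ F g * F h) {k : ℝ} (hk : 0 ≤ k)
    (hF_log : ∀ D g, IsBilipschitz D g → |Real.log (F g)| ≤ k * Real.log D)
    (hν : ∀ᵐ g ∂ν, IsBilipschitz C g) :
    IsBoundedSubcocycle ν (fun g (_ : Unit) => Real.log (F g)) Set.univ (k * Real.log C) where
  measurable _ := hF.log
  exists_submonoid := ⟨bilipschitzSubmonoid U, measurableSet_bilipschitzSubmonoid,
    hν.mono fun _ hg => ⟨C, hg⟩, fun _ _ _ _ => trivial, fun g hg h hh _ _ => by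
      rw [← Real.log_mul (hF_pos g hg).ne' (hF_pos h hh).ne']
      exact Real.log_le_log (hF_pos _ (mul_mem hg hh)) (hF_mul g h)⟩
  ae_abs_le n := by
    filter_upwards [ae_convPow_isBilipschitz hν n] with g hg _ _
    rw [mul_left_comm, ← Real.log_pow]
    exact hF_log _ g hg
  nonneg := mul_nonneg hk (Real.log_nonneg (one_le_of_ae_isBilipschitz hν))

lemma isBoundedSubcocycle_log_norm [Nontrivial U] [IsProbabilityMeasure ν]
    (hν : ∀ᵐ g ∂ν, IsBilipschitz C g) :
    IsBoundedSubcocycle ν (fun g (_ : Unit) => Real.log ‖g‖) Set.univ (Real.log C) := by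
  simpa using isBoundedSubcocycle_log (k := 1) measurable_norm (fun g ⟨_, hg⟩ => hg.norm_pos)
    norm_mul_le zero_le_one (fun D g hg => by simpa using hg.abs_log_norm_le) hν

end Bilipschitz

/-! ### Irreducible random walks -/

section Irreducible

variable {U : Type*} [NormedAddCommGroup U] [NormedSpace ℝ U]

/-- No proper nonzero subspace is preserved by almost every `g`. -/
def ActsIrreducibly (ν : Measure (U →L[ℝ] U)) : Prop :=
  ∀ Y : Submodule ℝ U, (∀ᵐ g ∂ν, ∀ y ∈ Y, g y ∈ Y) → Y = ⊥ ∨ Y = ⊤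

/-- The endomorphisms that almost surely kill the first `n` positions of the random walk started
at `v`. -/
def orbitAnnihilator (ν : Measure (U →L[ℝ] U)) (v : U) (n : ℕ) : Submodule ℝ (U →L[ℝ] U) where
  carrier := {g | ∀ j < n, ∀ᵐ h ∂convPow ν j, g (h v) = 0}
  zero_mem' _ _ := by simp
  add_mem' hg hg' j hj := by
    filter_upwards [hg j hj, hg' j hj] with h hh hh'
    simp [hh, hh']
  smul_mem' c g hg j hj := by
    filter_upwards [hg j hj] with h hh
    simp [hh]

lemma orbitAnnihilator_anti (ν : Measure (U →L[ℝ] U)) (v : U) :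
    Antitone (orbitAnnihilator ν v) :=
  fun _ _ hmn _ hg j hj => hg j (hj.trans_le hmn)

lemma integrable_stretch {κ : Measure (U →L[ℝ] U)} [IsFiniteMeasure κ] (g : U →L[ℝ] U) (v : U) :
    Integrable (fun h => ‖g (h v)‖ / ‖h v‖) κ := by
  have h_num : Measurable fun h : U →L[ℝ] U => ‖g (h v)‖ :=
    (by fun_prop : Continuous fun h : U →L[ℝ] U => ‖g (h v)‖).measurable
  have h_den : Measurable fun h : U →L[ℝ] U => ‖h v‖ :=
    (by fun_prop : Continuous fun h : U →L[ℝ] U => ‖h v‖).measurable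
  refine .of_bound (h_num.div h_den).aestronglyMeasurable ‖g‖ (.of_forall fun h => ?_)
  rw [Real.norm_of_nonneg (by positivity)]
  exact g.ratio_le_opNorm _

variable [FiniteDimensional ℝ U] {ν : Measure (U →L[ℝ] U)} {C : ℝ} {v : U} {n : ℕ}

lemma ae_mul_mem_orbitAnnihilator [IsFiniteMeasure ν] {f : U →L[ℝ] U}
    (hf : f ∈ orbitAnnihilator ν v (n + 1)) : ∀ᵐ g ∂ν, f * g ∈ orbitAnnihilator ν v n := by
  refine ae_all_iff.2 fun j => ?_
  by_cases hj : j < n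
  · have hfj := hf (j + 1) (by lia)
    rw [convPow_succ', Measure.mconv] at hfj
    filter_upwards [Measure.ae_ae_of_ae_prod (ae_of_ae_map (by fun_prop) hfj)] with g hg _
    exact hg
  · exact .of_forall fun _ h => absurd h hj

lemma ae_forall_mul_mem_orbitAnnihilator [IsFiniteMeasure ν] :
    ∀ᵐ g ∂ν, ∀ f ∈ orbitAnnihilator ν v (n + 1), f * g ∈ orbitAnnihilator ν v n := by
  obtain ⟨s, hs⟩ := IsNoetherian.noetherian (orbitAnnihilator ν v (n + 1))
  have on_generators : ∀ᵐ g ∂ν, ∀ f ∈ s, f * g ∈ orbitAnnihilator ν v n :=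
    (Finset.eventually_all s).2 fun f hf =>
      ae_mul_mem_orbitAnnihilator (hs ▸ Submodule.subset_span hf)
  filter_upwards [on_generators] with g hg
  change orbitAnnihilator ν v (n + 1) ≤
    (orbitAnnihilator ν v n).comap (LinearMap.mulRight ℝ g)
  rw [← hs, Submodule.span_le]
  exact hg

lemma orbitAnnihilator_eq_bot_of_succ_eq [IsFiniteMeasure ν] (hirr : ActsIrreducibly ν)
    (hv : v ≠ 0) (h : orbitAnnihilator ν v (n + 1) = orbitAnnihilator ν v n) :
    orbitAnnihilator ν v (n + 1) = ⊥ := by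
  let Y : Submodule ℝ U := ⨅ f ∈ orbitAnnihilator ν v (n + 1), LinearMap.ker f.toLinearMap
  have mem_Y : ∀ {y}, y ∈ Y ↔ ∀ f ∈ orbitAnnihilator ν v (n + 1), f y = 0 := by
    simp [Y, Submodule.mem_iInf]
  have hvY : v ∈ Y := mem_Y.2 fun f hf => by
    have h0 := hf 0 n.succ_pos
    rwa [convPow_zero, ae_dirac_iff] at h0
    exact (isClosed_eq (by fun_prop) continuous_const).measurableSet
  have hY : Y = ⊤ := by
    refine (hirr Y ?_).resolve_left fun h0 => hv (by simpa [h0] using hvY)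
    filter_upwards [ae_forall_mul_mem_orbitAnnihilator (ν := ν) (v := v) (n := n)] with g hg y hy
    exact mem_Y.2 fun f hf => mem_Y.1 hy (f * g) (h ▸ hg f hf)
  refine (Submodule.eq_bot_iff _).2 fun f hf => ContinuousLinearMap.ext fun y => ?_
  exact mem_Y.1 (hY ▸ Submodule.mem_top : y ∈ Y) f hf

lemma orbitAnnihilator_finrank_eq_bot [IsFiniteMeasure ν] (hirr : ActsIrreducibly ν)
    (hv : v ≠ 0) : orbitAnnihilator ν v (Module.finrank ℝ (U →L[ℝ] U)) = ⊥ := by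
  have dim_le : ∀ n, orbitAnnihilator ν v n ≠ ⊥ →
      Module.finrank ℝ (orbitAnnihilator ν v n) + n ≤ Module.finrank ℝ (U →L[ℝ] U) := by
    intro n
    induction n with
    | zero => exact fun _ => Submodule.finrank_le _
    | succ n ih =>
      intro hn
      have hle := orbitAnnihilator_anti ν v n.le_succ
      have hlt := Submodule.finrank_lt_finrank_of_lt
        (hle.lt_of_ne fun h => hn (orbitAnnihilator_eq_bot_of_succ_eq hirr hv h))
      have := ih (ne_bot_of_le_ne_bot hn hle)
      lia
  by_contra h
  have := dim_le _ h
  exact h (Submodule.finrank_eq_zero.1 (by lia))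

lemma continuousOn_integral_stretch [IsFiniteMeasure ν] (hν : ∀ᵐ g ∂ν, IsBilipschitz C g)
    (n : ℕ) :
    ContinuousOn (fun p : (U →L[ℝ] U) × U => ∫ h, ‖p.1 (h p.2)‖ / ‖h p.2‖ ∂convPow ν n)
      (Metric.sphere 0 1 ×ˢ Metric.sphere 0 1) := by
  refine continuousOn_of_dominated (bound := fun _ => 1) ?_ ?_ (integrable_const 1) ?_
  · exact fun p _ => (integrable_stretch p.1 p.2).aestronglyMeasurable
  · rintro p ⟨hg, -⟩
    refine .of_forall fun h => ?_
    rw [Real.norm_of_nonneg (by positivity), ← mem_sphere_zero_iff_norm.1 hg]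
    exact p.1.ratio_le_opNorm _
  · filter_upwards [ae_convPow_isBilipschitz hν n] with h hh
    refine ContinuousOn.div (by fun_prop) (by fun_prop) fun p ⟨_, hp⟩ => ?_
    exact norm_ne_zero_iff.2 (hh.apply_ne_zero (ne_zero_of_mem_unit_sphere ⟨p.2, hp⟩))

lemma ActsIrreducibly.sum_integral_stretch_pos [IsFiniteMeasure ν] (hirr : ActsIrreducibly ν)
    (hν : ∀ᵐ g ∂ν, IsBilipschitz C g) {g : U →L[ℝ] U} (hg : g ≠ 0) (hv : v ≠ 0) :
    0 < ∑ j ∈ Finset.range (Module.finrank ℝ (U →L[ℝ] U)),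
      ∫ h, ‖g (h v)‖ / ‖h v‖ ∂convPow ν j := by
  have nonneg : ∀ j, 0 ≤ ∫ h, ‖g (h v)‖ / ‖h v‖ ∂convPow ν j := fun j =>
    integral_nonneg fun h => by positivity
  refine (Finset.sum_nonneg fun j _ => nonneg j).lt_of_ne fun h0 => hg ?_
  rw [← Submodule.mem_bot ℝ, ← orbitAnnihilator_finrank_eq_bot hirr hv]
  intro j hj
  have := (Finset.sum_eq_zero_iff_of_nonneg fun j _ => nonneg j).1 h0.symm j (Finset.mem_range.2 hj)
  rw [integral_eq_zero_iff_of_nonneg (fun h => by positivity) (integrable_stretch g v)] at this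
  filter_upwards [this, ae_convPow_isBilipschitz hν j] with h hgh hh
  exact norm_eq_zero.1 ((div_eq_zero_iff.1 hgh).resolve_right
    (norm_ne_zero_iff.2 (hh.apply_ne_zero hv)))

/-- If an endomorphism contracted all positions of the walk, compactness would yield one that kills
all of them, whence an invariant subspace. -/
lemma ActsIrreducibly.exists_mul_norm_le_sum_integral_stretch [IsFiniteMeasure ν]
    (hirr : ActsIrreducibly ν) (hν : ∀ᵐ g ∂ν, IsBilipschitz C g) :
    ∃ (k : ℕ) (c : ℝ), 0 < c ∧ ∀ (g : U →L[ℝ] U) (v : U), v ≠ 0 →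
      c * ‖g‖ ≤ ∑ j ∈ Finset.range k, ∫ h, ‖g (h v)‖ / ‖h v‖ ∂convPow ν j := by
  have := FiniteDimensional.proper ℝ U
  have := FiniteDimensional.proper ℝ (U →L[ℝ] U)
  let k := Module.finrank ℝ (U →L[ℝ] U)
  let Φ (p : (U →L[ℝ] U) × U) : ℝ :=
    ∑ j ∈ Finset.range k, ∫ h, ‖p.1 (h p.2)‖ / ‖h p.2‖ ∂convPow ν j
  obtain ⟨c, hc, hΦ⟩ := ((isCompact_sphere (0 : U →L[ℝ] U) 1).prod
    (isCompact_sphere (0 : U) 1)).exists_forall_le' (f := Φ) (a := 0)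
    (continuousOn_finsetSum _ fun j _ => continuousOn_integral_stretch hν j)
    fun p ⟨hg, hv⟩ => hirr.sum_integral_stretch_pos hν
      (ne_zero_of_mem_unit_sphere ⟨p.1, hg⟩) (ne_zero_of_mem_unit_sphere ⟨p.2, hv⟩)
  refine ⟨k, c, hc, fun g v hv => ?_⟩
  rcases eq_or_ne g 0 with rfl | hg
  · simp
  have hΦ_unit : Φ (‖g‖⁻¹ • g, ‖v‖⁻¹ • v) = ‖g‖⁻¹ * Φ (g, v) := by
    simp only [Φ, Finset.mul_sum, ← integral_const_mul]
    refine Finset.sum_congr rfl fun j _ => integral_congr_ae (.of_forall fun h => ?_)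
    have : ‖v‖⁻¹ ≠ 0 := inv_ne_zero (norm_ne_zero_iff.2 hv)
    simp only [map_smul, smul_apply, norm_smul, norm_inv, norm_norm]
    rw [mul_div_mul_left _ _ this, mul_div_assoc]
  have := hΦ (‖g‖⁻¹ • g, ‖v‖⁻¹ • v) ⟨by simp [norm_smul, hg], by simp [norm_smul, hv]⟩
  rw [hΦ_unit, inv_mul_eq_div, le_div_iff₀ (norm_pos_iff.2 hg)] at this
  exact this

end Irreducible

section IrreducibleGrowth

lemma integral_max_add_zero_le {Ω : Type*} [MeasurableSpace Ω] {κ : Measure Ω} {φ : Ω → ℝ}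
    (hφ : Measurable φ) {α R s : ℝ} (hα : 0 < α) (hR : 0 ≤ R)
    (h : expMoment α φ κ ≤ ENNReal.ofReal (R * Real.exp (-(α * s)))) :
    ∫ g, max (φ g + s) 0 ∂κ ≤ R / α := by
  have max_le_exp : ∀ y, max y 0 ≤ α⁻¹ * Real.exp (α * y) := fun y => by
    refine max_le ?_ (by positivity)
    rw [← div_eq_inv_mul, le_div_iff₀ hα, mul_comm]
    linarith [Real.add_one_le_exp (α * y)]
  rw [integral_eq_lintegral_of_nonneg_ae (f := fun g => max (φ g + s) 0)
    (.of_forall fun g => le_max_right _ _) (by fun_prop)]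
  refine ENNReal.toReal_le_of_le_ofReal (by positivity) ?_
  calc ∫⁻ g, ENNReal.ofReal (max (φ g + s) 0) ∂κ
      ≤ ∫⁻ g, ENNReal.ofReal (α⁻¹ * Real.exp (α * s)) *
          ENNReal.ofReal (Real.exp (α * φ g)) ∂κ := by
        gcongr with g
        rw [← ENNReal.ofReal_mul (by positivity), mul_assoc, ← Real.exp_add, add_comm, ← mul_add]
        exact ENNReal.ofReal_le_ofReal (add_comm (φ g) s ▸ max_le_exp _)
    _ = ENNReal.ofReal (α⁻¹ * Real.exp (α * s)) * expMoment α φ κ :=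
        lintegral_const_mul _ (measurable_ofReal_exp_mul hφ α)
    _ ≤ ENNReal.ofReal (α⁻¹ * Real.exp (α * s)) * ENNReal.ofReal (R * Real.exp (-(α * s))) := by
        gcongr
    _ = ENNReal.ofReal (R / α) := by
        rw [← ENNReal.ofReal_mul (by positivity), Real.exp_neg]
        congr 1
        field_simp

lemma abs_integral_le_of_ae_abs_le {Ω : Type*} [MeasurableSpace Ω] {κ : Measure Ω}
    [IsProbabilityMeasure κ] {f : Ω → ℝ} {c : ℝ} (hf : ∀ᵐ g ∂κ, |f g| ≤ c) :
    |∫ g, f g ∂κ| ≤ c := by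
  simpa using norm_integral_le_of_norm_le_const (f := f) hf

lemma integral_max_neg_sub {Ω : Type*} [MeasurableSpace Ω] {κ : Measure Ω}
    [IsProbabilityMeasure κ] {f : Ω → ℝ} (hf : Integrable f κ) (s : ℝ) :
    ∫ g, max (-f g - s) 0 ∂κ = -∫ g, f g ∂κ - s + ∫ g, max (f g + s) 0 ∂κ := by
  have split : ∀ g, max (-f g - s) 0 = -(f g + s) + max (f g + s) 0 := fun g => by
    rw [← max_add_add_left, neg_add_cancel, add_zero, max_comm, neg_add']
  have hfs : Integrable (fun g => f g + s) κ := hf.add (integrable_const s)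
  simp_rw [split]
  rw [integral_add (f := fun g => -(f g + s)) hfs.neg hfs.pos_part, integral_neg,
    integral_add hf (integrable_const s), integral_const, probReal_univ, one_smul, neg_add']

lemma max_log_sub_mul_le {s G κ t : ℝ} (hs : 0 < s) (hsG : s ≤ G) (hκ : 0 < κ) :
    max (Real.log G + Real.log κ - t) 0 * (s / G - κ) ≤ max (Real.log s - t) 0 := by
  have hG : 0 < G := hs.trans_le hsG
  rcases le_total (s / G) κ with h | h
  · exact (mul_nonpos_of_nonneg_of_nonpos (le_max_right _ _) (sub_nonpos.2 h)).trans
      (le_max_right _ _)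
  · have hlog : Real.log G + Real.log κ ≤ Real.log s := by
      rw [← Real.log_mul hG.ne' hκ.ne']
      exact Real.log_le_log (by positivity) (by rwa [le_div_iff₀' hG] at h)
    calc max (Real.log G + Real.log κ - t) 0 * (s / G - κ)
        ≤ max (Real.log G + Real.log κ - t) 0 * 1 := by
          gcongr
          linarith [(div_le_one hG).2 hsG]
      _ ≤ max (Real.log s - t) 0 := by rw [mul_one]; gcongr

variable {U : Type*} [NormedAddCommGroup U] [NormedSpace ℝ U] [FiniteDimensional ℝ U]
  {ν : Measure (U →L[ℝ] U)} {C : ℝ} {x : U}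

lemma measurable_logContraction_apply (x : U) :
    Measurable fun p : (U →L[ℝ] U) × (U →L[ℝ] U) => logContraction p.1 (p.2 x) := by
  have h_num : Measurable fun p : (U →L[ℝ] U) × (U →L[ℝ] U) => ‖p.1 (p.2 x)‖ :=
    (by fun_prop : Continuous fun p : (U →L[ℝ] U) × (U →L[ℝ] U) => ‖p.1 (p.2 x)‖).measurable
  have h_den : Measurable fun p : (U →L[ℝ] U) × (U →L[ℝ] U) => ‖p.2 x‖ :=
    (by fun_prop : Continuous fun p : (U →L[ℝ] U) × (U →L[ℝ] U) => ‖p.2 x‖).measurable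
  exact (Real.measurable_log.comp (h_num.div h_den)).neg

variable [IsProbabilityMeasure ν]

lemma ae_abs_logContraction_apply_le (hν : ∀ᵐ g ∂ν, IsBilipschitz C g) (hx : x ≠ 0) (m n : ℕ) :
    ∀ᵐ p ∂(convPow ν m).prod (convPow ν n), |logContraction p.1 (p.2 x)| ≤ m * Real.log C := by
  filter_upwards [Measure.quasiMeasurePreserving_fst.ae
      ((isBoundedSubcocycle_logContraction hν).ae_abs_le m),
    Measure.quasiMeasurePreserving_snd.ae (ae_convPow_isBilipschitz hν n)] with p hg hh
  exact hg _ (hh.apply_ne_zero hx)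

lemma integrable_logContraction_apply (hν : ∀ᵐ g ∂ν, IsBilipschitz C g) (hx : x ≠ 0)
    (m n : ℕ) :
    Integrable (fun p : (U →L[ℝ] U) × (U →L[ℝ] U) => logContraction p.1 (p.2 x))
      ((convPow ν m).prod (convPow ν n)) :=
  .of_bound (measurable_logContraction_apply x).aestronglyMeasurable _
    (ae_abs_logContraction_apply_le hν hx m n)

lemma integral_logContraction_apply (hν : ∀ᵐ g ∂ν, IsBilipschitz C g) (hx : x ≠ 0) (m n : ℕ) :
    ∫ p, logContraction p.1 (p.2 x) ∂(convPow ν m).prod (convPow ν n) =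
      ∫ g, logContraction g x ∂convPow ν (m + n) - ∫ h, logContraction h x ∂convPow ν n := by
  have hψ := isBoundedSubcocycle_logContraction hν
  have hS := ae_convPow_mem_submonoid measurableSet_bilipschitzSubmonoid
    (hν.mono fun g hg => (⟨C, hg⟩ : g ∈ bilipschitzSubmonoid U))
  have h_snd : ∫ p : (U →L[ℝ] U) × (U →L[ℝ] U), logContraction p.2 x
      ∂(convPow ν m).prod (convPow ν n) = ∫ h, logContraction h x ∂convPow ν n := by
    rw [integral_fun_snd (fun h => logContraction h x), probReal_univ, one_smul]
  rw [eq_sub_iff_add_eq, ← integral_mul_prod_convPow (hψ.integrable (m + n) hx),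
    ← h_snd, ← integral_add (integrable_logContraction_apply hν hx m n)
      ((hψ.integrable n hx).comp_snd _)]
  refine integral_congr_ae ?_
  filter_upwards [Measure.quasiMeasurePreserving_fst.ae (hS m),
    Measure.quasiMeasurePreserving_snd.ae (hS n)] with p hg hh
  exact (logContraction_mul hg hh hx).symm

lemma neg_integral_logContraction_apply_le (hν : ∀ᵐ g ∂ν, IsBilipschitz C g) (hx : x ≠ 0)
    (n j : ℕ) :
    -∫ p, logContraction p.1 (p.2 x) ∂(convPow ν n).prod (convPow ν j) ≤
      -∫ g, logContraction g x ∂convPow ν n + 2 * (j * Real.log C) := by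
  have h_pair := abs_integral_le_of_ae_abs_le (ae_abs_logContraction_apply_le hν hx j n)
  have h_single := abs_integral_le_of_ae_abs_le
    (((isBoundedSubcocycle_logContraction hν).ae_abs_le j).mono fun _ hg => hg x hx)
  rw [integral_logContraction_apply hν hx, add_comm j n] at h_pair
  rw [integral_logContraction_apply hν hx]
  linarith [neg_abs_le (∫ g, logContraction g x ∂convPow ν (n + j) -
      ∫ h, logContraction h x ∂convPow ν n),
    le_abs_self (∫ h, logContraction h x ∂convPow ν j)]

lemma exists_integral_max_add_le (hν : ∀ᵐ g ∂ν, IsBilipschitz C g) {b t : ℝ} (htb : t < b)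
    {m : ℕ} (hm : m ≠ 0) (h : ∀ x ≠ 0, ∫ g, logContraction g x ∂convPow ν m ≤ m * -b) :
    ∃ D : ℝ, ∀ n : ℕ, ∀ x ≠ 0,
      ∫ g, max (logContraction g x + n * t) 0 ∂convPow ν n ≤ D := by
  obtain ⟨α, hα, hrate⟩ := ((isBoundedSubcocycle_logContraction hν).hasRobustExpRate hm
    (neg_lt_neg htb) h).exists_expMoment_le
  obtain ⟨R, hR, hrate⟩ := hrate α hα le_rfl
  refine ⟨R / α, fun n x hx =>
    integral_max_add_zero_le (measurable_logContraction x) hα hR ?_⟩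
  convert hrate n x hx using 2
  ring_nf

lemma integral_max_neg_logContraction_le (hν : ∀ᵐ g ∂ν, IsBilipschitz C g) {n : ℕ} {s D : ℝ}
    (hD : ∀ x ≠ 0, ∫ g, max (logContraction g x + s) 0 ∂convPow ν n ≤ D) (hx : x ≠ 0) (j : ℕ) :
    ∫ p, max (-logContraction p.1 (p.2 x) - s) 0 ∂(convPow ν n).prod (convPow ν j) ≤
      -∫ g, logContraction g x ∂convPow ν n + 2 * (j * Real.log C) - s + D := by
  have hint := integrable_logContraction_apply hν hx n j
  have hint_max : Integrable (fun p => max (logContraction p.1 (p.2 x) + s) 0)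
      ((convPow ν n).prod (convPow ν j)) := (hint.add (integrable_const s)).pos_part
  have hdev : ∫ p, max (logContraction p.1 (p.2 x) + s) 0
      ∂(convPow ν n).prod (convPow ν j) ≤ D := by
    rw [integral_prod_symm _ hint_max]
    refine (integral_mono_ae hint_max.integral_prod_right (integrable_const D) ?_).trans_eq
      (by simp)
    filter_upwards [ae_convPow_isBilipschitz hν j] with h hh
    exact hD _ (hh.apply_ne_zero hx)
  rw [integral_max_neg_sub hint]
  linarith [neg_integral_logContraction_apply_le hν hx n j]

lemma integrable_max_neg_logContraction_apply (hν : ∀ᵐ g ∂ν, IsBilipschitz C g) (hx : x ≠ 0)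
    (n j : ℕ) (s : ℝ) :
    Integrable (fun p : (U →L[ℝ] U) × (U →L[ℝ] U) => max (-logContraction p.1 (p.2 x) - s) 0)
      ((convPow ν n).prod (convPow ν j)) :=
  ((integrable_logContraction_apply hν hx n j).neg.sub (integrable_const s)).pos_part

lemma sum_integral_max_neg_logContraction_le (hν : ∀ᵐ g ∂ν, IsBilipschitz C g) {n : ℕ} {b δ D : ℝ}
    (hD : ∀ x ≠ 0, ∫ g, max (logContraction g x + n * (b - δ)) 0 ∂convPow ν n ≤ D) (hx : x ≠ 0)
    (hx_slow : n * -(b + δ) ≤ ∫ g, logContraction g x ∂convPow ν n) (k : ℕ) :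
    ∑ j ∈ Finset.range k, ∫ p, max (-logContraction p.1 (p.2 x) - n * (b - δ)) 0
        ∂(convPow ν n).prod (convPow ν j) ≤
      k * (2 * (n * δ) + 2 * (k * Real.log C) + D) := by
  have hlogC : 0 ≤ Real.log C := Real.log_nonneg (one_le_of_ae_isBilipschitz hν)
  refine (Finset.sum_le_card_nsmul _ _ (2 * (n * δ) + 2 * (k * Real.log C) + D)
    fun j hj => ?_).trans_eq (by rw [Finset.card_range, nsmul_eq_mul])
  have hjk : (j : ℝ) * Real.log C ≤ k * Real.log C := by
    gcongr; exact (Finset.mem_range.1 hj).le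
  linarith [integral_max_neg_logContraction_le hν hD hx j]

lemma integral_mul_stretch_sub_le (hν : ∀ᵐ g ∂ν, IsBilipschitz C g) (hx : x ≠ 0)
    {g : U →L[ℝ] U} {D : ℝ} (hg : IsBilipschitz D g) {κ : ℝ} (hκ : 0 < κ) (j : ℕ) (s : ℝ)
    (hint : Integrable (fun h => max (-logContraction g (h x) - s) 0) (convPow ν j)) :
    max (Real.log ‖g‖ + Real.log κ - s) 0 *
        (‖g‖⁻¹ * ∫ h, ‖g (h x)‖ / ‖h x‖ ∂convPow ν j - κ) ≤
      ∫ h, max (-logContraction g (h x) - s) 0 ∂convPow ν j := by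
  have hint_ratio := (integrable_stretch (κ := convPow ν j) g x).const_mul ‖g‖⁻¹
  calc _ = ∫ h, max (Real.log ‖g‖ + Real.log κ - s) 0 *
          (‖g‖⁻¹ * (‖g (h x)‖ / ‖h x‖) - κ) ∂convPow ν j := by
        rw [integral_const_mul, integral_sub hint_ratio (integrable_const κ),
          integral_const_mul]
        simp
    _ ≤ ∫ h, max (-logContraction g (h x) - s) 0 ∂convPow ν j := by
        refine integral_mono_ae ((hint_ratio.sub (integrable_const κ)).const_mul _) hint ?_
        filter_upwards [ae_convPow_isBilipschitz hν j] with h hh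
        have hhx := hh.apply_ne_zero hx
        have hratio : 0 < ‖g (h x)‖ / ‖h x‖ :=
          div_pos (norm_pos_iff.2 (hg.apply_ne_zero hhx)) (norm_pos_iff.2 hhx)
        rw [logContraction, neg_neg, inv_mul_eq_div]
        exact max_log_sub_mul_le hratio (g.ratio_le_opNorm _) hκ

lemma mul_log_norm_le_sum_integral (hν : ∀ᵐ g ∂ν, IsBilipschitz C g) (hx : x ≠ 0)
    {g : U →L[ℝ] U} {D : ℝ} (hg : IsBilipschitz D g) (hg_norm : 0 < ‖g‖) {κ c : ℝ} (hκ : 0 < κ)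
    (hc : 0 < c) {k : ℕ} (hkκ : k * κ ≤ c / 2) {s : ℝ}
    (hspread : c * ‖g‖ ≤ ∑ j ∈ Finset.range k, ∫ h, ‖g (h x)‖ / ‖h x‖ ∂convPow ν j)
    (hint : ∀ j, Integrable (fun h => max (-logContraction g (h x) - s) 0) (convPow ν j)) :
    c / 2 * (Real.log ‖g‖ + Real.log κ - s) ≤
      ∑ j ∈ Finset.range k, ∫ h, max (-logContraction g (h x) - s) 0 ∂convPow ν j := by
  have hratio : c / 2 ≤ ∑ j ∈ Finset.range k,
      (‖g‖⁻¹ * ∫ h, ‖g (h x)‖ / ‖h x‖ ∂convPow ν j - κ) := by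
    have := (le_inv_mul_iff₀ hg_norm).2 ((mul_comm _ _).trans_le hspread)
    rw [Finset.sum_sub_distrib, ← Finset.mul_sum, Finset.sum_const, Finset.card_range,
      nsmul_eq_mul]
    linarith
  calc c / 2 * (Real.log ‖g‖ + Real.log κ - s)
      ≤ c / 2 * max (Real.log ‖g‖ + Real.log κ - s) 0 := by gcongr; exact le_max_left _ _
    _ ≤ _ := mul_le_mul_of_nonneg_right hratio (le_max_right _ _)
    _ ≤ _ := by
      rw [mul_comm, Finset.mul_sum]
      gcongr with j
      exact integral_mul_stretch_sub_le hν hx hg hκ j s (hint j)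

lemma exists_maximal_growth_rate (hν : ∀ᵐ g ∂ν, IsBilipschitz C g) {lam δ : ℝ} (hδ : 0 < δ)
    (h : ¬∃ m : ℕ, m ≠ 0 ∧ ∀ x ≠ 0, ∫ g, logContraction g x ∂convPow ν m ≤ m * -lam) :
    ∃ b ≤ lam,
      (∃ m : ℕ, m ≠ 0 ∧ ∀ x ≠ 0, ∫ g, logContraction g x ∂convPow ν m ≤ m * -b) ∧
      ∀ n : ℕ, n ≠ 0 → ∃ x ≠ 0, n * -(b + δ) < ∫ g, logContraction g x ∂convPow ν n := by
  let R : Set ℝ :=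
    {b | ∃ m : ℕ, m ≠ 0 ∧ ∀ x ≠ 0, ∫ g, logContraction g x ∂convPow ν m ≤ m * -b}
  have hR : R.Nonempty := ⟨-Real.log C, 1, one_ne_zero, fun x hx => by
    rw [neg_neg]
    exact (le_abs_self _).trans (abs_integral_le_of_ae_abs_le
      (((isBoundedSubcocycle_logContraction hν).ae_abs_le 1).mono fun _ hg => hg x hx))⟩
  have hR_le : ∀ b ∈ R, b ≤ lam := fun b ⟨m, hm, hb⟩ => by
    by_contra! hlt
    exact h ⟨m, hm, fun x hx => (hb x hx).trans (by gcongr)⟩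
  obtain ⟨b, hb, hlt⟩ := exists_lt_of_lt_csSup hR (sub_lt_self _ hδ)
  refine ⟨b, hR_le b hb, hb, fun n hn => ?_⟩
  by_contra! hbδ
  linarith [le_csSup ⟨lam, hR_le⟩ (⟨n, hn, hbδ⟩ : b + δ ∈ R)]

variable [Nontrivial U]

/-- Most directions are stretched by `g` almost as much as `‖g‖`, so a lower bound on the growth
of norms bounds the upper deviations of the stretch of the direction of `h x` from below. -/
lemma mul_integral_log_norm_le_sum (hν : ∀ᵐ g ∂ν, IsBilipschitz C g) {k : ℕ} {c : ℝ}
    (hc : 0 < c) (hx : x ≠ 0) (hspread : ∀ g : U →L[ℝ] U,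
      c * ‖g‖ ≤ ∑ j ∈ Finset.range k, ∫ h, ‖g (h x)‖ / ‖h x‖ ∂convPow ν j) {κ : ℝ} (hκ : 0 < κ)
    (hkκ : k * κ ≤ c / 2) (n : ℕ) (s : ℝ) :
    c / 2 * (∫ g, Real.log ‖g‖ ∂convPow ν n + Real.log κ - s) ≤
      ∑ j ∈ Finset.range k, ∫ p, max (-logContraction p.1 (p.2 x) - s) 0
        ∂(convPow ν n).prod (convPow ν j) := by
  have hint := fun j => integrable_max_neg_logContraction_apply hν hx n j s
  have hint_log : Integrable (fun g : U →L[ℝ] U => Real.log ‖g‖) (convPow ν n) :=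
    (isBoundedSubcocycle_log_norm hν).integrable n (Set.mem_univ ())
  have hint_add : Integrable (fun g : U →L[ℝ] U => Real.log ‖g‖ + Real.log κ) (convPow ν n) :=
    hint_log.add (integrable_const _)
  calc _ = ∫ g, c / 2 * (Real.log ‖g‖ + Real.log κ - s) ∂convPow ν n := by
        rw [integral_const_mul, integral_sub hint_add (integrable_const s),
          integral_add hint_log (integrable_const _)]
        simp
    _ ≤ ∫ g, ∑ j ∈ Finset.range k, ∫ h, max (-logContraction g (h x) - s) 0 ∂convPow ν j
          ∂convPow ν n := by
        refine integral_mono_ae ((hint_add.sub (integrable_const s)).const_mul _)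
          (integrable_finsetSum _ fun j _ => (hint j).integral_prod_left) ?_
        filter_upwards [ae_convPow_isBilipschitz hν n,
          ae_all_iff.2 fun j => (hint j).prod_right_ae] with g hg hgint
        exact mul_log_norm_le_sum_integral hν hx hg hg.norm_pos hκ hc hkκ (hspread g) hgint
    _ = _ := by
        rw [integral_finsetSum _ fun j _ => (hint j).integral_prod_left]
        exact Finset.sum_congr rfl fun j _ => (integral_prod _ (hint j)).symm

/-- Some vector `x` grows barely faster than the worst rate `b`, hence so does `h x` for the
first few steps `h`. As upward deviations from the rate `b` have small mean, norms cannot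
grow faster than `b`. -/
theorem ActsIrreducibly.exists_integral_logContraction_le (hirr : ActsIrreducibly ν)
    (hν : ∀ᵐ g ∂ν, IsBilipschitz C g) {lam lam' : ℝ} (hlam : lam' < lam)
    (h : ∀ n : ℕ, n * lam ≤ ∫ g, Real.log ‖g‖ ∂convPow ν n) :
    ∃ m : ℕ, m ≠ 0 ∧ ∀ x ≠ 0, ∫ g, logContraction g x ∂convPow ν m ≤ m * -lam' := by
  by_contra hcon
  have h_gap : 0 < lam - lam' := sub_pos.2 hlam
  obtain ⟨k, c, hc, hspread⟩ := hirr.exists_mul_norm_le_sum_integral_stretch hν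
  set κ := c / (2 * (k + 1)) with hκ_def
  have hkκ : k * κ ≤ c / 2 := by
    rw [hκ_def, ← mul_div_assoc, div_le_div_iff₀ (by positivity) two_pos]
    linarith
  set δ := κ * (lam - lam') / 4 with hδ_def
  have hδ : 0 < δ := div_pos (mul_pos (by positivity) h_gap) four_pos
  obtain ⟨b, hb, ⟨m, hm, hm_rate⟩, hworst⟩ := exists_maximal_growth_rate hν hδ hcon
  obtain ⟨D, hD⟩ := exists_integral_max_add_le hν (sub_lt_self b hδ) hm hm_rate
  have bound : ∀ n : ℕ, n ≠ 0 → n * (c / 4 * (lam - lam')) ≤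
      k * (2 * (k * Real.log C) + D) - c / 2 * Real.log κ := fun n hn => by
    obtain ⟨x, hx, hx_slow⟩ := hworst n hn
    have lower := mul_integral_log_norm_le_sum hν hc hx (fun g => hspread g x hx)
      (by positivity : 0 < κ) hkκ n (n * (b - δ))
    have upper := sum_integral_max_neg_logContraction_le hν (hD n) hx hx_slow.le k
    have growth : n * (lam - lam') + (n * lam' - n * b) + n * δ ≤
        ∫ g, Real.log ‖g‖ ∂convPow ν n - n * (b - δ) := by linarith [h n]
    have h_drop : 0 ≤ c / 2 * (n * (lam' - b) + n * δ) := by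
      have := sub_nonneg.2 hb; positivity
    have h_small := mul_le_mul_of_nonneg_right hkκ (by positivity : 0 ≤ n * (lam - lam'))
    have h_growth := mul_le_mul_of_nonneg_left growth (half_pos hc).le
    have h_error : (k : ℝ) * (2 * (n * δ)) = k * κ * (n * (lam - lam')) / 2 := by
      rw [hδ_def]; ring
    linarith
  obtain ⟨n, hn⟩ := exists_nat_gt ((k * (2 * (k * Real.log C) + D) - c / 2 * Real.log κ) /
    (c / 4 * (lam - lam')))
  rw [div_lt_iff₀ (by positivity)] at hn
  have := bound (n + 1) n.succ_ne_zero
  push_cast at this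
  have h_pos : 0 < c / 4 * (lam - lam') := by positivity
  linarith

end IrreducibleGrowth

/-! ### Reducible random walks -/

lemma ofReal_exp_mul_integral_le_expMoment {Ω : Type*} [MeasurableSpace Ω] {κ : Measure Ω}
    [IsProbabilityMeasure κ] {φ : Ω → ℝ} (hφ : Integrable φ κ) (α : ℝ) :
    ENNReal.ofReal (Real.exp (α * ∫ g, φ g ∂κ)) ≤ expMoment α φ κ := by
  rcases eq_or_ne (expMoment α φ κ) ∞ with h_top | h_fin
  · exact h_top ▸ le_top
  have h_meas : AEStronglyMeasurable (fun g => Real.exp (α * φ g)) κ :=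
    Real.continuous_exp.comp_aestronglyMeasurable (hφ.const_mul α).aestronglyMeasurable
  have h_int : Integrable (fun g => Real.exp (α * φ g)) κ :=
    (lintegral_ofReal_ne_top_iff_integrable h_meas
      (.of_forall fun g => (Real.exp_pos _).le)).1 h_fin
  rw [expMoment, ← ofReal_integral_eq_lintegral_ofReal h_int
    (.of_forall fun g => (Real.exp_pos _).le), ← integral_const_mul]
  exact ENNReal.ofReal_le_ofReal (convexOn_exp.map_integral_le Real.continuous_exp.continuousOn
    isClosed_univ (.of_forall fun _ => Set.mem_univ _) (hφ.const_mul α) h_int)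

lemma apply_two_pow_le_of_apply_add_self_le {c : ℕ → ℝ≥0∞} (hc : c 1 ≠ ∞) {K s : ℝ} (hK : 0 ≤ K)
    (h : ∀ n, c (n + n) ≤ ENNReal.ofReal (K * Real.exp (n * s)) * c n) :
    ∃ R : ℝ, 0 ≤ R ∧ ∀ j : ℕ,
      c (2 ^ j) ≤ ENNReal.ofReal (K ^ j * R * Real.exp ((2 ^ j : ℕ) * s)) := by
  refine ⟨(c 1).toReal * Real.exp (-s), by positivity, fun j => ?_⟩
  induction j with
  | zero =>
    rw [pow_zero, pow_zero, one_mul, mul_assoc, ← Real.exp_add, Nat.cast_one, one_mul,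
      neg_add_cancel, Real.exp_zero, mul_one, ENNReal.ofReal_toReal hc]
  | succ j ih =>
    rw [pow_succ 2, mul_two]
    refine (h _).trans ((mul_le_mul_right ih _).trans_eq ?_)
    rw [← ENNReal.ofReal_mul (by positivity), Nat.cast_add, add_mul, Real.exp_add, pow_succ]
    congr 1
    ring

lemma exists_add_pow_mul_lt_exp_two_pow {K R δ : ℝ} (hK : 1 ≤ K) (hR : 0 ≤ R) (hδ : 0 < δ) :
    ∃ j : ℕ, K + K ^ j * R < Real.exp ((2 ^ j : ℕ) * δ) := by
  by_contra! h
  have hlog : ∀ j : ℕ, δ ≤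
      (Real.log (1 + R) + Real.log K) * ((j : ℝ) ^ 0 / 2 ^ j) +
        Real.log K * ((j : ℝ) ^ 1 / 2 ^ j) := fun j => by
    have hpow : K + K ^ j * R ≤ (1 + R) * (K * K ^ j) := by
      have h1 : K ^ j * R ≤ K * K ^ j * R := by
        gcongr; exact le_mul_of_one_le_left (by positivity) hK
      have h2 : K ≤ K * K ^ j := le_mul_of_one_le_right (by positivity) (one_le_pow₀ hK)
      linarith
    have := (Real.le_log_iff_exp_le (by positivity)).2 ((h j).trans hpow)
    rw [Real.log_mul (by positivity) (by positivity), Real.log_mul (by positivity)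
      (by positivity), Real.log_pow] at this
    push_cast at this
    rw [pow_zero, pow_one, mul_div_assoc', mul_div_assoc', ← add_div, le_div_iff₀ (by positivity)]
    linarith
  have hlim : Tendsto (fun j : ℕ => (Real.log (1 + R) + Real.log K) * ((j : ℝ) ^ 0 / 2 ^ j) +
      Real.log K * ((j : ℝ) ^ 1 / 2 ^ j)) atTop (𝓝 0) := by
    simpa using ((tendsto_pow_const_div_const_pow_of_one_lt 0 one_lt_two).const_mul _).add
      ((tendsto_pow_const_div_const_pow_of_one_lt 1 one_lt_two).const_mul _)
  exact hδ.not_ge (ge_of_tendsto' hlim hlog)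

lemma ActsIrreducibly.hasRobustExpRate_neg_log_norm {U : Type*} [NormedAddCommGroup U]
    [NormedSpace ℝ U] [FiniteDimensional ℝ U] [Nontrivial U] {ν : Measure (U →L[ℝ] U)}
    [IsProbabilityMeasure ν] {C : ℝ} (hirr : ActsIrreducibly ν) (hν : ∀ᵐ g ∂ν, IsBilipschitz C g)
    {lam lam' : ℝ} (hlam : lam' < lam)
    (h : ∀ n : ℕ, n * lam ≤ ∫ g, Real.log ‖g‖ ∂convPow ν n) :
    HasRobustExpRate ν (fun g (_ : Unit) => -Real.log ‖g‖) Set.univ (-lam') := by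
  obtain ⟨l, hl', hl⟩ := exists_between hlam
  obtain ⟨m, hm, hcontr⟩ := hirr.exists_integral_logContraction_le hν hl h
  obtain ⟨v, hv⟩ := exists_ne (0 : U)
  refine ((isBoundedSubcocycle_logContraction hν).hasRobustExpRate hm (neg_lt_neg hl')
    hcontr).of_ae_le fun _ _ => ⟨v, hv, fun n => ?_⟩
  filter_upwards [ae_convPow_isBilipschitz hν n] with g hg
  have hgv := norm_pos_iff.2 (hg.apply_ne_zero hv)
  exact neg_le_neg (Real.log_le_log (div_pos hgv (norm_pos_iff.2 hv)) (g.ratio_le_opNorm v))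

section Block

variable {U : Type*} [NormedAddCommGroup U]

/-- The endomorphisms mapping `Y` into itself: a closed submonoid, on which compressing to `Y` or
to its orthogonal complement is multiplicative. -/
def stabilizerSubmonoid [NormedSpace ℝ U] (Y : Submodule ℝ U) : Submonoid (U →L[ℝ] U) where
  carrier := {g | ∀ y ∈ Y, g y ∈ Y}
  one_mem' := fun _ hy => hy
  mul_mem' := fun hg hh _ hy => hg _ (hh _ hy)

lemma measurableSet_stabilizerSubmonoid [NormedSpace ℝ U] [FiniteDimensional ℝ U]
    (Y : Submodule ℝ U) : MeasurableSet (stabilizerSubmonoid Y : Set (U →L[ℝ] U)) := by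
  have eq_iInter : (stabilizerSubmonoid Y : Set (U →L[ℝ] U)) =
      ⋂ y ∈ Y, {g : U →L[ℝ] U | g y ∈ (Y : Set U)} := by
    ext g
    simp only [Set.mem_iInter]
    rfl
  rw [eq_iInter]
  exact (isClosed_biInter fun y _ => Y.closed_of_finiteDimensional.preimage
    (ContinuousLinearMap.apply ℝ U y).continuous).measurableSet

variable [InnerProductSpace ℝ U] [FiniteDimensional ℝ U]

/-- The block of `g` from the subspace `V` to the subspace `W`, with respect to the orthogonal
projections. -/
def block (V W : Submodule ℝ U) (g : U →L[ℝ] U) : V →L[ℝ] W :=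
  W.orthogonalProjectionOnto ∘L g ∘L V.subtypeL

lemma coe_block_apply (V W : Submodule ℝ U) (g : U →L[ℝ] U) (v : V) :
    (block V W g v : U) = W.starProjection (g v) := rfl

lemma measurable_block (V W : Submodule ℝ U) : Measurable (block V W) :=
  (by unfold block; fun_prop : Continuous (block V W)).measurable

lemma block_one (W : Submodule ℝ U) : block W W 1 = 1 := by
  ext w
  simp [coe_block_apply]

lemma norm_block_le (V W : Submodule ℝ U) (g : U →L[ℝ] U) : ‖block V W g‖ ≤ ‖g‖ :=
  ContinuousLinearMap.opNorm_le_bound _ (norm_nonneg _) fun v =>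
    (W.norm_orthogonalProjectionOnto_apply_le _).trans (g.le_opNorm v)

lemma block_mul (Y V W : Submodule ℝ U) (g h : U →L[ℝ] U) :
    block V W (g * h) = block Y W g ∘L block V Y h + block Yᗮ W g ∘L block V Yᗮ h := by
  ext v
  have hsplit := Y.starProjection_add_starProjection_orthogonal (h v)
  simp only [add_apply, Submodule.coe_add, ContinuousLinearMap.comp_apply, coe_block_apply,
    ← map_add, hsplit]
  rfl

lemma norm_block_mul_le (Y V W : Submodule ℝ U) (g h : U →L[ℝ] U) :
    ‖block V W (g * h)‖ ≤
      ‖block Y W g‖ * ‖block V Y h‖ + ‖block Yᗮ W g‖ * ‖block V Yᗮ h‖ := by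
  rw [block_mul Y]
  exact (ContinuousLinearMap.opNorm_add_le _ _).trans
    (add_le_add (ContinuousLinearMap.opNorm_comp_le _ _) (ContinuousLinearMap.opNorm_comp_le _ _))

variable {Y W : Submodule ℝ U} {g h : U →L[ℝ] U}

lemma block_orthogonal_eq_zero (hg : g ∈ stabilizerSubmonoid Y) : block Y Yᗮ g = 0 := by
  ext y
  exact Submodule.starProjection_orthogonal_apply_eq_zero (hg y y.2)

lemma block_mul_of_mem_stabilizer (hW : W = Y ∨ W = Yᗮ) (hg : g ∈ stabilizerSubmonoid Y)
    (hh : h ∈ stabilizerSubmonoid Y) : block W W (g * h) = block W W g * block W W h := by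
  rw [block_mul Y]
  rcases hW with rfl | rfl
  · rw [block_orthogonal_eq_zero hh, ContinuousLinearMap.comp_zero, add_zero]; rfl
  · rw [block_orthogonal_eq_zero hg, ContinuousLinearMap.zero_comp, zero_add]; rfl

lemma norm_le_add_norm_block (hg : g ∈ stabilizerSubmonoid Y) :
    ‖g‖ ≤ ‖block Y Y g‖ + ‖block Yᗮ Y g‖ + ‖block Yᗮ Yᗮ g‖ := by
  refine ContinuousLinearMap.opNorm_le_bound _ (by positivity) fun v => ?_
  set y := Y.orthogonalProjectionOnto v
  set z := Yᗮ.orthogonalProjectionOnto v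
  have hsplit : g v = block Y Y g y + (block Yᗮ Y g z : U) + block Yᗮ Yᗮ g z := by
    have hv : v = y + z := (Y.starProjection_add_starProjection_orthogonal v).symm
    rw [coe_block_apply, coe_block_apply, coe_block_apply, add_assoc,
      Y.starProjection_add_starProjection_orthogonal,
      Submodule.starProjection_eq_self_iff.2 (hg y y.2), ← map_add, ← hv]
  have hy : ‖y‖ ≤ ‖v‖ := Y.norm_orthogonalProjectionOnto_apply_le v
  have hz : ‖z‖ ≤ ‖v‖ := Yᗮ.norm_orthogonalProjectionOnto_apply_le v
  calc ‖g v‖ ≤ ‖block Y Y g y‖ + ‖block Yᗮ Y g z‖ + ‖block Yᗮ Yᗮ g z‖ := hsplit ▸ norm_add₃_le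
    _ ≤ ‖block Y Y g‖ * ‖v‖ + ‖block Yᗮ Y g‖ * ‖v‖ + ‖block Yᗮ Yᗮ g‖ * ‖v‖ := by
      gcongr <;> exact (ContinuousLinearMap.le_opNorm _ _).trans (by gcongr)
    _ = _ := by ring

lemma IsBilipschitz.exists_mem_apply_eq {C : ℝ} (hg : IsBilipschitz C g)
    (hgY : g ∈ stabilizerSubmonoid Y) {y : U} (hy : y ∈ Y) : ∃ x ∈ Y, g x = y := by
  let f : Y →ₗ[ℝ] Y := g.toLinearMap.restrict hgY
  have hf : Function.Injective f := (injective_iff_map_eq_zero f).2 fun x hx => by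
    by_contra hne
    exact hg.apply_ne_zero (fun h => hne (Subtype.ext h)) (congrArg Subtype.val hx)
  obtain ⟨x, hx⟩ := LinearMap.injective_iff_surjective.1 hf ⟨y, hy⟩
  exact ⟨x, x.2, congrArg Subtype.val hx⟩

lemma IsBilipschitz.block {C : ℝ} (hg : IsBilipschitz C g) (hW : W = Y ∨ W = Yᗮ)
    (hgY : g ∈ stabilizerSubmonoid Y) : IsBilipschitz C (block W W g) where
  one_le := hg.one_le
  norm_le := (norm_block_le W W g).trans hg.norm_le
  le_mul_norm w := by
    change ‖(w : U)‖ ≤ C * ‖W.starProjection (g w)‖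
    rcases hW with rfl | rfl
    · rw [Submodule.starProjection_eq_self_iff.2 (hgY w w.2)]
      exact hg.le_mul_norm w
    obtain ⟨y, hy, hgy⟩ := hg.exists_mem_apply_eq hgY (Y.starProjection_apply_mem (g w))
    have hproj : Yᗮ.starProjection (g w) = g (w - y) := by
      rw [map_sub, hgy, eq_sub_iff_add_eq']
      exact Y.starProjection_add_starProjection_orthogonal (g w)
    have hpyth : ‖(w : U)‖ ^ 2 ≤ ‖(w : U) - y‖ ^ 2 := by
      rw [norm_sub_sq_real, Submodule.inner_left_of_mem_orthogonal hy w.2]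
      linarith [sq_nonneg ‖y‖]
    rw [hproj]
    exact (pow_le_pow_iff_left₀ (norm_nonneg _) (norm_nonneg _) two_ne_zero).1 hpyth |>.trans
      (hg.le_mul_norm _)

variable {ν : Measure (U →L[ℝ] U)} {C : ℝ}

lemma ae_map_block_isBilipschitz (hW : W = Y ∨ W = Yᗮ) (hν : ∀ᵐ g ∂ν, IsBilipschitz C g)
    (hY : ∀ᵐ g ∂ν, g ∈ stabilizerSubmonoid Y) :
    ∀ᵐ g ∂ν.map (block W W), IsBilipschitz C g := by
  rw [ae_map_iff (measurable_block W W).aemeasurable (isClosed_setOf_isBilipschitz C).measurableSet]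
  filter_upwards [hν, hY] with g hg hgY using hg.block hW hgY

lemma map_block_convPow [IsFiniteMeasure ν] (hW : W = Y ∨ W = Yᗮ)
    (hY : ∀ᵐ g ∂ν, g ∈ stabilizerSubmonoid Y) (n : ℕ) :
    (convPow ν n).map (block W W) = convPow (ν.map (block W W)) n :=
  map_convPow (measurable_block W W) (measurableSet_stabilizerSubmonoid Y) (block_one W)
    (fun _ hg _ hh => block_mul_of_mem_stabilizer hW hg hh) hY n

/-- The `α`-th moment of the norm of the block from `V` to `W`. Unlike `expMoment` of the
logarithm, it is correct also when the block vanishes. -/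
def blockMoment (α : ℝ) (V W : Submodule ℝ U) (κ : Measure (U →L[ℝ] U)) : ℝ≥0∞ :=
  ∫⁻ g, ‖block V W g‖ₑ ^ α ∂κ

lemma measurable_enorm_block_rpow (α : ℝ) (V W : Submodule ℝ U) :
    Measurable fun g : U →L[ℝ] U => ‖block V W g‖ₑ ^ α :=
  (measurable_enorm.comp (measurable_block V W)).pow_const α

variable {α : ℝ} {κ κ' : Measure (U →L[ℝ] U)}

lemma blockMoment_mconv_le [SFinite κ'] (hα : 0 ≤ α) (hα_one : α ≤ 1)
    (Y V W : Submodule ℝ U) :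
    blockMoment α V W (κ ∗ₘ κ') ≤ blockMoment α Y W κ * blockMoment α V Y κ' +
      blockMoment α Yᗮ W κ * blockMoment α V Yᗮ κ' := by
  have hmeas := measurable_enorm_block_rpow (U := U) α
  have pointwise : ∀ g h : U →L[ℝ] U, ‖block V W (g * h)‖ₑ ^ α ≤
      ‖block Y W g‖ₑ ^ α * ‖block V Y h‖ₑ ^ α +
        ‖block Yᗮ W g‖ₑ ^ α * ‖block V Yᗮ h‖ₑ ^ α := fun g h => by
    rw [← ENNReal.mul_rpow_of_nonneg _ _ hα, ← ENNReal.mul_rpow_of_nonneg _ _ hα]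
    refine (ENNReal.rpow_le_rpow ?_ hα).trans (ENNReal.rpow_add_le_add_rpow _ _ hα hα_one)
    simp only [← ofReal_norm]
    rw [← ENNReal.ofReal_mul (norm_nonneg _), ← ENNReal.ofReal_mul (norm_nonneg _),
      ← ENNReal.ofReal_add (by positivity) (by positivity)]
    exact ENNReal.ofReal_le_ofReal (norm_block_mul_le Y V W g h)
  calc blockMoment α V W (κ ∗ₘ κ')
      = ∫⁻ g, ∫⁻ h, ‖block V W (g * h)‖ₑ ^ α ∂κ' ∂κ := Measure.lintegral_mconv (hmeas V W)
    _ ≤ ∫⁻ g, ∫⁻ h, (‖block Y W g‖ₑ ^ α * ‖block V Y h‖ₑ ^ α +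
          ‖block Yᗮ W g‖ₑ ^ α * ‖block V Yᗮ h‖ₑ ^ α) ∂κ' ∂κ :=
        lintegral_mono fun g => lintegral_mono (pointwise g)
    _ = ∫⁻ g, (‖block Y W g‖ₑ ^ α * blockMoment α V Y κ' +
          ‖block Yᗮ W g‖ₑ ^ α * blockMoment α V Yᗮ κ') ∂κ := by
        refine lintegral_congr fun g => ?_
        rw [lintegral_add_left ((hmeas V Y).const_mul _), lintegral_const_mul _ (hmeas V Y),
          lintegral_const_mul _ (hmeas V Yᗮ)]
        rfl
    _ = _ := by
        rw [lintegral_add_left ((hmeas Y W).mul_const _), lintegral_mul_const _ (hmeas Y W),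
          lintegral_mul_const _ (hmeas Yᗮ W)]
        rfl

lemma blockMoment_ne_top [IsFiniteMeasure ν] (hα : 0 ≤ α) (hν : ∀ᵐ g ∂ν, IsBilipschitz C g)
    (V W : Submodule ℝ U) : blockMoment α V W ν ≠ ∞ := by
  have bound : ∀ᵐ g ∂ν, ‖block V W g‖ₑ ^ α ≤ ENNReal.ofReal C ^ α := hν.mono fun g hg => by
    rw [← ofReal_norm]
    gcongr
    exact (norm_block_le V W g).trans hg.norm_le
  refine ((lintegral_mono_ae bound).trans_lt ?_).ne
  rw [lintegral_const]
  finiteness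

lemma lintegral_enorm_rpow_le_blockMoment (hα : 0 ≤ α) (hα_one : α ≤ 1)
    (hY : ∀ᵐ g ∂κ, g ∈ stabilizerSubmonoid Y) :
    ∫⁻ g, ‖g‖ₑ ^ α ∂κ ≤
      blockMoment α Y Y κ + blockMoment α Yᗮ Y κ + blockMoment α Yᗮ Yᗮ κ := by
  have hmeas := measurable_enorm_block_rpow (U := U) α
  unfold blockMoment
  rw [← lintegral_add_left (hmeas Y Y), ← lintegral_add_right _ (hmeas Yᗮ Yᗮ)]
  refine lintegral_mono_ae (hY.mono fun g hg => ?_)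
  calc ‖g‖ₑ ^ α ≤ (‖block Y Y g‖ₑ + ‖block Yᗮ Y g‖ₑ + ‖block Yᗮ Yᗮ g‖ₑ) ^ α := by
        gcongr
        simp only [← ofReal_norm]
        rw [← ENNReal.ofReal_add (by positivity) (by positivity),
          ← ENNReal.ofReal_add (by positivity) (by positivity)]
        exact ENNReal.ofReal_le_ofReal (norm_le_add_norm_block hg)
    _ ≤ (‖block Y Y g‖ₑ + ‖block Yᗮ Y g‖ₑ) ^ α + ‖block Yᗮ Yᗮ g‖ₑ ^ α :=
        ENNReal.rpow_add_le_add_rpow _ _ hα hα_one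
    _ ≤ _ := by gcongr; exact ENNReal.rpow_add_le_add_rpow _ _ hα hα_one

lemma expMoment_log_norm_eq {V : Type*} [NormedAddCommGroup V] [NormedSpace ℝ V] [Nontrivial V]
    {κ : Measure (V →L[ℝ] V)} (h : ∀ᵐ g ∂κ, IsBilipschitz C g) (α : ℝ) :
    expMoment α (fun g => Real.log ‖g‖) κ = ∫⁻ g, ‖g‖ₑ ^ α ∂κ := by
  refine lintegral_congr_ae (h.mono fun g hg => ?_)
  dsimp only
  rw [← ofReal_norm, ENNReal.ofReal_rpow_of_pos hg.norm_pos, Real.rpow_def_of_pos hg.norm_pos,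
    mul_comm]

variable [IsProbabilityMeasure ν]

lemma isProbabilityMeasure_map_block (V W : Submodule ℝ U) :
    IsProbabilityMeasure (ν.map (block V W)) :=
  Measure.isProbabilityMeasure_map (measurable_block V W).aemeasurable

lemma exists_blockMoment_convPow_le [Nontrivial W] (hW : W = Y ∨ W = Yᗮ)
    (hν : ∀ᵐ g ∂ν, IsBilipschitz C g) (hY : ∀ᵐ g ∂ν, g ∈ stabilizerSubmonoid Y) {l l' : ℝ}
    (hl : l < l') {m : ℕ} (h : ∫ g, Real.log ‖g‖ ∂convPow (ν.map (block W W)) m < m * l) :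
    ∃ α₀ : ℝ, 0 < α₀ ∧ ∀ α, 0 < α → α ≤ α₀ → ∃ K : ℝ, 0 ≤ K ∧ ∀ n : ℕ,
      blockMoment α W W (convPow ν n) ≤ ENNReal.ofReal (K * Real.exp (n * (α * l'))) := by
  have := isProbabilityMeasure_map_block (ν := ν) W W
  have hνW := ae_map_block_isBilipschitz hW hν hY
  have hm : m ≠ 0 := by
    rintro rfl
    simp [convPow_zero] at h
  obtain ⟨α₀, hα₀, hrate⟩ :=
    ((isBoundedSubcocycle_log_norm hνW).hasRobustExpRate hm hl fun _ _ => h.le).exists_expMoment_le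
  refine ⟨α₀, hα₀, fun α hα hαα₀ => ?_⟩
  obtain ⟨K, hK, hrate⟩ := hrate α hα hαα₀
  refine ⟨K, hK, fun n => le_trans (le_of_eq ?_) (hrate n () trivial)⟩
  rw [expMoment_log_norm_eq (ae_convPow_isBilipschitz hνW n), ← map_block_convPow hW hY,
    lintegral_map (by fun_prop) (measurable_block W W), blockMoment]

lemma exists_lintegral_enorm_rpow_convPow_two_pow_le (hα : 0 ≤ α) (hα_one : α ≤ 1)
    (hν : ∀ᵐ g ∂ν, IsBilipschitz C g) (hY : ∀ᵐ g ∂ν, g ∈ stabilizerSubmonoid Y) {K s : ℝ}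
    (hK : 0 ≤ K)
    (h : ∀ n : ℕ, blockMoment α Y Y (convPow ν n) + blockMoment α Yᗮ Yᗮ (convPow ν n) ≤
      ENNReal.ofReal (K * Real.exp (n * s))) :
    ∃ R : ℝ, 0 ≤ R ∧ ∀ j : ℕ, ∫⁻ g, ‖g‖ₑ ^ α ∂convPow ν (2 ^ j) ≤
      ENNReal.ofReal ((K + K ^ j * R) * Real.exp ((2 ^ j : ℕ) * s)) := by
  have doubling : ∀ n : ℕ, blockMoment α Yᗮ Y (convPow ν (n + n)) ≤
      ENNReal.ofReal (K * Real.exp (n * s)) * blockMoment α Yᗮ Y (convPow ν n) := fun n => by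
    rw [convPow_add]
    refine (blockMoment_mconv_le hα hα_one Y Yᗮ Y).trans ?_
    rw [mul_comm (blockMoment α Yᗮ Y _), ← add_mul]
    gcongr
    exact h n
  obtain ⟨R, hR, hoff⟩ := apply_two_pow_le_of_apply_add_self_le
    (by rw [convPow_one]; exact blockMoment_ne_top hα hν Yᗮ Y) hK doubling
  refine ⟨R, hR, fun j => (lintegral_enorm_rpow_le_blockMoment hα hα_one
    (ae_convPow_mem_submonoid (measurableSet_stabilizerSubmonoid Y) hY _)).trans ?_⟩
  rw [add_right_comm, add_mul, ENNReal.ofReal_add (by positivity) (by positivity)]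
  exact add_le_add (h _) (hoff j)

lemma hasRobustExpRate_neg_log_norm_of_block [Nontrivial W] (hW : W = Y ∨ W = Yᗮ)
    (hν : ∀ᵐ g ∂ν, IsBilipschitz C g) (hY : ∀ᵐ g ∂ν, g ∈ stabilizerSubmonoid Y) {b : ℝ}
    (h : HasRobustExpRate (ν.map (block W W)) (fun g (_ : Unit) => -Real.log ‖g‖) Set.univ b) :
    HasRobustExpRate ν (fun g (_ : Unit) => -Real.log ‖g‖) Set.univ b := by
  have hblock := HasRobustExpRate.of_map (measurable_block W W)
    (measurableSet_stabilizerSubmonoid Y) (block_one W)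
    (fun _ hg _ hh => block_mul_of_mem_stabilizer hW hg hh) hY
    (fun _ => measurable_norm.log.neg) h
  refine hblock.of_ae_le fun x hx => ⟨x, hx, fun n => ?_⟩
  filter_upwards [ae_convPow_isBilipschitz hν n,
    ae_convPow_mem_submonoid (measurableSet_stabilizerSubmonoid Y) hY n] with g hg hgY
  exact neg_le_neg (Real.log_le_log (hg.block hW hgY).norm_pos (norm_block_le W W g))

/-- If both diagonal blocks grew more slowly than `lam`, then so would the off-diagonal one, whose
moments satisfy a doubling inequality driven by those of the diagonal blocks. -/
theorem exists_block_le_integral_log_norm [Nontrivial Y] [Nontrivial Yᗮ]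
    (hν : ∀ᵐ g ∂ν, IsBilipschitz C g) (hY : ∀ᵐ g ∂ν, g ∈ stabilizerSubmonoid Y) {lam lam' : ℝ}
    (hlam : lam' < lam) (h : ∀ n : ℕ, n * lam ≤ ∫ g, Real.log ‖g‖ ∂convPow ν n) :
    (∀ n : ℕ, n * lam' ≤ ∫ g, Real.log ‖g‖ ∂convPow (ν.map (block Y Y)) n) ∨
      ∀ n : ℕ, n * lam' ≤ ∫ g, Real.log ‖g‖ ∂convPow (ν.map (block Yᗮ Yᗮ)) n := by
  have : Nontrivial U := Y.subtype_injective.nontrivial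
  by_contra! ⟨⟨m₁, hm₁⟩, m₂, hm₂⟩
  obtain ⟨l, hl', hl⟩ := exists_between hlam
  obtain ⟨α₁, hα₁, hrate₁⟩ := exists_blockMoment_convPow_le (.inl rfl) hν hY hl' hm₁
  obtain ⟨α₂, hα₂, hrate₂⟩ := exists_blockMoment_convPow_le (.inr rfl) hν hY hl' hm₂
  set α := min (min α₁ α₂) 1
  have hα : 0 < α := by positivity
  obtain ⟨K₁, hK₁, hrate₁⟩ := hrate₁ α hα ((min_le_left _ _).trans (min_le_left _ _))
  obtain ⟨K₂, hK₂, hrate₂⟩ := hrate₂ α hα ((min_le_left _ _).trans (min_le_right _ _))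
  have diag : ∀ n : ℕ, blockMoment α Y Y (convPow ν n) + blockMoment α Yᗮ Yᗮ (convPow ν n) ≤
      ENNReal.ofReal ((K₁ + K₂ + 1) * Real.exp (n * (α * l))) := fun n => by
    refine (add_le_add (hrate₁ n) (hrate₂ n)).trans ?_
    rw [← ENNReal.ofReal_add (by positivity) (by positivity), ← add_mul]
    gcongr ENNReal.ofReal (?_ * _)
    linarith
  obtain ⟨R, hR, hnorm⟩ := exists_lintegral_enorm_rpow_convPow_two_pow_le hα.le (min_le_right _ _)
    hν hY (by positivity) diag
  obtain ⟨j, hj⟩ := exists_add_pow_mul_lt_exp_two_pow (K := K₁ + K₂ + 1) (by linarith) hR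
    (mul_pos hα (sub_pos.2 hl))
  have jensen := ofReal_exp_mul_integral_le_expMoment
    ((isBoundedSubcocycle_log_norm hν).integrable (2 ^ j) (x := ()) trivial) α
  rw [expMoment_log_norm_eq (ae_convPow_isBilipschitz hν _)] at jensen
  have hexp := (ENNReal.ofReal_le_ofReal_iff (by positivity)).1 (jensen.trans (hnorm j))
  refine hexp.not_gt (lt_of_lt_of_le (mul_lt_mul_of_pos_right hj (Real.exp_pos _)) ?_)
  rw [← Real.exp_add]
  gcongr
  calc _ = α * ((2 ^ j : ℕ) * lam) := by ring
    _ ≤ _ := by gcongr; exact h _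

end Block

universe u

/-- Induction on the dimension: if the walk is reducible, one of the two diagonal blocks of a
common invariant subspace has the same growth, and its norm is at most that of the matrix. -/
theorem hasRobustExpRate_neg_log_norm {U : Type u} [NormedAddCommGroup U] [InnerProductSpace ℝ U]
    [FiniteDimensional ℝ U] [Nontrivial U] {ν : Measure (U →L[ℝ] U)} [IsProbabilityMeasure ν]
    {C : ℝ} (hν : ∀ᵐ g ∂ν, IsBilipschitz C g) {lam lam' : ℝ} (hlam : lam' < lam)
    (h : ∀ n : ℕ, n * lam ≤ ∫ g, Real.log ‖g‖ ∂convPow ν n) :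
    HasRobustExpRate ν (fun g (_ : Unit) => -Real.log ‖g‖) Set.univ (-lam') := by
  induction hN : Module.finrank ℝ U using Nat.strong_induction_on generalizing U lam with
  | _ N ih =>
  obtain ⟨l, hl', hl⟩ := exists_between hlam
  by_cases hirr : ActsIrreducibly ν
  · exact hirr.hasRobustExpRate_neg_log_norm hν hlam h
  unfold ActsIrreducibly at hirr
  push Not at hirr
  obtain ⟨Y, hY, hY_bot, hY_top⟩ := hirr
  have hYo_bot : Yᗮ ≠ ⊥ := fun h => hY_top (Submodule.orthogonal_eq_bot_iff.1 h)
  have hYo_top : Yᗮ ≠ ⊤ := fun h => hY_bot ((Submodule.orthogonal_eq_top_iff Y).1 h)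
  have := Submodule.nontrivial_iff_ne_bot.2 hY_bot
  have := Submodule.nontrivial_iff_ne_bot.2 hYo_bot
  have := isProbabilityMeasure_map_block (ν := ν) Y Y
  have := isProbabilityMeasure_map_block (ν := ν) Yᗮ Yᗮ
  rcases exists_block_le_integral_log_norm hν hY hl h with hblock | hblock
  · exact hasRobustExpRate_neg_log_norm_of_block (.inl rfl) hν hY <|
      ih _ (hN ▸ Submodule.finrank_lt hY_top) (ae_map_block_isBilipschitz (.inl rfl) hν hY)
        hl' hblock rfl
  · exact hasRobustExpRate_neg_log_norm_of_block (.inr rfl) hν hY <|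
      ih _ (hN ▸ Submodule.finrank_lt hYo_top) (ae_map_block_isBilipschitz (.inr rfl) hν hY)
        hl' hblock rfl

/-! ### Majorized power series -/

/-- On `[0, ε)` the function `f` is the sum of a power series `∑ a k * t ^ k` whose majorant
`∑ |a k| * ε ^ k` is at most `r`. -/
def HasMajorizedSeries (f : ℝ → ℝ) (ε r : ℝ) : Prop :=
  ∃ a : ℕ → ℝ, Summable (fun k => |a k| * ε ^ k) ∧ ∑' k, |a k| * ε ^ k ≤ r ∧
    ∀ t ∈ Set.Ico 0 ε, HasSum (fun k => a k * t ^ k) (f t)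

namespace HasMajorizedSeries

variable {f g : ℝ → ℝ} {ε r r' : ℝ}

lemma mono (hf : HasMajorizedSeries f ε r) (hr : r ≤ r') : HasMajorizedSeries f ε r' := by
  obtain ⟨a, ha, har, hat⟩ := hf
  exact ⟨a, ha, har.trans hr, hat⟩

lemma congr (hf : HasMajorizedSeries f ε r) (h : Set.EqOn f g (Set.Ico 0 ε)) :
    HasMajorizedSeries g ε r := by
  obtain ⟨a, ha, har, hat⟩ := hf
  exact ⟨a, ha, har, fun t ht => h ht ▸ hat t ht⟩

lemma abs_le (hf : HasMajorizedSeries f ε r) {t : ℝ} (ht : t ∈ Set.Ico 0 ε) : |f t| ≤ r := by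
  obtain ⟨a, ha, har, hat⟩ := hf
  refine (tsum_of_norm_bounded ha.hasSum fun k => ?_ : ‖∑' k, a k * t ^ k‖ ≤ _).trans har
    |> fun h => by rwa [(hat t ht).tsum_eq] at h
  rw [norm_mul, norm_pow, Real.norm_eq_abs, Real.norm_of_nonneg ht.1]
  gcongr
  exacts [ht.1, ht.2.le]

lemma affine (ε b c : ℝ) :
    HasMajorizedSeries (fun t => b + c * t) ε (|b| + |c| * ε) := by
  let a : ℕ → ℝ := fun k => if k = 0 then b else if k = 1 then c else 0
  have ha : ∀ k ∉ Finset.range 2, a k = 0 := fun k hk => by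
    simp only [Finset.mem_range] at hk
    simp only [a]
    rw [if_neg (by lia), if_neg (by lia)]
  have h_majorant : HasSum (fun k => |a k| * ε ^ k) (|b| + |c| * ε) := by
    simpa [Finset.sum_range_succ, a] using hasSum_sum_of_ne_finset_zero (L := .unconditional ℕ)
      (s := Finset.range 2) (f := fun k => |a k| * ε ^ k) fun k hk => by
        simp only [ha k hk, abs_zero, zero_mul]
  refine ⟨a, h_majorant.summable, h_majorant.tsum_eq.le, fun t _ => ?_⟩
  simpa [Finset.sum_range_succ, a] using hasSum_sum_of_ne_finset_zero (L := .unconditional ℕ)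
    (s := Finset.range 2) (f := fun k => a k * t ^ k) fun k hk => by
      simp only [ha k hk, zero_mul]

open Finset.HasAntidiagonal in
lemma mul (hε : 0 ≤ ε) (hf : HasMajorizedSeries f ε r) (hg : HasMajorizedSeries g ε r') :
    HasMajorizedSeries (fun t => f t * g t) ε (r * r') := by
  obtain ⟨a, ha, har, hat⟩ := hf
  obtain ⟨b, hb, hbr, hbt⟩ := hg
  have cauchy (u v : ℕ → ℝ) (t : ℝ) (n : ℕ) :
      ∑ p ∈ antidiagonal n, u p.1 * t ^ p.1 * (v p.2 * t ^ p.2) =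
        (∑ p ∈ antidiagonal n, u p.1 * v p.2) * t ^ n := by
    rw [Finset.sum_mul]
    refine Finset.sum_congr rfl fun p hp => ?_
    rw [← mem_antidiagonal.1 hp, pow_add]
    ring
  have h_majorant := summable_sum_mul_antidiagonal_of_summable_norm' ha.norm ha hb.norm hb
  have h_le (n : ℕ) : |∑ p ∈ antidiagonal n, a p.1 * b p.2| * ε ^ n ≤
      ∑ p ∈ antidiagonal n, |a p.1| * ε ^ p.1 * (|b p.2| * ε ^ p.2) := by
    rw [cauchy (|a ·|) (|b ·|)]
    gcongr
    exact (Finset.abs_sum_le_sum_abs _ _).trans_eq (by simp only [abs_mul])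
  have h_summable := Summable.of_nonneg_of_le (fun n => by positivity) h_le h_majorant
  refine ⟨fun n => ∑ p ∈ antidiagonal n, a p.1 * b p.2, h_summable, ?_, fun t ht => ?_⟩
  · calc ∑' n, |∑ p ∈ antidiagonal n, a p.1 * b p.2| * ε ^ n
        ≤ ∑' n, ∑ p ∈ antidiagonal n, |a p.1| * ε ^ p.1 * (|b p.2| * ε ^ p.2) :=
          h_summable.tsum_le_tsum h_le h_majorant
      _ = (∑' k, |a k| * ε ^ k) * ∑' k, |b k| * ε ^ k :=
          (tsum_mul_tsum_eq_tsum_sum_antidiagonal_of_summable_norm ha.norm hb.norm).symm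
      _ ≤ r * r' := by
          have hr := (tsum_nonneg fun k => by positivity : 0 ≤ ∑' k, |a k| * ε ^ k).trans har
          gcongr
  · have hat_norm := (hat t ht).summable.norm
    have hbt_norm := (hbt t ht).summable.norm
    simp only [← cauchy a b]
    rw [← (hat t ht).tsum_eq, ← (hbt t ht).tsum_eq,
      tsum_mul_tsum_eq_tsum_sum_antidiagonal_of_summable_norm hat_norm hbt_norm]
    exact (summable_norm_sum_mul_antidiagonal_of_summable_norm hat_norm hbt_norm).of_norm.hasSum

lemma mul_const (hε : 0 ≤ ε) (hf : HasMajorizedSeries f ε r) (b : ℝ) :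
    HasMajorizedSeries (fun t => f t * b) ε (r * |b|) := by
  simpa using hf.mul hε (affine ε b 0)

lemma tsum_apply {ι : Type*} {f : ι → ℝ → ℝ} {r : ι → ℝ} (hε : 0 < ε)
    (hf : ∀ i, HasMajorizedSeries (f i) ε (r i)) (hr : Summable r) :
    HasMajorizedSeries (fun t => ∑' i, f i t) ε (∑' i, r i) := by
  choose a ha har hat using hf
  have ha_prod : Summable fun x : ι × ℕ => |a x.1 x.2| * ε ^ x.2 := by
    rw [summable_prod_of_nonneg fun x => by positivity]
    exact ⟨ha, .of_nonneg_of_le (fun i => tsum_nonneg fun k => by positivity) har hr⟩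
  have ha_symm : Summable fun x : ℕ × ι => |a x.2 x.1| * ε ^ x.1 := ha_prod.prod_symm
  have ha_sum : Summable fun k => ∑' i, |a i k| * ε ^ k := ha_symm.prod
  have ha_fiber (k : ℕ) : Summable fun i => |a i k| := by
    rw [← summable_mul_right_iff (pow_pos hε k).ne']
    exact ha_symm.prod_factor k
  have ha_tsum (k : ℕ) : |∑' i, a i k| * ε ^ k ≤ ∑' i, |a i k| * ε ^ k := by
    rw [tsum_mul_right]
    gcongr
    simpa only [Real.norm_eq_abs] using norm_tsum_le_tsum_norm (ha_fiber k).of_abs.norm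
  have hsum : Summable fun k => |∑' i, a i k| * ε ^ k :=
    .of_nonneg_of_le (fun k => by positivity) ha_tsum ha_sum
  refine ⟨fun k => ∑' i, a i k, hsum, ?_, fun t ht => ?_⟩
  · calc ∑' k, |∑' i, a i k| * ε ^ k
        ≤ ∑' k, ∑' i, |a i k| * ε ^ k := hsum.tsum_le_tsum ha_tsum ha_sum
      _ = ∑' i, ∑' k, |a i k| * ε ^ k := ha_prod.tsum_comm
      _ ≤ ∑' i, r i := ha_prod.prod.tsum_le_tsum har hr
  · have ht_prod : Summable fun x : ι × ℕ => a x.1 x.2 * t ^ x.2 := by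
      refine .of_norm_bounded ha_prod fun x => ?_
      rw [norm_mul, norm_pow, Real.norm_eq_abs, Real.norm_of_nonneg ht.1]
      gcongr
      exacts [ht.1, ht.2.le]
    have h_hasSum : HasSum (fun x : ι × ℕ => a x.1 x.2 * t ^ x.2) (∑' i, f i t) := by
      convert ht_prod.hasSum using 1
      rw [ht_prod.tsum_prod]
      exact tsum_congr fun i => (hat i t ht).tsum_eq.symm
    exact ((Equiv.prodComm ℕ ι).hasSum_iff.2 h_hasSum).prod_fiberwise fun k =>
      (ha_fiber k).of_abs.hasSum.mul_right _

lemma sum {ι : Type*} [Fintype ι] {f : ι → ℝ → ℝ} {r : ι → ℝ} (hε : 0 < ε)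
    (hf : ∀ i, HasMajorizedSeries (f i) ε (r i)) :
    HasMajorizedSeries (fun t => ∑ i, f i t) ε (∑ i, r i) := by
  simpa only [tsum_fintype] using tsum_apply hε hf Summable.of_finite

lemma add (hε : 0 < ε) (hf : HasMajorizedSeries f ε r) (hg : HasMajorizedSeries g ε r') :
    HasMajorizedSeries (fun t => f t + g t) ε (r + r') := by
  have := sum (f := ![f, g]) (r := ![r, r']) hε (by simp [Fin.forall_fin_two, hf, hg])
  simpa [Fin.sum_univ_two] using this

end HasMajorizedSeries

section HasMajorant

variable {Ω Ω' : Type*} [MeasurableSpace Ω] [MeasurableSpace Ω']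

/-- On `[0, ε)` the measures `κ t` are combinations of finitely many finite measures, with
nonnegative coefficients that are power series in `t`, and `κ'` is the combination of the same
measures with majorants of these power series as coefficients. -/
def HasMajorant (κ : ℝ → Measure Ω) (ε : ℝ) (κ' : Measure Ω) : Prop :=
  ∃ (ι : Type) (_ : Fintype ι) (m : ι → Measure Ω) (c : ι → ℝ → ℝ) (r : ι → ℝ),
    (∀ i, IsFiniteMeasure (m i)) ∧ (∀ i, 0 < r i) ∧ (∀ i, HasMajorizedSeries (c i) ε (r i)) ∧
    (∀ t ∈ Set.Ico 0 ε, ∀ i, 0 ≤ c i t) ∧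
    (∀ t ∈ Set.Ico 0 ε, κ t = Measure.sum fun i => ENNReal.ofReal (c i t) • m i) ∧
    κ' = Measure.sum fun i => ENNReal.ofReal (r i) • m i

namespace HasMajorant

variable {κ : ℝ → Measure Ω} {κ' : Measure Ω} {η : ℝ → Measure Ω'} {η' : Measure Ω'} {ε : ℝ}

lemma const (m : Measure Ω) [IsFiniteMeasure m] : HasMajorant (fun _ => m) ε m :=
  ⟨Unit, inferInstance, fun _ => m, fun _ _ => 1, fun _ => 1, fun _ => inferInstance,
    fun _ => one_pos, fun _ => by simpa using HasMajorizedSeries.affine ε 1 0,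
    fun _ _ _ => zero_le_one, fun _ _ => by simp, by simp⟩

lemma prod (hε : 0 ≤ ε) (hκ : HasMajorant κ ε κ') (hη : HasMajorant η ε η') :
    HasMajorant (fun t => (κ t).prod (η t)) ε (κ'.prod η') := by
  obtain ⟨ι, _, m, c, r, hm, hr, hc, hc_nonneg, hκ, hκ'⟩ := hκ
  obtain ⟨ι', _, n, e, s, hn, hs, he, he_nonneg, hη, hη'⟩ := hη
  have prod_sum_smul (b : ι → ℝ) (b' : ι' → ℝ) (hb : ∀ i, 0 ≤ b i) :
      (Measure.sum fun i => ENNReal.ofReal (b i) • m i).prod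
        (Measure.sum fun j => ENNReal.ofReal (b' j) • n j) =
      Measure.sum fun p : ι × ι' => ENNReal.ofReal (b p.1 * b' p.2) • (m p.1).prod (n p.2) := by
    rw [Measure.prod_sum]
    congr with p : 1
    rw [Measure.prod_smul_left, Measure.prod_smul_right, smul_smul, ENNReal.ofReal_mul (hb _)]
  refine ⟨ι × ι', inferInstance, fun p => (m p.1).prod (n p.2), fun p t => c p.1 t * e p.2 t,
    fun p => r p.1 * s p.2, inferInstance, fun p => mul_pos (hr _) (hs _),
    fun p => (hc _).mul hε (he _), fun t ht p => mul_nonneg (hc_nonneg t ht _) (he_nonneg t ht _),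
    fun t ht => ?_, ?_⟩
  · simp only [hκ t ht, hη t ht, prod_sum_smul _ _ (hc_nonneg t ht)]
  · rw [hκ', hη', prod_sum_smul _ _ fun i => (hr i).le]

lemma map (hκ : HasMajorant κ ε κ') {φ : Ω → Ω'} (hφ : Measurable φ) :
    HasMajorant (fun t => (κ t).map φ) ε (κ'.map φ) := by
  obtain ⟨ι, _, m, c, r, hm, hr, hc, hc_nonneg, hκ, hκ'⟩ := hκ
  refine ⟨ι, inferInstance, fun i => (m i).map φ, c, r, inferInstance, hr, hc, hc_nonneg,
    fun t ht => ?_, ?_⟩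
  · simp only [hκ t ht, Measure.map_sum hφ.aemeasurable, Measure.map_smul]
  · simp only [hκ', Measure.map_sum hφ.aemeasurable, Measure.map_smul]

lemma convPow {M : Type*} [Monoid M] [MeasurableSpace M] [MeasurableMul₂ M]
    {κ : ℝ → Measure M} {κ' : Measure M} (hε : 0 ≤ ε) (hκ : HasMajorant κ ε κ') (n : ℕ) :
    HasMajorant (fun t => _root_.convPow (κ t) n) ε (_root_.convPow κ' n) := by
  induction n with
  | zero => exact const (Measure.dirac 1)
  | succ n ih => exact (ih.prod hε hκ).map (by fun_prop)

lemma integral (hε : 0 < ε) (hκ : HasMajorant κ ε κ') {F : Ω → ℝ} (hF : Integrable F κ') :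
    HasMajorizedSeries (fun t => ∫ x, F x ∂κ t) ε (∫ x, |F x| ∂κ') := by
  obtain ⟨ι, _, m, c, r, _, hr, hc, hc_nonneg, hκ, rfl⟩ := hκ
  rw [Measure.sum_fintype, integrable_finsetSum_measure] at hF
  have hFm (i : ι) : Integrable F (m i) :=
    (integrable_smul_measure (by simpa using hr i) ENNReal.ofReal_ne_top).1
      (hF i (Finset.mem_univ i))
  have integral_sum_smul (b : ι → ℝ) (hb : ∀ i, 0 ≤ b i) (G : Ω → ℝ)
      (hG : ∀ i, Integrable G (m i)) :
      ∫ x, G x ∂(Measure.sum fun i => ENNReal.ofReal (b i) • m i) = ∑ i, b i * ∫ x, G x ∂m i := by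
    rw [Measure.sum_fintype, integral_finsetSum_measure fun i _ =>
      (hG i).smul_measure ENNReal.ofReal_ne_top]
    refine Finset.sum_congr rfl fun i _ => ?_
    rw [integral_smul_measure, ENNReal.toReal_ofReal (hb i), smul_eq_mul]
  rw [integral_sum_smul r (fun i => (hr i).le) _ fun i => (hFm i).abs]
  refine (HasMajorizedSeries.sum hε fun i => (hc i).mul_const hε.le (∫ x, F x ∂m i)).congr
    (fun t ht => ?_) |>.mono (Finset.sum_le_sum fun i _ => ?_)
  · simp only [hκ t ht, integral_sum_smul _ (hc_nonneg t ht) F hFm]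
  · gcongr
    exacts [(hr i).le, abs_integral_le_integral_abs]

end HasMajorant

end HasMajorant

/-! ### Second differences along a random walk -/

section SecondDifference

variable {M : Type*} [Monoid M] [MeasurableSpace M]

/-- The rate of growth of the averages of `φ` along the random walk driven by `κ`. For
`φ = log ‖·‖` this is the top Lyapunov exponent. -/
def growthRate (φ : M → ℝ) (κ : Measure M) : ℝ :=
  limUnder atTop fun n : ℕ => (n : ℝ)⁻¹ * ∫ g, φ g ∂convPow κ n

/-- The defect of additivity of `φ` under multiplication on both sides: for `x = (a, h, b)` it is
the effect of `b` on the change of `φ` caused by multiplying `h` by `a`. -/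
def secondDifference (φ : M → ℝ) (x : M × M × M) : ℝ :=
  φ (x.1 * x.2.1 * x.2.2) - φ (x.1 * x.2.1) - φ (x.2.1 * x.2.2) + φ x.2.1

/-- The law of the steps `(g, h, g')` when a walk of length `n` is extended by one step on both
sides. -/
def twoSidedStep (κ : Measure M) (n : ℕ) : Measure (M × M × M) :=
  κ.prod ((convPow κ n).prod κ)

lemma lintegral_twoSidedStep {κ : Measure M} [IsFiniteMeasure κ] {G : M → ℝ≥0∞}
    (hG : Measurable G) (n : ℕ) :
    ∫⁻ x, G x.2.1 ∂twoSidedStep κ n = κ Set.univ ^ 2 * ∫⁻ g, G g ∂convPow κ n := by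
  have h_inner : ∫⁻ p : M × M, G p.1 ∂(convPow κ n).prod κ =
      (∫⁻ g, G g ∂convPow κ n) * κ Set.univ := by
    simpa using lintegral_prod_mul (μ := convPow κ n) (ν := κ) hG.aemeasurable
      (aemeasurable_const (b := 1))
  have h_outer := lintegral_prod_mul (μ := κ) (ν := (convPow κ n).prod κ)
    (aemeasurable_const (b := 1)) (hG.comp measurable_fst).aemeasurable
  simp only [one_mul, lintegral_const, Function.comp_apply, h_inner] at h_outer
  rw [twoSidedStep, h_outer]
  ring

lemma integrable_twoSidedStep_of_expMoment_le {κ : Measure M} [IsFiniteMeasure κ]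
    {F : M × M × M → ℝ} (hF : Measurable F) {W : M → ℝ} (hW : Measurable W) {K α s : ℝ} {n : ℕ}
    (hK : 0 ≤ K) (hFW : ∀ᵐ x ∂twoSidedStep κ n, |F x| ≤ K * Real.exp (α * W x.2.1))
    (hs : expMoment α W (convPow κ n) ≤ ENNReal.ofReal s) (hs_nonneg : 0 ≤ s) :
    Integrable F (twoSidedStep κ n) ∧
      ∫ x, |F x| ∂twoSidedStep κ n ≤ K * (κ.real Set.univ ^ 2 * s) := by
  have hG := measurable_ofReal_exp_mul hW α
  have h_lintegral : ∫⁻ x, ENNReal.ofReal |F x| ∂twoSidedStep κ n ≤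
      ENNReal.ofReal (K * (κ.real Set.univ ^ 2 * s)) := by
    calc ∫⁻ x, ENNReal.ofReal |F x| ∂twoSidedStep κ n
        ≤ ∫⁻ x, ENNReal.ofReal K * ENNReal.ofReal (Real.exp (α * W x.2.1)) ∂twoSidedStep κ n :=
          lintegral_mono_ae <| hFW.mono fun x hx => by
            rw [← ENNReal.ofReal_mul hK]
            exact ENNReal.ofReal_le_ofReal hx
      _ = ENNReal.ofReal K * (κ Set.univ ^ 2 * expMoment α W (convPow κ n)) := by
          rw [lintegral_const_mul' _ _ ENNReal.ofReal_ne_top, lintegral_twoSidedStep hG, expMoment]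
      _ ≤ ENNReal.ofReal K * (κ Set.univ ^ 2 * ENNReal.ofReal s) := by gcongr
      _ = ENNReal.ofReal (K * (κ.real Set.univ ^ 2 * s)) := by
          rw [ENNReal.ofReal_mul hK, ENNReal.ofReal_mul (by positivity),
            ENNReal.ofReal_pow measureReal_nonneg, ofReal_measureReal]
  have hint : Integrable F (twoSidedStep κ n) := by
    refine ⟨hF.aestronglyMeasurable, ?_⟩
    rw [hasFiniteIntegral_iff_norm]
    exact h_lintegral.trans_lt ENNReal.ofReal_lt_top
  refine ⟨hint, ?_⟩
  rw [integral_eq_lintegral_of_nonneg_ae (.of_forall fun x => abs_nonneg _)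
    hint.abs.aestronglyMeasurable]
  exact ENNReal.toReal_le_of_le_ofReal (by positivity) h_lintegral

variable [MeasurableMul₂ M]

lemma measurable_secondDifference {φ : M → ℝ} (hφ : Measurable φ) :
    Measurable (secondDifference φ) := by
  unfold secondDifference
  fun_prop

lemma absolutelyContinuous_twoSidedStep {κ κ' : Measure M} [IsFiniteMeasure κ'] (h : κ ≪ κ')
    (n : ℕ) : twoSidedStep κ n ≪ twoSidedStep κ' n :=
  h.prod ((absolutelyContinuous_convPow h n).prod h)

lemma integral_secondDifference {κ : Measure M} [IsProbabilityMeasure κ] {φ : M → ℝ}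
    (hφ : ∀ n, Integrable φ (convPow κ n)) (n : ℕ) :
    ∫ x, secondDifference φ x ∂twoSidedStep κ n =
      (∫ g, φ g ∂convPow κ (n + 2) - ∫ g, φ g ∂convPow κ (n + 1)) -
        (∫ g, φ g ∂convPow κ (n + 1) - ∫ g, φ g ∂convPow κ n) := by
  have pull {k : ℕ} {p : M × M × M → M} (hp : MeasurePreserving p (twoSidedStep κ n)
      (convPow κ k)) : Integrable (fun x => φ (p x)) (twoSidedStep κ n) ∧
        ∫ x, φ (p x) ∂twoSidedStep κ n = ∫ g, φ g ∂convPow κ k := by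
    have hint := hp.map_eq.symm ▸ hφ k
    exact ⟨hint.comp_measurable hp.measurable, by
      rw [← integral_map hp.aemeasurable hint.aestronglyMeasurable, hp.map_eq]⟩
  have mul_right : MeasurePreserving (fun p : M × M => p.1 * p.2) ((convPow κ n).prod κ)
      (convPow κ (n + 1)) := ⟨by fun_prop, rfl⟩
  have mul_left (k : ℕ) : MeasurePreserving (fun p : M × M => p.1 * p.2)
      (κ.prod (convPow κ k)) (convPow κ (k + 1)) := ⟨by fun_prop, (convPow_succ' κ k).symm⟩
  obtain ⟨int_mid, mid⟩ := pull (measurePreserving_fst.comp measurePreserving_snd)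
  obtain ⟨int_right, right⟩ := pull (mul_right.comp measurePreserving_snd)
  obtain ⟨int_left, left⟩ :=
    pull ((mul_left n).comp ((MeasurePreserving.id κ).prod measurePreserving_fst))
  obtain ⟨int_both, both⟩ :=
    pull ((mul_left (n + 1)).comp ((MeasurePreserving.id κ).prod mul_right))
  simp only [Function.comp_apply, Prod.map, id, ← mul_assoc] at *
  rw [← both, ← left, ← mid]
  nth_rw 2 [left]
  rw [← right]
  simp only [secondDifference]
  have int_diff := int_both.sub int_left
  have int_diff₂ := int_diff.sub int_right
  simp only [Pi.sub_def] at int_diff int_diff₂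
  rw [integral_add int_diff₂ int_mid, integral_sub int_diff int_right,
    integral_sub int_both int_left]
  ring

lemma growthRate_eq_of_hasSum {κ : Measure M} [IsProbabilityMeasure κ] {φ : M → ℝ}
    (hφ : ∀ n, Integrable φ (convPow κ n)) {s : ℝ}
    (hs : HasSum (fun n => ∫ x, secondDifference φ x ∂twoSidedStep κ n) s) :
    growthRate φ κ = ∫ g, φ g ∂κ - ∫ g, φ g ∂Measure.dirac 1 + s := by
  set A : ℕ → ℝ := fun n => ∫ g, φ g ∂convPow κ n with hA
  have telescope (n : ℕ) : ∑ j ∈ Finset.range n, ∫ x, secondDifference φ x ∂twoSidedStep κ j =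
      (A (n + 1) - A n) - (A 1 - A 0) := by
    simp only [integral_secondDifference hφ]
    exact Finset.sum_range_sub (fun n => A (n + 1) - A n) n
  have h_step : Tendsto (fun n => A (n + 1) - A n) atTop (𝓝 (A 1 - A 0 + s)) := by
    simpa only [telescope, add_sub_cancel] using hs.tendsto_sum_nat.const_add (A 1 - A 0)
  have h_const : Tendsto (fun n : ℕ => (n : ℝ)⁻¹ * A 0) atTop (𝓝 0) := by
    simpa using tendsto_inv_atTop_nhds_zero_nat.mul_const (A 0)
  have h_rate := h_step.cesaro.add h_const
  simp only [Finset.sum_range_sub, ← mul_add, sub_add_cancel, add_zero] at h_rate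
  rw [growthRate, h_rate.limUnder_eq]
  simp only [hA, convPow_zero, convPow_one]

lemma hasMajorizedSeries_growthRate_of_hasMajorant {κ : ℝ → Measure M} {κ' : Measure M} {ε : ℝ}
    (hε : 0 < ε) (hκ : HasMajorant κ ε κ') (hprob : ∀ t ∈ Set.Ico 0 ε, IsProbabilityMeasure (κ t))
    {φ : M → ℝ} (hφ : ∀ t ∈ Set.Ico 0 ε, ∀ n, Integrable φ (convPow (κ t) n))
    (hφ' : Integrable φ κ') {s : ℕ → ℝ}
    (h_int : ∀ n, Integrable (secondDifference φ) (twoSidedStep κ' n))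
    (h_le : ∀ n, ∫ x, |secondDifference φ x| ∂twoSidedStep κ' n ≤ s n) (hs : Summable s) :
    ∃ r, HasMajorizedSeries (fun t => growthRate φ (κ t)) ε r := by
  have h_step (n : ℕ) : HasMajorant (fun t => twoSidedStep (κ t) n) ε (twoSidedStep κ' n) :=
    hκ.prod hε.le ((hκ.convPow hε.le n).prod hε.le hκ)
  have h_series (n : ℕ) : HasMajorizedSeries
      (fun t => ∫ x, secondDifference φ x ∂twoSidedStep (κ t) n) ε (s n) :=
    ((h_step n).integral hε (h_int n)).mono (h_le n)
  have h_tsum := HasMajorizedSeries.tsum_apply hε h_series hs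
  have h_const := HasMajorizedSeries.affine ε (-∫ g, φ g ∂Measure.dirac 1) 0
  refine ⟨_, (((hκ.integral hε hφ').add hε h_const).add hε h_tsum).congr fun t ht => ?_⟩
  have := hprob t ht
  have h_summable : Summable fun n => ∫ x, secondDifference φ x ∂twoSidedStep (κ t) n :=
    .of_norm_bounded hs fun n => (h_series n).abs_le ht
  dsimp only
  rw [growthRate_eq_of_hasSum (hφ t ht) h_summable.hasSum]
  ring

end SecondDifference

section Mixture

variable {Ω : Type*} [MeasurableSpace Ω]

/-- The segment `(1 - t) ν₀ + t ν₁`, for `t ∈ [0, 1]`. -/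
def mixture (ν₀ ν₁ : Measure Ω) (t : ℝ) : Measure Ω :=
  ENNReal.ofReal (1 - t) • ν₀ + ENNReal.ofReal t • ν₁

lemma isProbabilityMeasure_mixture (ν₀ ν₁ : Measure Ω) [IsProbabilityMeasure ν₀]
    [IsProbabilityMeasure ν₁] {t : ℝ} (ht₀ : 0 ≤ t) (ht₁ : t ≤ 1) :
    IsProbabilityMeasure (mixture ν₀ ν₁ t) where
  measure_univ := by
    simp [mixture, ← ENNReal.ofReal_add (sub_nonneg.2 ht₁) ht₀]

lemma absolutelyContinuous_smul_add_smul {ν₀ ν₁ : Measure Ω} (h : ν₁ ≪ ν₀) (b c : ℝ≥0∞) :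
    b • ν₀ + c • ν₁ ≪ ν₀ :=
  Measure.smul_absolutelyContinuous.add_left (Measure.smul_absolutelyContinuous.trans h)

lemma map_mixture {Ω' : Type*} [MeasurableSpace Ω'] {r : Ω → Ω'} (hr : Measurable r)
    (ν₀ ν₁ : Measure Ω) (t : ℝ) :
    (mixture ν₀ ν₁ t).map r = mixture (ν₀.map r) (ν₁.map r) t := by
  rw [mixture, Measure.map_add _ _ hr, Measure.map_smul, Measure.map_smul, mixture]

lemma hasMajorant_mixture (ν₀ ν₁ : Measure Ω) [IsFiniteMeasure ν₀] [IsFiniteMeasure ν₁] {ε : ℝ}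
    (hε : 0 < ε) (hε_le : ε ≤ 1) :
    HasMajorant (mixture ν₀ ν₁) ε
      (ν₀ + (ENNReal.ofReal ε • ν₀ + ENNReal.ofReal ε • ν₁)) := by
  refine ⟨Bool, inferInstance, fun i => cond i ν₀ ν₁, fun i t => cond i (1 - t) t,
    fun i => cond i (1 + ε) ε, by simpa using ⟨inferInstance, inferInstance⟩,
    by simpa using ⟨hε, by linarith⟩, ?_, ?_, fun t _ => ?_, ?_⟩
  · rintro (_ | _)
    · simpa using HasMajorizedSeries.affine ε 0 1
    · simpa [sub_eq_add_neg] using HasMajorizedSeries.affine ε 1 (-1)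
  · simpa using fun _ ht₀ ht => ⟨ht₀, (ht.trans_le hε_le).le⟩
  · simp [Measure.sum_fintype, mixture]
  · simp [Measure.sum_fintype, ENNReal.ofReal_add zero_le_one hε.le, add_smul, add_assoc]

end Mixture

theorem exists_hasMajorizedSeries_growthRate {M : Type*} [Monoid M] [MeasurableSpace M]
    [MeasurableMul₂ M] {ν₀ ν₁ : Measure M} [IsProbabilityMeasure ν₀] [IsProbabilityMeasure ν₁]
    (hν₁ : ν₁ ≪ ν₀) {φ W : M → ℝ} (hφ : Measurable φ) (hW : Measurable W)
    (hφ_bdd : ∀ n, ∃ B, ∀ᵐ g ∂convPow ν₀ n, |φ g| ≤ B) {K c : ℝ} (hK : 0 ≤ K) (hc : 0 < c)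
    (hW_rate : HasRobustExpRate ν₀ (fun g (_ : Unit) => W g) Set.univ (-c))
    (hφW : ∀ n, ∀ α ∈ Set.Ioc (0 : ℝ) 1, ∀ᵐ x ∂twoSidedStep ν₀ n,
      |secondDifference φ x| ≤ K * Real.exp (α * W x.2.1)) :
    ∃ ε > 0, ε ≤ 1 ∧ ∃ r, HasMajorizedSeries (fun t => growthRate φ (mixture ν₀ ν₁ t)) ε r := by
  have hφ_int {κ : Measure M} [IsFiniteMeasure κ] (hκ : κ ≪ ν₀) (n : ℕ) :
      Integrable φ (convPow κ n) := by
    obtain ⟨B, hB⟩ := hφ_bdd n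
    exact .of_bound hφ.aestronglyMeasurable B ((absolutelyContinuous_convPow hκ n).ae_le hB)
  obtain ⟨α₀, hα₀, hW_rate⟩ := hW_rate
  obtain ⟨θ, hθ, hW_rate⟩ := hW_rate (min α₀ 1) (by positivity) (min_le_left _ _)
  set α := min α₀ 1
  have hα_pos : 0 < α := by positivity
  set ε := min (θ / 2) 1
  have hε : 0 < ε := by positivity
  have hε_le : ε ≤ 1 := min_le_right _ _
  set τ := ENNReal.ofReal ε • ν₀ + ENNReal.ofReal ε • ν₁
  have hτ_fin : IsFiniteMeasure τ := ⟨by simp [τ]⟩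
  have hτ : τ ≪ ν₀ := absolutelyContinuous_smul_add_smul hν₁ _ _
  have hτθ : τ.real Set.univ ≤ θ := by
    have : ε ≤ θ / 2 := min_le_left _ _
    rw [measureReal_def, show τ Set.univ = ENNReal.ofReal (ε + ε) by
      simp [τ, ENNReal.ofReal_add hε.le hε.le], ENNReal.toReal_ofReal (by positivity)]
    linarith
  obtain ⟨C, hC, h_moment⟩ := hW_rate τ hτ_fin hτ hτθ
  have h_bound (n : ℕ) := integrable_twoSidedStep_of_expMoment_le
    (measurable_secondDifference hφ) hW hK
    ((absolutelyContinuous_twoSidedStep (absolutelyContinuous_add_right_self hτ) n).ae_le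
      (hφW n α ⟨hα_pos, min_le_right _ _⟩)) (h_moment n () trivial) (by positivity)
  have h_summable : Summable fun n : ℕ =>
      K * ((ν₀ + τ).real Set.univ ^ 2 * (C * Real.exp (n * (α * -c)))) := by
    refine ((Real.summable_exp_nat_mul_iff.2 ?_).mul_left C).mul_left _ |>.mul_left K
    nlinarith
  refine ⟨ε, hε, hε_le, hasMajorizedSeries_growthRate_of_hasMajorant hε
    (hasMajorant_mixture ν₀ ν₁ hε hε_le)
    (fun t ht => isProbabilityMeasure_mixture ν₀ ν₁ ht.1 (ht.2.le.trans hε_le))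
    (fun t ht => ?_) ?_ (fun n => (h_bound n).1) (fun n => (h_bound n).2) h_summable⟩
  · have := isProbabilityMeasure_mixture ν₀ ν₁ ht.1 (ht.2.le.trans hε_le)
    exact hφ_int (absolutelyContinuous_smul_add_smul hν₁ _ _)
  · simpa only [convPow_one] using hφ_int (absolutelyContinuous_add_right_self hτ) 1

/-! ### Areas and the gap between the two largest singular values -/

section Area

variable {U : Type*} [NormedAddCommGroup U] [InnerProductSpace ℝ U]

/-- The squared area of the parallelogram spanned by two vectors. -/
def sqArea (x y : U) : ℝ := ‖x‖ ^ 2 * ‖y‖ ^ 2 - inner ℝ x y ^ 2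

lemma sqArea_le (x y : U) : sqArea x y ≤ ‖x‖ ^ 2 * ‖y‖ ^ 2 :=
  sub_le_self _ (sq_nonneg _)

lemma sqArea_of_inner_eq_zero {x y : U} (h : inner ℝ x y = 0) :
    sqArea x y = ‖x‖ ^ 2 * ‖y‖ ^ 2 := by
  simp [sqArea, h]

lemma sqArea_smul_smul (a b : ℝ) (x y : U) :
    sqArea (a • x) (b • y) = a ^ 2 * b ^ 2 * sqArea x y := by
  simp only [sqArea, norm_smul, real_inner_smul_left, real_inner_smul_right, mul_pow,
    Real.norm_eq_abs, sq_abs]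
  ring

lemma sqArea_sub_smul (x y : U) (c : ℝ) : sqArea x (y - c • x) = sqArea x y := by
  rw [sqArea, sqArea, norm_sub_sq_real, inner_sub_right, real_inner_smul_right,
    real_inner_smul_right, norm_smul, mul_pow, Real.norm_eq_abs, sq_abs,
    real_inner_self_eq_norm_sq, real_inner_comm y x]
  ring

lemma exists_inner_sub_smul_eq_zero (x y : U) : ∃ c : ℝ, inner ℝ x (y - c • x) = 0 := by
  rcases eq_or_ne x 0 with rfl | hx
  · exact ⟨0, inner_zero_left _⟩
  · refine ⟨inner ℝ x y / ‖x‖ ^ 2, ?_⟩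
    rw [inner_sub_right, real_inner_smul_right, real_inner_self_eq_norm_sq,
      div_mul_cancel₀ _ (pow_ne_zero 2 (norm_ne_zero_iff.2 hx)), sub_self]

lemma IsBilipschitz.sqArea_le_mul_sqArea_apply {C : ℝ} {g : U →L[ℝ] U} (hg : IsBilipschitz C g)
    (x y : U) : sqArea x y ≤ C ^ 4 * sqArea (g x) (g y) := by
  obtain ⟨c, hc⟩ := exists_inner_sub_smul_eq_zero (g x) (g y)
  rw [← map_smul, ← map_sub] at hc
  calc sqArea x y = sqArea x (y - c • x) := (sqArea_sub_smul x y c).symm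
    _ ≤ ‖x‖ ^ 2 * ‖y - c • x‖ ^ 2 := sqArea_le _ _
    _ ≤ (C * ‖g x‖) ^ 2 * (C * ‖g (y - c • x)‖) ^ 2 := by
      gcongr
      exacts [hg.le_mul_norm _, hg.le_mul_norm _]
    _ = C ^ 4 * (‖g x‖ ^ 2 * ‖g (y - c • x)‖ ^ 2) := by ring
    _ = C ^ 4 * sqArea (g x) (g y) := by
      rw [← sqArea_of_inner_eq_zero hc, map_sub, map_smul, sqArea_sub_smul]

/-- The largest area of the image of a unit square, that is, the product of the two largest
singular values of `g`. It is the coordinate-free form of `N2`. -/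
def maxArea (g : U →L[ℝ] U) : ℝ :=
  sSup {x | ∃ p q : U, ‖p‖ = 1 ∧ ‖q‖ = 1 ∧ inner ℝ p q = 0 ∧ x = √(sqArea (g p) (g q))}

lemma sqrt_sqArea_apply_le (g : U →L[ℝ] U) {p q : U} (hp : ‖p‖ = 1) (hq : ‖q‖ = 1) :
    √(sqArea (g p) (g q)) ≤ ‖g‖ ^ 2 := by
  refine Real.sqrt_le_iff.2 ⟨by positivity, (sqArea_le _ _).trans ?_⟩
  rw [sq (‖g‖ ^ 2)]
  gcongr
  exacts [g.unit_le_opNorm p hp.le, g.unit_le_opNorm q hq.le]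

lemma maxArea_nonneg (g : U →L[ℝ] U) : 0 ≤ maxArea g := by
  refine Real.sSup_nonneg ?_
  rintro _ ⟨p, q, -, -, -, rfl⟩
  positivity

lemma maxArea_le_norm_sq (g : U →L[ℝ] U) : maxArea g ≤ ‖g‖ ^ 2 := by
  refine Real.sSup_le ?_ (by positivity)
  rintro _ ⟨p, q, hp, hq, -, rfl⟩
  exact sqrt_sqArea_apply_le g hp hq

lemma sqrt_sqArea_apply_le_maxArea (g : U →L[ℝ] U) {p q : U} (hp : ‖p‖ = 1) (hq : ‖q‖ = 1)
    (hpq : inner ℝ p q = 0) : √(sqArea (g p) (g q)) ≤ maxArea g := by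
  refine le_csSup ⟨‖g‖ ^ 2, ?_⟩ ⟨p, q, hp, hq, hpq, rfl⟩
  rintro _ ⟨p, q, hp, hq, -, rfl⟩
  exact sqrt_sqArea_apply_le g hp hq

lemma sqArea_apply_le (g : U →L[ℝ] U) (x y : U) :
    sqArea (g x) (g y) ≤ maxArea g ^ 2 * sqArea x y := by
  obtain ⟨c, hc⟩ := exists_inner_sub_smul_eq_zero x y
  rw [← sqArea_sub_smul x y c, ← sqArea_sub_smul (g x) (g y) c, ← map_smul, ← map_sub]
  generalize y - c • x = z at hc
  rcases eq_or_ne x 0 with rfl | hx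
  · simp [sqArea]
  rcases eq_or_ne z 0 with rfl | hz
  · simp [sqArea]
  have h_unit : sqArea (g (‖x‖⁻¹ • x)) (g (‖z‖⁻¹ • z)) ≤ maxArea g ^ 2 :=
    (Real.sqrt_le_left (maxArea_nonneg g)).1 (sqrt_sqArea_apply_le_maxArea g
      (norm_smul_inv_norm hx) (norm_smul_inv_norm hz)
      (by rw [real_inner_smul_left, real_inner_smul_right, hc, mul_zero, mul_zero]))
  rw [map_smul, map_smul, sqArea_smul_smul, ← mul_pow, ← mul_inv, inv_pow,
    inv_mul_le_iff₀ (by positivity), mul_pow] at h_unit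
  rwa [sqArea_of_inner_eq_zero hc, mul_comm]

lemma maxArea_mul_le (g h : U →L[ℝ] U) : maxArea (g * h) ≤ maxArea g * maxArea h := by
  have h_nonneg := mul_nonneg (maxArea_nonneg g) (maxArea_nonneg h)
  refine Real.sSup_le ?_ h_nonneg
  rintro _ ⟨p, q, hp, hq, hpq, rfl⟩
  refine Real.sqrt_le_iff.2 ⟨h_nonneg, ?_⟩
  calc sqArea (g (h p)) (g (h q)) ≤ maxArea g ^ 2 * sqArea (h p) (h q) := sqArea_apply_le g _ _
    _ ≤ maxArea g ^ 2 * (maxArea h ^ 2 * sqArea p q) := by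
      gcongr
      exact sqArea_apply_le h p q
    _ = (maxArea g * maxArea h) ^ 2 := by
      rw [sqArea_of_inner_eq_zero hpq, hp, hq]
      ring

lemma measurable_maxArea : Measurable (maxArea : (U →L[ℝ] U) → ℝ) := by
  let I := {w : U × U // ‖w.1‖ = 1 ∧ ‖w.2‖ = 1 ∧ inner ℝ w.1 w.2 = 0}
  have eq_iSup : (maxArea : (U →L[ℝ] U) → ℝ) =
      fun g => ⨆ w : I, √(sqArea (g w.1.1) (g w.1.2)) := by
    funext g
    refine congrArg sSup (Set.ext fun x => ⟨?_, ?_⟩)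
    · rintro ⟨p, q, hp, hq, hpq, rfl⟩
      exact ⟨⟨(p, q), hp, hq, hpq⟩, rfl⟩
    · rintro ⟨⟨⟨p, q⟩, hp, hq, hpq⟩, rfl⟩
      exact ⟨p, q, hp, hq, hpq, rfl⟩
  rw [eq_iSup]
  refine (lowerSemicontinuous_ciSup (fun g => ⟨‖g‖ ^ 2, ?_⟩) fun w => ?_).measurable
  · rintro _ ⟨⟨_, hp, hq, -⟩, rfl⟩
    exact sqrt_sqArea_apply_le g hp hq
  · refine Continuous.lowerSemicontinuous ?_
    unfold sqArea
    fun_prop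

variable [FiniteDimensional ℝ U] {C : ℝ} {g : U →L[ℝ] U}

lemma IsBilipschitz.one_le_sq_mul_maxArea (hU : 2 ≤ Module.finrank ℝ U)
    (hg : IsBilipschitz C g) : 1 ≤ C ^ 2 * maxArea g := by
  let e := stdOrthonormalBasis ℝ U
  let p := e ⟨0, by omega⟩
  let q := e ⟨1, by omega⟩
  have hp : ‖p‖ = 1 := e.orthonormal.1 _
  have hq : ‖q‖ = 1 := e.orthonormal.1 _
  have hpq : inner ℝ p q = 0 := e.orthonormal.2 (by simp)
  rw [← one_le_sq_iff₀ (mul_nonneg (sq_nonneg C) (maxArea_nonneg g))]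
  calc 1 = sqArea p q := by simp [sqArea_of_inner_eq_zero hpq, hp, hq]
    _ ≤ C ^ 4 * sqArea (g p) (g q) := hg.sqArea_le_mul_sqArea_apply p q
    _ ≤ C ^ 4 * (maxArea g ^ 2 * sqArea p q) := by
      gcongr
      exact sqArea_apply_le g p q
    _ = (C ^ 2 * maxArea g) ^ 2 := by
      rw [sqArea_of_inner_eq_zero hpq, hp, hq]
      ring

lemma IsBilipschitz.maxArea_pos (hU : 2 ≤ Module.finrank ℝ U) (hg : IsBilipschitz C g) :
    0 < maxArea g :=
  pos_of_mul_pos_right (zero_lt_one.trans_le (hg.one_le_sq_mul_maxArea hU)) (sq_nonneg C)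

lemma IsBilipschitz.abs_log_maxArea_le (hU : 2 ≤ Module.finrank ℝ U) (hg : IsBilipschitz C g) :
    |Real.log (maxArea g)| ≤ 2 * Real.log C := by
  have := abs_log_le_log (hg.maxArea_pos hU)
    ((maxArea_le_norm_sq g).trans (pow_le_pow_left₀ (norm_nonneg g) hg.norm_le 2))
    (hg.one_le_sq_mul_maxArea hU)
  rwa [Real.log_pow] at this

lemma isBoundedSubcocycle_log_maxArea (hU : 2 ≤ Module.finrank ℝ U) {ν : Measure (U →L[ℝ] U)}
    [IsProbabilityMeasure ν] (hν : ∀ᵐ g ∂ν, IsBilipschitz C g) :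
    IsBoundedSubcocycle ν (fun g (_ : Unit) => Real.log (maxArea g)) Set.univ
      (2 * Real.log C) :=
  isBoundedSubcocycle_log measurable_maxArea (fun _ ⟨_, hg⟩ => hg.maxArea_pos hU)
    maxArea_mul_le zero_le_two (fun _ _ hg => hg.abs_log_maxArea_le hU) hν

end Area

section Fekete

variable {M : Type*} [Monoid M] [MeasurableSpace M] [MeasurableMul₂ M] {ν : Measure M}
  [IsProbabilityMeasure ν] {ψ : M → ℝ} {B : ℝ}

namespace IsBoundedSubcocycle

lemma subadditive_integral
    (hψ : IsBoundedSubcocycle ν (fun g (_ : Unit) => ψ g) Set.univ B) :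
    Subadditive fun n => ∫ g, ψ g ∂convPow ν n := by
  intro m n
  obtain ⟨S, hS, hνS, -, hsub⟩ := hψ.exists_submonoid
  have hνS := ae_convPow_mem_submonoid hS hνS
  have h_int (n : ℕ) : Integrable ψ (convPow ν n) := hψ.integrable n (Set.mem_univ ())
  have h_fst : Integrable (fun p : M × M => ψ p.1) ((convPow ν m).prod (convPow ν n)) :=
    (h_int m).comp_fst _
  have h_snd : Integrable (fun p : M × M => ψ p.2) ((convPow ν m).prod (convPow ν n)) :=
    (h_int n).comp_snd _
  calc ∫ g, ψ g ∂convPow ν (m + n)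
      = ∫ p, ψ (p.1 * p.2) ∂(convPow ν m).prod (convPow ν n) :=
        (integral_mul_prod_convPow (h_int _)).symm
    _ ≤ ∫ p, (ψ p.1 + ψ p.2) ∂(convPow ν m).prod (convPow ν n) := by
        refine integral_mono_ae (integrable_mul_prod_convPow (h_int _)) (h_fst.add h_snd) ?_
        filter_upwards [Measure.quasiMeasurePreserving_fst.ae (hνS m),
          Measure.quasiMeasurePreserving_snd.ae (hνS n)] with p hp₁ hp₂
        exact hsub _ hp₁ _ hp₂ () trivial
    _ = ∫ g, ψ g ∂convPow ν m + ∫ g, ψ g ∂convPow ν n := by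
        rw [integral_add h_fst h_snd, integral_fun_fst, integral_fun_snd]
        simp

lemma abs_integral_le (hψ : IsBoundedSubcocycle ν (fun g (_ : Unit) => ψ g) Set.univ B)
    (n : ℕ) : |∫ g, ψ g ∂convPow ν n| ≤ n * B :=
  abs_integral_le_of_ae_abs_le ((hψ.ae_abs_le n).mono fun _ hg => hg () trivial)

lemma bddBelow_range_integral_div
    (hψ : IsBoundedSubcocycle ν (fun g (_ : Unit) => ψ g) Set.univ B) :
    BddBelow (Set.range fun n : ℕ => (∫ g, ψ g ∂convPow ν n) / n) := by
  refine ⟨-B, ?_⟩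
  rintro _ ⟨n, rfl⟩
  refine (abs_le.1 ?_).1
  rw [abs_div, Nat.abs_cast]
  exact div_le_of_le_mul₀ n.cast_nonneg hψ.nonneg (by simpa [mul_comm] using hψ.abs_integral_le n)

lemma growthRate_eq_lim (hψ : IsBoundedSubcocycle ν (fun g (_ : Unit) => ψ g) Set.univ B) :
    growthRate ψ ν = hψ.subadditive_integral.lim := by
  refine Tendsto.limUnder_eq ?_
  simpa only [div_eq_inv_mul] using
    hψ.subadditive_integral.tendsto_lim hψ.bddBelow_range_integral_div

lemma tendsto_growthRate (hψ : IsBoundedSubcocycle ν (fun g (_ : Unit) => ψ g) Set.univ B) :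
    Tendsto (fun n : ℕ => (∫ g, ψ g ∂convPow ν n) / n) atTop (𝓝 (growthRate ψ ν)) := by
  rw [hψ.growthRate_eq_lim]
  exact hψ.subadditive_integral.tendsto_lim hψ.bddBelow_range_integral_div

lemma mul_growthRate_le_integral
    (hψ : IsBoundedSubcocycle ν (fun g (_ : Unit) => ψ g) Set.univ B) (n : ℕ) :
    n * growthRate ψ ν ≤ ∫ g, ψ g ∂convPow ν n := by
  rcases n.eq_zero_or_pos with rfl | hn
  · simpa using (abs_nonpos_iff.1 (by simpa using hψ.abs_integral_le 0)).ge
  · have := hψ.subadditive_integral.lim_le_div hψ.bddBelow_range_integral_div hn.ne'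
    rwa [← hψ.growthRate_eq_lim, le_div_iff₀' (by exact_mod_cast hn)] at this

lemma hasRobustExpRate_of_growthRate_lt
    (hψ : IsBoundedSubcocycle ν (fun g (_ : Unit) => ψ g) Set.univ B) {b : ℝ}
    (hb : growthRate ψ ν < b) :
    HasRobustExpRate ν (fun g (_ : Unit) => ψ g) Set.univ b := by
  obtain ⟨b', hb', hbb'⟩ := exists_between hb
  obtain ⟨m, hm, hm_pos⟩ :=
    ((hψ.tendsto_growthRate.eventually (gt_mem_nhds hb')).and (eventually_gt_atTop 0)).exists
  refine hψ.hasRobustExpRate hm_pos.ne' hbb' fun _ _ => ?_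
  rw [div_lt_iff₀' (by exact_mod_cast hm_pos)] at hm
  exact hm.le

end IsBoundedSubcocycle

end Fekete

section LyapunovGap

variable {U : Type*} [NormedAddCommGroup U] [InnerProductSpace ℝ U]

/-- The logarithm of the ratio of the two largest singular values of `g`. -/
def logGap (g : U →L[ℝ] U) : ℝ := Real.log (maxArea g) - 2 * Real.log ‖g‖

lemma measurable_logGap : Measurable (logGap : (U →L[ℝ] U) → ℝ) :=
  measurable_maxArea.log.sub (measurable_norm.log.const_mul 2)

variable [FiniteDimensional ℝ U] {ν : Measure (U →L[ℝ] U)} [IsProbabilityMeasure ν] {C : ℝ}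

lemma exists_hasRobustExpRate_logGap (hU : 2 ≤ Module.finrank ℝ U)
    (hν : ∀ᵐ g ∂ν, IsBilipschitz C g)
    (hgap : growthRate (fun g => Real.log (maxArea g)) ν <
      2 * growthRate (fun g => Real.log ‖g‖) ν) :
    ∃ c > 0, HasRobustExpRate ν (fun g (_ : Unit) => logGap g) Set.univ (-c) := by
  have : Nontrivial U := Module.nontrivial_of_finrank_pos (R := ℝ) (by omega)
  obtain ⟨b, hb, hb_lt⟩ := exists_between hgap
  obtain ⟨l, hl, hl_lt⟩ := exists_between (a₁ := b / 2)
    (a₂ := growthRate (fun g => Real.log ‖g‖) ν) (by linarith)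
  have h_area := (isBoundedSubcocycle_log_maxArea hU hν).hasRobustExpRate_of_growthRate_lt hb
  have h_norm := (hasRobustExpRate_neg_log_norm hν hl_lt
    (isBoundedSubcocycle_log_norm hν).mul_growthRate_le_integral).const_mul two_pos
  refine ⟨2 * l - b, by linarith, ?_⟩
  convert h_area.add (fun _ => measurable_maxArea.log) (fun _ => by fun_prop) h_norm using 1
  · simp only [logGap, sub_eq_add_neg, mul_neg]
  · ring

end LyapunovGap

/-! ### Second differences of the logarithm of the norm -/

lemma abs_log_sub_log_le {x y m : ℝ} (hm : 0 < m) (hx : m ≤ x) (hy : m ≤ y) :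
    |Real.log x - Real.log y| ≤ |x - y| / m := by
  wlog hxy : y ≤ x generalizing x y
  · rw [abs_sub_comm, abs_sub_comm x]
    exact this hy hx (le_of_not_ge hxy)
  have hy_pos := hm.trans_le hy
  have hx_pos := hm.trans_le hx
  rw [abs_of_nonneg (sub_nonneg.2 (Real.log_le_log hy_pos hxy)), abs_of_nonneg (sub_nonneg.2 hxy),
    ← Real.log_div hx_pos.ne' hy_pos.ne']
  calc Real.log (x / y) ≤ x / y - 1 := Real.log_le_sub_one_of_pos (by positivity)
    _ = (x - y) / y := by rw [sub_div, div_self hy_pos.ne']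
    _ ≤ (x - y) / m := div_le_div_of_nonneg_left (sub_nonneg.2 hxy) hm hy

section BilipschitzNorm

variable {U V : Type*} [NormedAddCommGroup U] [NormedSpace ℝ U] [NormedAddCommGroup V]
  [NormedSpace ℝ V] {C : ℝ} {g : U →L[ℝ] U}

lemma IsBilipschitz.norm_le_mul_norm_comp (hg : IsBilipschitz C g) (Z : V →L[ℝ] U) :
    ‖Z‖ ≤ C * ‖g ∘L Z‖ := by
  have hC := zero_le_one.trans hg.one_le
  refine Z.opNorm_le_bound (by positivity) fun v => ?_
  rw [mul_assoc]
  exact (hg.le_mul_norm _).trans (by gcongr; exact (g ∘L Z).le_opNorm v)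

variable [FiniteDimensional ℝ U]

lemma IsBilipschitz.surjective (hg : IsBilipschitz C g) : Function.Surjective g := by
  refine (LinearMap.injective_iff_surjective (f := g.toLinearMap)).1 ?_
  refine (injective_iff_map_eq_zero g.toLinearMap).2 fun v hv => ?_
  by_contra h0
  exact hg.apply_ne_zero h0 hv

lemma IsBilipschitz.norm_le_mul_norm_comp_right (hg : IsBilipschitz C g) (Z : U →L[ℝ] V) :
    ‖Z‖ ≤ C * ‖Z ∘L g‖ := by
  have hC := zero_le_one.trans hg.one_le
  refine Z.opNorm_le_bound (by positivity) fun w => ?_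
  obtain ⟨v, rfl⟩ := hg.surjective w
  calc ‖Z (g v)‖ ≤ ‖Z ∘L g‖ * ‖v‖ := (Z ∘L g).le_opNorm v
    _ ≤ ‖Z ∘L g‖ * (C * ‖g v‖) := by gcongr; exact hg.le_mul_norm v
    _ = C * ‖Z ∘L g‖ * ‖g v‖ := by ring

lemma abs_log_norm_mul_mul_sub_le {a b X Y : U →L[ℝ] U} (ha : IsBilipschitz C a)
    (hb : IsBilipschitz C b) (hX : 0 < ‖X‖) (hXY : ‖X‖ = ‖Y‖) :
    |Real.log ‖a * X * b‖ - Real.log ‖a * Y * b‖| ≤ C ^ 4 * (‖X - Y‖ / ‖X‖) := by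
  have hC := zero_lt_one.trans_le ha.one_le
  have h_lower (Z : U →L[ℝ] U) : ‖Z‖ / C ^ 2 ≤ ‖a * Z * b‖ := by
    rw [div_le_iff₀' (by positivity), sq, mul_assoc]
    calc ‖Z‖ ≤ C * ‖a * Z‖ := ha.norm_le_mul_norm_comp Z
      _ ≤ C * (C * ‖a * Z * b‖) := by gcongr; exact hb.norm_le_mul_norm_comp_right (a * Z)
  have h_upper : ‖a * X * b - a * Y * b‖ ≤ C ^ 2 * ‖X - Y‖ := by
    rw [← sub_mul, ← mul_sub]
    calc ‖a * (X - Y) * b‖ ≤ ‖a‖ * ‖X - Y‖ * ‖b‖ := norm_mul₃_le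
      _ ≤ C * ‖X - Y‖ * C := by gcongr; exacts [ha.norm_le, hb.norm_le]
      _ = C ^ 2 * ‖X - Y‖ := by ring
  calc |Real.log ‖a * X * b‖ - Real.log ‖a * Y * b‖|
      ≤ |‖a * X * b‖ - ‖a * Y * b‖| / (‖X‖ / C ^ 2) :=
        abs_log_sub_log_le (by positivity) (h_lower X) (hXY ▸ h_lower Y)
    _ ≤ C ^ 2 * ‖X - Y‖ / (‖X‖ / C ^ 2) := by
        gcongr
        exact (abs_norm_sub_norm_le _ _).trans h_upper
    _ = C ^ 4 * (‖X - Y‖ / ‖X‖) := by field_simp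

lemma secondDifference_log_norm_smulRight {a b : U →L[ℝ] U} (ha : IsBilipschitz C a)
    (hb : IsBilipschitz C b) {c : U →L[ℝ] ℝ} (hc : c ≠ 0) {u : U} (hu : u ≠ 0) :
    secondDifference (fun g : U →L[ℝ] U => Real.log ‖g‖) (a, c.smulRight u, b) = 0 := by
  have h_left : a * c.smulRight u = c.smulRight (a u) := by ext w; simp
  have h_right (w : U) : c.smulRight w * b = (c ∘L b).smulRight w := by ext w; simp
  have hcb : ‖c ∘L b‖ ≠ 0 := fun h0 =>
    hc (norm_le_zero_iff.1 (by simpa [h0] using hb.norm_le_mul_norm_comp_right c))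
  have hau := norm_ne_zero_iff.2 (ha.apply_ne_zero hu)
  rw [← norm_ne_zero_iff] at hc hu
  simp only [secondDifference, h_left, h_right, ContinuousLinearMap.norm_smulRight_apply,
    Real.log_mul hcb hau, Real.log_mul hc hau, Real.log_mul hcb hu, Real.log_mul hc hu]
  ring

end BilipschitzNorm

lemma exists_norm_eq_one_norm_apply_eq {U V : Type*} [NormedAddCommGroup U] [NormedSpace ℝ U]
    [FiniteDimensional ℝ U] [Nontrivial U] [NormedAddCommGroup V] [NormedSpace ℝ V]
    (h : U →L[ℝ] V) : ∃ v : U, ‖v‖ = 1 ∧ ‖h v‖ = ‖h‖ := by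
  have : ProperSpace U := FiniteDimensional.proper ℝ U
  obtain ⟨v, hv, h_eq⟩ := (isCompact_sphere (0 : U) 1).exists_sSup_image_eq
    (NormedSpace.sphere_nonempty.2 zero_le_one) h.continuous.norm.continuousOn
  exact ⟨v, mem_sphere_zero_iff_norm.1 hv, h_eq.symm.trans h.sSup_sphere_eq_norm⟩

lemma inner_apply_apply_of_norm_apply_eq {U V : Type*} [NormedAddCommGroup U]
    [InnerProductSpace ℝ U] [CompleteSpace U] [NormedAddCommGroup V] [InnerProductSpace ℝ V]
    [CompleteSpace V] {h : U →L[ℝ] V} {v : U} (hv : ‖h v‖ = ‖h‖ * ‖v‖) (w : U) :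
    inner ℝ (h v) (h w) = ‖h‖ ^ 2 * inner ℝ v w := by
  have h_eigen : h.adjoint (h v) = ‖h‖ ^ 2 • v := by
    rw [← sub_eq_zero, ← norm_eq_zero, ← sq_eq_zero_iff]
    refine le_antisymm ?_ (sq_nonneg _)
    have h_le : ‖h.adjoint (h v)‖ ≤ ‖h‖ * (‖h‖ * ‖v‖) := by
      simpa [hv] using h.adjoint.le_opNorm (h v)
    have h_le_sq := pow_le_pow_left₀ (norm_nonneg _) h_le 2
    rw [norm_sub_sq_real, real_inner_smul_right, ContinuousLinearMap.adjoint_inner_left,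
      real_inner_self_eq_norm_sq, norm_smul, norm_pow, norm_norm, hv]
    linarith
  rw [← ContinuousLinearMap.adjoint_inner_left, h_eigen, real_inner_smul_left]

section RankOne

variable {U : Type*} [NormedAddCommGroup U] [InnerProductSpace ℝ U] [FiniteDimensional ℝ U]
  {C : ℝ} {a b h : U →L[ℝ] U}

lemma exists_norm_sub_smulRight_le [Nontrivial U] (hh : h ≠ 0) :
    ∃ (c : U →L[ℝ] ℝ) (u : U), ‖c‖ = 1 ∧ ‖u‖ = ‖h‖ ∧
      ‖h - c.smulRight u‖ ≤ maxArea h / ‖h‖ := by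
  obtain ⟨v, hv, hv_max⟩ := exists_norm_eq_one_norm_apply_eq h
  have hh_pos := norm_pos_iff.2 hh
  refine ⟨innerSL ℝ v, h v, by rw [innerSL_apply_norm, hv], hv_max, ?_⟩
  have h_area := maxArea_nonneg h
  refine ContinuousLinearMap.opNorm_le_bound _ (by positivity) fun w => ?_
  set z := w - inner ℝ v w • v with hz
  have hvz : inner ℝ v z = 0 := by
    simp [hz, inner_sub_right, real_inner_smul_right, hv]
  have h_orthogonal : inner ℝ (h v) (h z) = 0 := by
    rw [inner_apply_apply_of_norm_apply_eq (by rw [hv_max, hv, mul_one]), hvz, mul_zero]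
  have h_apply : (h - (innerSL ℝ v).smulRight (h v)) w = h z := by simp [hz]
  rw [h_apply, div_mul_eq_mul_div, le_div_iff₀' hh_pos]
  refine le_of_sq_le_sq ?_ (by positivity)
  calc (‖h‖ * ‖h z‖) ^ 2 = sqArea (h v) (h z) := by
        rw [sqArea_of_inner_eq_zero h_orthogonal, hv_max, mul_pow]
    _ ≤ maxArea h ^ 2 * sqArea v z := sqArea_apply_le h v z
    _ = maxArea h ^ 2 * sqArea v w := by rw [hz, sqArea_sub_smul]
    _ ≤ maxArea h ^ 2 * (‖v‖ ^ 2 * ‖w‖ ^ 2) := by gcongr; exact sqArea_le v w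
    _ = (maxArea h * ‖w‖) ^ 2 := by rw [hv]; ring

-- On a map of rank one `log ‖·‖` is additive, so only the distance of `h` to such a map matters.
lemma abs_secondDifference_log_norm_le [Nontrivial U] (ha : IsBilipschitz C a)
    (hb : IsBilipschitz C b) (hh : h ≠ 0) :
    |secondDifference (fun g : U →L[ℝ] U => Real.log ‖g‖) (a, h, b)| ≤
      3 * C ^ 4 * (maxArea h / ‖h‖ ^ 2) := by
  obtain ⟨c, u, hc, hu, hcu⟩ := exists_norm_sub_smulRight_le hh
  have hh_pos := norm_pos_iff.2 hh
  have h_norm : ‖h‖ = ‖c.smulRight u‖ := by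
    rw [ContinuousLinearMap.norm_smulRight_apply, hc, hu, one_mul]
  have h_one : IsBilipschitz C (1 : U →L[ℝ] U) := IsBilipschitz.one.mono ha.one_le
  have h_zero := secondDifference_log_norm_smulRight ha hb
    (norm_ne_zero_iff.1 (hc.trans_ne one_ne_zero)) (norm_ne_zero_iff.1 (hu.trans_ne hh_pos.ne'))
  have h_dist : C ^ 4 * (‖h - c.smulRight u‖ / ‖h‖) ≤ C ^ 4 * (maxArea h / ‖h‖ ^ 2) := by
    rw [sq, ← div_div]
    gcongr
  have hab := (abs_log_norm_mul_mul_sub_le ha hb hh_pos h_norm).trans h_dist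
  have ha1 := (abs_log_norm_mul_mul_sub_le ha h_one hh_pos h_norm).trans h_dist
  have h1b := (abs_log_norm_mul_mul_sub_le h_one hb hh_pos h_norm).trans h_dist
  simp only [mul_one, one_mul] at ha1 h1b
  simp only [secondDifference, ← h_norm] at h_zero ⊢
  rw [abs_le] at hab ha1 h1b ⊢
  constructor <;> linarith [hab.1, hab.2, ha1.1, ha1.2, h1b.1, h1b.2]

lemma abs_secondDifference_log_norm_le_exp (hU : 2 ≤ Module.finrank ℝ U)
    (ha : IsBilipschitz C a) (hb : IsBilipschitz C b) (hh : h ∈ bilipschitzSubmonoid U)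
    {α : ℝ} (hα : α ≤ 1) :
    |secondDifference (fun g : U →L[ℝ] U => Real.log ‖g‖) (a, h, b)| ≤
      3 * C ^ 4 * Real.exp (α * logGap h) := by
  have : Nontrivial U := Module.nontrivial_of_finrank_pos (R := ℝ) (by omega)
  obtain ⟨D, hh⟩ := hh
  have h_pos := hh.norm_pos
  have h_area := hh.maxArea_pos hU
  have h_exp : maxArea h / ‖h‖ ^ 2 = Real.exp (logGap h) := by
    rw [logGap, Real.exp_sub, Real.exp_log h_area, two_mul, Real.exp_add, Real.exp_log h_pos, sq]
  have h_nonpos : logGap h ≤ 0 := by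
    rw [← Real.exp_le_one_iff, ← h_exp, div_le_one (by positivity)]
    exact maxArea_le_norm_sq h
  refine (abs_secondDifference_log_norm_le ha hb (norm_pos_iff.1 h_pos)).trans ?_
  rw [h_exp]
  gcongr
  nlinarith

end RankOne

/-! ### Analyticity of the top Lyapunov exponent -/

section TopExponent

variable {U : Type*} [NormedAddCommGroup U] [InnerProductSpace ℝ U] [FiniteDimensional ℝ U]
  {C : ℝ} {ν₀ ν₁ : Measure (U →L[ℝ] U)}

lemma ae_abs_secondDifference_log_norm_le (hU : 2 ≤ Module.finrank ℝ U)
    (hν₀ : ∀ᵐ g ∂ν₀, IsBilipschitz C g) (n : ℕ) {α : ℝ} (hα : α ≤ 1) :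
    ∀ᵐ x ∂twoSidedStep ν₀ n, |secondDifference (fun g : U →L[ℝ] U => Real.log ‖g‖) x| ≤
      3 * C ^ 4 * Real.exp (α * logGap x.2.1) := by
  filter_upwards [Measure.quasiMeasurePreserving_fst.ae hν₀,
    Measure.quasiMeasurePreserving_snd.ae
      (Measure.quasiMeasurePreserving_fst.ae (ae_convPow_isBilipschitz hν₀ n)),
    Measure.quasiMeasurePreserving_snd.ae (Measure.quasiMeasurePreserving_snd.ae hν₀)]
    with x ha hh hb
  exact abs_secondDifference_log_norm_le_exp hU ha hb ⟨_, hh⟩ hα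

theorem exists_hasMajorizedSeries_growthRate_log_norm [IsProbabilityMeasure ν₀]
    [IsProbabilityMeasure ν₁] (hU : 2 ≤ Module.finrank ℝ U)
    (hν₀ : ∀ᵐ g ∂ν₀, IsBilipschitz C g) (hν₁ : ν₁ ≪ ν₀)
    (hgap : growthRate (fun g => Real.log (maxArea g)) ν₀ <
      2 * growthRate (fun g => Real.log ‖g‖) ν₀) :
    ∃ ε > 0, ε ≤ 1 ∧ ∃ r, HasMajorizedSeries
      (fun t => growthRate (fun g => Real.log ‖g‖) (mixture ν₀ ν₁ t)) ε r := by
  have : Nontrivial U := Module.nontrivial_of_finrank_pos (R := ℝ) (by omega)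
  have hC := one_le_of_ae_isBilipschitz hν₀
  obtain ⟨c, hc, h_rate⟩ := exists_hasRobustExpRate_logGap hU hν₀ hgap
  exact exists_hasMajorizedSeries_growthRate hν₁ measurable_norm.log measurable_logGap
    (fun n => ⟨_, ((isBoundedSubcocycle_log_norm hν₀).ae_abs_le n).mono fun _ hg => hg () trivial⟩)
    (by positivity) hc h_rate fun n _ hα => ae_abs_secondDifference_log_norm_le hU hν₀ n hα.2

end TopExponent

section GeneralLinearGroup

instance {R : Type*} [TopologicalSpace R] [SecondCountableTopology R] {m n : Type*} [Countable m]
    [Countable n] : SecondCountableTopology (Matrix m n R) :=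
  inferInstanceAs (SecondCountableTopology (m → n → R))

instance {M : Type*} [Monoid M] [TopologicalSpace M] [SecondCountableTopology M] :
    SecondCountableTopology Mˣ :=
  haveI : SecondCountableTopology Mᵐᵒᵖ :=
    MulOpposite.opHomeomorph.symm.isEmbedding.secondCountableTopology
  Units.isEmbedding_embedProduct.secondCountableTopology

instance : MeasurableMul₂ (GLd d) := ContinuousMul.measurableMul₂

lemma continuous_glCLM : Continuous (glCLM (d := d)) :=
  (LinearMap.continuous_of_finiteDimensional
    (Matrix.toEuclideanCLM (n := Fin d) (𝕜 := ℝ)).toAlgEquiv.toLinearMap).comp Units.continuous_val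

lemma measurable_glCLM : Measurable (glCLM (d := d)) := continuous_glCLM.measurable

lemma glCLM_one : glCLM (1 : GLd d) = 1 := map_one _

lemma glCLM_mul (g h : GLd d) : glCLM (g * h) = glCLM g * glCLM h := map_mul _ _ _

lemma exists_forall_isBilipschitz_glCLM {S : Set (GLd d)} (hS : IsCompact S) :
    ∃ C, ∀ g ∈ S, IsBilipschitz C (glCLM g) := by
  obtain ⟨A, hA⟩ := hS.exists_bound_of_continuousOn continuous_glCLM.continuousOn
  obtain ⟨B, hB⟩ := hS.exists_bound_of_continuousOn
    (continuous_glCLM.comp continuous_inv).continuousOn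
  refine ⟨max 1 (max A B), fun g hg => ⟨le_max_left _ _, ?_, fun v => ?_⟩⟩
  · exact (hA g hg).trans ((le_max_left _ _).trans (le_max_right _ _))
  · calc ‖v‖ = ‖glCLM g⁻¹ (glCLM g v)‖ := by rw [glCLM_leftInv]
      _ ≤ max 1 (max A B) * ‖glCLM g v‖ := ContinuousLinearMap.le_of_opNorm_le _
        ((hB g hg).trans ((le_max_right _ _).trans (le_max_right _ _))) _

variable {κ : Measure (GLd d)}

lemma mconvN_eq_convPow [SFinite κ] (n : ℕ) : mconvN κ n = convPow κ n := by
  induction n with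
  | zero => rfl
  | succ n ih =>
    rw [mconvN]
    split_ifs with hn
    · rw [hn, convPow_one]
    · rw [ih]
      rfl

lemma integral_glCLM_mconvN [IsFiniteMeasure κ] {φ : (Ed d →L[ℝ] Ed d) → ℝ} (hφ : Measurable φ)
    (n : ℕ) : ∫ g, φ (glCLM g) ∂mconvN κ n = ∫ g, φ g ∂convPow (κ.map glCLM) n := by
  rw [mconvN_eq_convPow, ← map_convPow measurable_glCLM (S := ⊤) .univ glCLM_one
    (fun a _ b _ => glCLM_mul a b) (by simp),
    integral_map measurable_glCLM.aemeasurable hφ.aestronglyMeasurable]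

lemma L1_eq_growthRate [IsFiniteMeasure κ] :
    L1 κ = growthRate (fun g => Real.log ‖g‖) (κ.map glCLM) := by
  simp only [L1, gnorm, growthRate, ← integral_glCLM_mconvN measurable_norm.log]

lemma L12_eq_growthRate [IsFiniteMeasure κ] :
    L12 κ = growthRate (fun g => Real.log (maxArea g)) (κ.map glCLM) := by
  simp only [growthRate, ← integral_glCLM_mconvN measurable_maxArea.log]
  rfl

lemma exists_hasMajorizedSeries_L1_mixture (hd : 2 ≤ d) {S : Set (GLd d)} (hS : IsCompact S)
    {μ₀ μ₁ : Measure (GLd d)} [IsProbabilityMeasure μ₀] [IsProbabilityMeasure μ₁]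
    (hμ₀ : ∀ᵐ g ∂μ₀, g ∈ S) (hμ₁ : μ₁ ≪ μ₀) (hgap : L2 μ₀ < L1 μ₀) :
    ∃ ε > 0, ε ≤ 1 ∧ ∃ r, HasMajorizedSeries (fun t => L1 (mixture μ₀ μ₁ t)) ε r := by
  obtain ⟨C, hC⟩ := exists_forall_isBilipschitz_glCLM hS
  have hm := measurable_glCLM (d := d)
  have h_prob (μ : Measure (GLd d)) [IsProbabilityMeasure μ] :
      IsProbabilityMeasure (μ.map glCLM) := Measure.isProbabilityMeasure_map hm.aemeasurable
  have h_bilipschitz : ∀ᵐ g ∂μ₀.map glCLM, IsBilipschitz C g :=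
    (ae_map_iff hm.aemeasurable (isClosed_setOf_isBilipschitz C).measurableSet).2
      (hμ₀.mono fun g hg => hC g hg)
  obtain ⟨ε, hε, hε_le, r, h_series⟩ := exists_hasMajorizedSeries_growthRate_log_norm (by simpa)
    h_bilipschitz (hμ₁.map hm) (by
      rw [← L12_eq_growthRate, ← L1_eq_growthRate]
      rw [L2] at hgap
      linarith)
  refine ⟨ε, hε, hε_le, r, h_series.congr fun t ht => ?_⟩
  have := isProbabilityMeasure_mixture μ₀ μ₁ ht.1 (ht.2.le.trans hε_le)
  rw [L1_eq_growthRate, map_mixture hm]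

end GeneralLinearGroup

section Density

variable {Ω : Type*} [MeasurableSpace Ω] {μ : Measure Ω} {f : Ω → ℝ}

lemma withDensity_one_sub_add_mul_eq_mixture (hf_nonneg : ∀ g, 0 ≤ f g) {t : ℝ}
    (ht₀ : 0 ≤ t) (ht₁ : t ≤ 1) :
    μ.withDensity (fun g => ENNReal.ofReal ((1 - t) + t * f g)) =
      mixture μ (μ.withDensity fun g => ENNReal.ofReal (f g)) t := by
  have h_density (g : Ω) : ENNReal.ofReal ((1 - t) + t * f g) =
      ENNReal.ofReal (1 - t) + ENNReal.ofReal t * ENNReal.ofReal (f g) := by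
    rw [ENNReal.ofReal_add (sub_nonneg.2 ht₁) (mul_nonneg ht₀ (hf_nonneg g)),
      ENNReal.ofReal_mul ht₀]
  simp only [h_density]
  rw [mixture, ← withDensity_const, ← withDensity_smul' _ _ ENNReal.ofReal_ne_top,
    ← withDensity_add_left measurable_const]
  rfl

lemma isProbabilityMeasure_withDensity_ofReal (hf : Integrable f μ) (hf_nonneg : 0 ≤ᵐ[μ] f)
    (hf_int : ∫ g, f g ∂μ = 1) :
    IsProbabilityMeasure (μ.withDensity fun g => ENNReal.ofReal (f g)) := by
  constructor
  rw [withDensity_apply _ .univ, Measure.restrict_univ,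
    ← ofReal_integral_eq_lintegral_ofReal hf hf_nonneg, hf_int, ENNReal.ofReal_one]

end Density

theorem analyticity_absolutely_continuous
    (d : ℕ) (hd : 2 ≤ d) (S : Set (GLd d)) (hS : IsCompact S)
    (μ₀ : Measure (GLd d)) [IsProbabilityMeasure μ₀]
    (hsupp : IsSupport μ₀ S) (hgap : L2 μ₀ < L1 μ₀)
    (p : ENNReal) (hp : 1 ≤ p) (f : GLd d → ℝ) (hf : MemLp f p μ₀)
    (hf0 : ∀ g, 0 ≤ f g) (hf1 : ∫ g, f g ∂μ₀ = 1) :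
    ∃ ε : ℝ, 0 < ε ∧ ε ≤ 1 ∧ ∃ a : ℕ → ℝ,
      (Summable fun k : ℕ => |a k| * ε ^ k) ∧
      ∀ t : ℝ, 0 ≤ t → t < ε →
        L1 (μ₀.withDensity (fun g => ENNReal.ofReal ((1 - t) + t * f g))) = ∑' k : ℕ, a k * t ^ k := by
  have hf_int := hf.integrable hp
  have := isProbabilityMeasure_withDensity_ofReal hf_int (.of_forall hf0) hf1
  have hμ₀ : ∀ᵐ g ∂μ₀, g ∈ S := hsupp.1
  obtain ⟨ε, hε, hε_le, -, a, ha, -, h_sum⟩ := exists_hasMajorizedSeries_L1_mixture hd hS hμ₀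
    (withDensity_absolutelyContinuous μ₀ fun g => ENNReal.ofReal (f g)) hgap
  refine ⟨ε, hε, hε_le, a, ha, fun t ht₀ ht => ?_⟩
  rw [withDensity_one_sub_add_mul_eq_mixture hf0 ht₀ (ht.le.trans hε_le)]
  exact (h_sum t ⟨ht₀, ht⟩).tsum_eq.symm

end
end

section
/- Let d ≥ 2, let μ be a compactly supported finite positive Borel measure on GL_d(ℝ), and let α > 0. Then k_α(μ) ≤ sup_{v ∈ ℝ^d, ‖v‖ = 1} ∫ (N_2(g)/‖gv‖²)^α dμ(g), where N_2(g) := sup{ √(‖gp‖²‖gq‖² − ⟨gp,gq⟩²) : p, q orthonormal in ℝ^d } is the product s_1(g)s_2(g) of the two largest singular values of g. -/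
open MeasureTheory Filter
open scoped LinearAlgebra.Projectivization

noncomputable section

variable {d : ℕ}

/-!
For unit vectors `v`, `w` spanning distinct lines, `δ(v̂, ŵ)` is the area of the parallelogram
spanned by `v` and `w`, and `g` multiplies such areas by at most `N₂(g)`. Hence
`δ(ĝv̂, ĝŵ) / δ(v̂, ŵ) ≤ N₂(g) / (‖gv‖ ‖gw‖)`, which is the geometric mean of `N₂(g) / ‖gv‖²` and
`N₂(g) / ‖gw‖²`. The arithmetic-geometric mean inequality, applied to the `α`-th powers and
integrated, bounds the left-hand side by the average of two of the integrals in the supremum.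
That supremum is finite as soon as `(‖g‖ ‖g⁻¹‖)^(2α)` is integrable.
-/

section ParallelogramArea

variable {E F : Type*} [NormedAddCommGroup E] [InnerProductSpace ℝ E]
  [NormedAddCommGroup F] [InnerProductSpace ℝ F]

/-- The area of the parallelogram spanned by `v` and `w`, that is `‖v ∧ w‖`, written as the square
root of the Gram determinant. -/
def parallelogramArea (v w : E) : ℝ :=
  √(‖v‖ ^ 2 * ‖w‖ ^ 2 - inner ℝ v w ^ 2)

lemma parallelogramArea_nonneg (v w : E) : 0 ≤ parallelogramArea v w :=
  Real.sqrt_nonneg _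

lemma parallelogramArea_le_norm_mul_norm (v w : E) : parallelogramArea v w ≤ ‖v‖ * ‖w‖ := by
  refine Real.sqrt_le_iff.mpr ⟨by positivity, ?_⟩
  rw [mul_pow]
  exact sub_le_self _ (sq_nonneg _)

lemma parallelogramArea_of_inner_eq_zero {v w : E} (h : inner ℝ v w = 0) :
    parallelogramArea v w = ‖v‖ * ‖w‖ := by
  rw [parallelogramArea, h, zero_pow two_ne_zero, sub_zero, ← mul_pow,
    Real.sqrt_sq (by positivity)]

lemma parallelogramArea_smul_smul (a b : ℝ) (v w : E) :
    parallelogramArea (a • v) (b • w) = |a| * |b| * parallelogramArea v w := by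
  have gram_smul : ‖a • v‖ ^ 2 * ‖b • w‖ ^ 2 - inner ℝ (a • v) (b • w) ^ 2 =
      (a * b) ^ 2 * (‖v‖ ^ 2 * ‖w‖ ^ 2 - inner ℝ v w ^ 2) := by
    simp only [norm_smul, real_inner_smul_left, real_inner_smul_right, mul_pow, Real.norm_eq_abs,
      sq_abs]
    ring
  rw [parallelogramArea, gram_smul, Real.sqrt_mul (sq_nonneg _), Real.sqrt_sq_eq_abs, abs_mul,
    parallelogramArea]

lemma parallelogramArea_add_smul_right (c : ℝ) (v w : E) :
    parallelogramArea v (w + c • v) = parallelogramArea v w := by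
  simp only [parallelogramArea, ← real_inner_self_eq_norm_sq, inner_add_left, inner_add_right,
    real_inner_smul_left, real_inner_smul_right, real_inner_comm v w]
  ring_nf

lemma exists_inner_add_smul_eq_zero (v w : E) : ∃ c : ℝ, inner ℝ v (w + c • v) = 0 := by
  rcases eq_or_ne v 0 with rfl | hv
  · exact ⟨0, inner_zero_left _⟩
  · refine ⟨-(inner ℝ v w / inner ℝ v v), ?_⟩
    rw [inner_add_right, real_inner_smul_right, neg_mul,
      div_mul_cancel₀ _ (inner_self_ne_zero.mpr hv), add_neg_cancel]

/-- The norm of `Λ²T`, that is the supremum of the areas of the images under `T` of unit squares;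
it is `0` when there are no orthonormal pairs. -/
def areaNorm (T : E →L[ℝ] F) : ℝ :=
  ⨆ p : {p : E × E // ‖p.1‖ = 1 ∧ ‖p.2‖ = 1 ∧ inner ℝ p.1 p.2 = 0},
    parallelogramArea (T p.1.1) (T p.1.2)

lemma parallelogramArea_map_le_opNorm_sq (T : E →L[ℝ] F) {p q : E} (hp : ‖p‖ = 1) (hq : ‖q‖ = 1) :
    parallelogramArea (T p) (T q) ≤ ‖T‖ ^ 2 :=
  calc parallelogramArea (T p) (T q) ≤ ‖T p‖ * ‖T q‖ := parallelogramArea_le_norm_mul_norm _ _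
    _ ≤ ‖T‖ * ‖T‖ := by
      gcongr
      · exact T.unit_le_opNorm p hp.le
      · exact T.unit_le_opNorm q hq.le
    _ = ‖T‖ ^ 2 := (sq _).symm

lemma bddAbove_range_parallelogramArea_map (T : E →L[ℝ] F) :
    BddAbove (Set.range fun p : {p : E × E // ‖p.1‖ = 1 ∧ ‖p.2‖ = 1 ∧ inner ℝ p.1 p.2 = 0} ↦
      parallelogramArea (T p.1.1) (T p.1.2)) :=
  ⟨‖T‖ ^ 2, Set.forall_mem_range.mpr fun p ↦
    parallelogramArea_map_le_opNorm_sq T p.2.1 p.2.2.1⟩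

lemma areaNorm_nonneg (T : E →L[ℝ] F) : 0 ≤ areaNorm T :=
  Real.iSup_nonneg fun _ ↦ parallelogramArea_nonneg _ _

lemma areaNorm_le_opNorm_sq (T : E →L[ℝ] F) : areaNorm T ≤ ‖T‖ ^ 2 :=
  Real.iSup_le (fun p ↦ parallelogramArea_map_le_opNorm_sq T p.2.1 p.2.2.1) (sq_nonneg _)

lemma parallelogramArea_map_le_of_inner_eq_zero (T : E →L[ℝ] F) {v w : E}
    (h : inner ℝ v w = 0) :
    parallelogramArea (T v) (T w) ≤ areaNorm T * (‖v‖ * ‖w‖) := by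
  rcases eq_or_ne v 0 with rfl | hv
  · simp [parallelogramArea]
  rcases eq_or_ne w 0 with rfl | hw
  · simp [parallelogramArea]
  have normalized_le : parallelogramArea (T (‖v‖⁻¹ • v)) (T (‖w‖⁻¹ • w)) ≤ areaNorm T :=
    le_ciSup (bddAbove_range_parallelogramArea_map T)
      ⟨(‖v‖⁻¹ • v, ‖w‖⁻¹ • w), norm_smul_inv_norm hv, norm_smul_inv_norm hw,
        by rw [real_inner_smul_left, real_inner_smul_right, h, mul_zero, mul_zero]⟩
  rwa [map_smul, map_smul, parallelogramArea_smul_smul, abs_inv, abs_inv, abs_norm, abs_norm,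
    ← mul_inv, inv_mul_le_iff₀ (by positivity), mul_comm] at normalized_le

lemma parallelogramArea_map_le (T : E →L[ℝ] F) (v w : E) :
    parallelogramArea (T v) (T w) ≤ areaNorm T * parallelogramArea v w := by
  obtain ⟨c, hc⟩ := exists_inner_add_smul_eq_zero v w
  calc parallelogramArea (T v) (T w)
      = parallelogramArea (T v) (T (w + c • v)) := by
        rw [map_add, map_smul, parallelogramArea_add_smul_right]
    _ ≤ areaNorm T * (‖v‖ * ‖w + c • v‖) := parallelogramArea_map_le_of_inner_eq_zero T hc
    _ = areaNorm T * parallelogramArea v w := by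
        rw [← parallelogramArea_of_inner_eq_zero hc, parallelogramArea_add_smul_right]

lemma lowerSemicontinuous_areaNorm :
    LowerSemicontinuous (areaNorm : (E →L[ℝ] F) → ℝ) := by
  refine lowerSemicontinuous_ciSup bddAbove_range_parallelogramArea_map fun p ↦
    Continuous.lowerSemicontinuous ?_
  unfold parallelogramArea
  fun_prop

end ParallelogramArea

section LineThroughUnitVector

variable {E : Type*} [NormedAddCommGroup E] [NormedSpace ℝ E]

/-- The line `v̂` through a unit vector `v`; representing points of `ℙ(E)` this way normalizes the
denominators in the projective distance. -/
def unitLine (v : Metric.sphere (0 : E) 1) : ℙ ℝ E :=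
  Projectivization.mk ℝ (v : E) (ne_zero_of_mem_unit_sphere v)

lemma unitLine_surjective :
    Function.Surjective (unitLine : Metric.sphere (0 : E) 1 → ℙ ℝ E) := fun x ↦ by
  refine ⟨⟨‖x.rep‖⁻¹ • x.rep, mem_sphere_zero_iff_norm.mpr (norm_smul_inv_norm x.rep_nonzero)⟩, ?_⟩
  conv_rhs => rw [← x.mk_rep]
  exact (Projectivization.mk_eq_mk_iff' ..).mpr ⟨‖x.rep‖⁻¹, rfl⟩

end LineThroughUnitVector

lemma rpow_div_mul_le_add_div_two {N a b : ℝ} (α : ℝ) (hN : 0 ≤ N) (ha : 0 ≤ a) (hb : 0 ≤ b) :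
    (N / (a * b)) ^ α ≤ ((N / a ^ 2) ^ α + (N / b ^ 2) ^ α) / 2 := by
  have sq_rpow (c : ℝ) (hc : 0 ≤ c) : (N / c ^ 2) ^ α = ((√N / c) ^ α) ^ 2 := by
    rw [Real.rpow_pow_comm (by positivity), div_pow, Real.sq_sqrt hN]
  have mul_rpow : (N / (a * b)) ^ α = (√N / a) ^ α * (√N / b) ^ α := by
    rw [← Real.mul_rpow (by positivity) (by positivity), div_mul_div_comm, Real.mul_self_sqrt hN]
  rw [sq_rpow a ha, sq_rpow b hb, mul_rpow, le_div_iff₀ two_pos]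
  linarith [two_mul_le_add_sq ((√N / a) ^ α) ((√N / b) ^ α)]

lemma N2_eq_areaNorm (g : GLd d) : N2 g = areaNorm (glCLM g) := by
  refine congrArg sSup (Set.ext fun x ↦ ?_)
  simp only [Set.mem_ofPred_eq, Set.mem_range, Subtype.exists, Prod.exists, exists_prop, and_assoc,
    parallelogramArea, eq_comm (a := x)]

lemma N2_nonneg (g : GLd d) : 0 ≤ N2 g :=
  N2_eq_areaNorm g ▸ areaNorm_nonneg _

lemma N2_le_gnorm_sq (g : GLd d) : N2 g ≤ gnorm g ^ 2 :=
  N2_eq_areaNorm g ▸ areaNorm_le_opNorm_sq _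

lemma norm_le_gnorm_inv_mul_norm_glCLM (g : GLd d) (v : Ed d) :
    ‖v‖ ≤ gnorm g⁻¹ * ‖glCLM g v‖ :=
  calc ‖v‖ = ‖glCLM g⁻¹ (glCLM g v)‖ := by rw [glCLM_leftInv]
    _ ≤ gnorm g⁻¹ * ‖glCLM g v‖ := (glCLM g⁻¹).le_opNorm _

lemma continuous_glCLM_s8 : Continuous (glCLM : GLd d → Ed d →L[ℝ] Ed d) :=
  (LinearMap.continuous_of_finiteDimensional
    (Matrix.toEuclideanCLM (n := Fin d) (𝕜 := ℝ)).toAlgEquiv.toLinearMap).comp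
    Units.continuous_val

lemma continuous_gnorm : Continuous (gnorm : GLd d → ℝ) :=
  continuous_glCLM_s8.norm

lemma measurable_N2 : Measurable (N2 : GLd d → ℝ) := by
  rw [funext N2_eq_areaNorm]
  exact (lowerSemicontinuous_areaNorm.comp continuous_glCLM_s8).measurable

lemma measurable_norm_glCLM (v : Ed d) : Measurable fun g : GLd d ↦ ‖glCLM g v‖ :=
  (continuous_glCLM_s8.clm_apply continuous_const).norm.measurable

lemma N2_div_norm_glCLM_sq_nonneg (g : GLd d) (v : Ed d) : 0 ≤ N2 g / ‖glCLM g v‖ ^ 2 :=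
  div_nonneg (N2_nonneg g) (sq_nonneg _)

lemma N2_div_norm_glCLM_sq_le (g : GLd d) {v : Ed d} (hv : ‖v‖ = 1) :
    N2 g / ‖glCLM g v‖ ^ 2 ≤ (gnorm g * gnorm g⁻¹) ^ 2 := by
  refine div_le_of_le_mul₀ (sq_nonneg _) (sq_nonneg _) ?_
  have one_le : 1 ≤ gnorm g⁻¹ * ‖glCLM g v‖ := hv ▸ norm_le_gnorm_inv_mul_norm_glCLM g v
  calc N2 g ≤ gnorm g ^ 2 := N2_le_gnorm_sq g
    _ ≤ gnorm g ^ 2 * (gnorm g⁻¹ * ‖glCLM g v‖) ^ 2 :=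
      le_mul_of_one_le_right (sq_nonneg _) (one_le_pow₀ one_le)
    _ = (gnorm g * gnorm g⁻¹) ^ 2 * ‖glCLM g v‖ ^ 2 := by ring

lemma N2_div_norm_glCLM_sq_rpow_le {α : ℝ} (hα : 0 ≤ α) (g : GLd d) {v : Ed d} (hv : ‖v‖ = 1) :
    (N2 g / ‖glCLM g v‖ ^ 2) ^ α ≤ (gnorm g * gnorm g⁻¹) ^ (2 * α) := by
  have condition_nonneg : 0 ≤ gnorm g * gnorm g⁻¹ := mul_nonneg (norm_nonneg _) (norm_nonneg _)
  rw [Real.rpow_mul condition_nonneg, Real.rpow_two]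
  exact Real.rpow_le_rpow (N2_div_norm_glCLM_sq_nonneg g v) (N2_div_norm_glCLM_sq_le g hv) hα

lemma pdelta_nonneg (x y : Pd d) : 0 ≤ pdelta x y :=
  div_nonneg (Real.sqrt_nonneg _) (by positivity)

lemma pdelta_mk_mk {v w : Ed d} (hv : v ≠ 0) (hw : w ≠ 0) :
    pdelta (Projectivization.mk ℝ v hv) (Projectivization.mk ℝ w hw) =
      parallelogramArea v w / (‖v‖ * ‖w‖) := by
  obtain ⟨a, ha⟩ := Projectivization.exists_smul_eq_mk_rep ℝ v hv
  obtain ⟨b, hb⟩ := Projectivization.exists_smul_eq_mk_rep ℝ w hw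
  have ab_ne_zero : |(a : ℝ)| * |(b : ℝ)| ≠ 0 :=
    mul_ne_zero (abs_ne_zero.mpr a.ne_zero) (abs_ne_zero.mpr b.ne_zero)
  rw [pdelta, ← parallelogramArea, ← ha, ← hb, Units.smul_def, Units.smul_def,
    parallelogramArea_smul_smul, norm_smul, norm_smul, Real.norm_eq_abs, Real.norm_eq_abs,
    mul_mul_mul_comm, mul_div_mul_left _ _ ab_ne_zero]

lemma pdelta_pact_unitLine_div_le (g : GLd d) (v w : Metric.sphere (0 : Ed d) 1) :
    pdelta (pact g (unitLine v)) (pact g (unitLine w)) / pdelta (unitLine v) (unitLine w) ≤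
      N2 g / (‖glCLM g v‖ * ‖glCLM g w‖) := by
  have area_map_le : parallelogramArea (glCLM g v) (glCLM g w) ≤ N2 g * parallelogramArea v.1 w :=
    N2_eq_areaNorm g ▸ parallelogramArea_map_le (glCLM g) v.1 w
  rw [unitLine, unitLine, pact, Projectivization.map_mk, Projectivization.map_mk, pdelta_mk_mk,
    pdelta_mk_mk, norm_eq_of_mem_sphere, norm_eq_of_mem_sphere, mul_one, div_one, div_right_comm]
  exact div_le_div_of_nonneg_right
    (div_le_of_le_mul₀ (parallelogramArea_nonneg _ _) (N2_nonneg g) area_map_le)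
    (mul_nonneg (norm_nonneg _) (norm_nonneg _))

lemma exists_unit_forall_pdelta_ratio_rpow_le {α : ℝ} (hα : 0 ≤ α) (x y : Pd d) :
    ∃ v w : Ed d, ‖v‖ = 1 ∧ ‖w‖ = 1 ∧ ∀ g : GLd d,
      (pdelta (pact g x) (pact g y) / pdelta x y) ^ α ≤
        ((N2 g / ‖glCLM g v‖ ^ 2) ^ α + (N2 g / ‖glCLM g w‖ ^ 2) ^ α) / 2 := by
  obtain ⟨v, rfl⟩ := unitLine_surjective x
  obtain ⟨w, rfl⟩ := unitLine_surjective y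
  refine ⟨v, w, norm_eq_of_mem_sphere v, norm_eq_of_mem_sphere w, fun g ↦ ?_⟩
  exact (Real.rpow_le_rpow (div_nonneg (pdelta_nonneg _ _) (pdelta_nonneg _ _))
    (pdelta_pact_unitLine_div_le g v w) hα).trans
    (rpow_div_mul_le_add_div_two α (N2_nonneg g) (norm_nonneg _) (norm_nonneg _))

section Integrals

variable {μ : Measure (GLd d)} {α : ℝ}

lemma integrable_N2_div_norm_glCLM_sq_rpow (hα : 0 ≤ α)
    (hμ : Integrable (fun g ↦ (gnorm g * gnorm g⁻¹) ^ (2 * α)) μ) {v : Ed d} (hv : ‖v‖ = 1) :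
    Integrable (fun g ↦ (N2 g / ‖glCLM g v‖ ^ 2) ^ α) μ := by
  have meas : Measurable fun g : GLd d ↦ (N2 g / ‖glCLM g v‖ ^ 2) ^ α :=
    (measurable_N2.div ((measurable_norm_glCLM v).pow_const 2)).pow_const α
  refine hμ.mono' meas.aestronglyMeasurable (ae_of_all μ fun g ↦ ?_)
  rw [Real.norm_of_nonneg (Real.rpow_nonneg (N2_div_norm_glCLM_sq_nonneg g v) α)]
  exact N2_div_norm_glCLM_sq_rpow_le hα g hv

lemma bddAbove_integral_N2_div_norm_glCLM_sq_rpow (hα : 0 ≤ α)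
    (hμ : Integrable (fun g ↦ (gnorm g * gnorm g⁻¹) ^ (2 * α)) μ) :
    BddAbove { x : ℝ | ∃ v : Ed d, ‖v‖ = 1 ∧ x = ∫ g, (N2 g / ‖glCLM g v‖ ^ 2) ^ α ∂μ } := by
  refine ⟨∫ g, (gnorm g * gnorm g⁻¹) ^ (2 * α) ∂μ, ?_⟩
  rintro _ ⟨v, hv, rfl⟩
  exact integral_mono (integrable_N2_div_norm_glCLM_sq_rpow hα hμ hv) hμ fun g ↦
    N2_div_norm_glCLM_sq_rpow_le hα g hv

lemma CompactlySupported.integrable_of_continuous [IsFiniteMeasureOnCompacts μ]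
    (hμ : CompactlySupported μ) {f : GLd d → ℝ} (hf : Continuous f) : Integrable f μ := by
  obtain ⟨K, hK, hKμ⟩ := hμ
  rw [← Measure.restrict_eq_self_of_ae_mem (measure_eq_zero_iff_ae_notMem.mp hKμ |>.mono
    fun _ ↦ not_not.mp)]
  exact hf.continuousOn.integrableOn_compact hK

lemma continuous_gnorm_mul_gnorm_inv_rpow (hα : 0 ≤ α) :
    Continuous fun g : GLd d ↦ (gnorm g * gnorm g⁻¹) ^ α :=
  (continuous_gnorm.mul (continuous_gnorm.comp continuous_inv)).rpow_const fun _ ↦ .inr hα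

end Integrals

theorem kalpha_le_sup_integral_general (μ : Measure (GLd d)) {α : ℝ} (hα : 0 ≤ α)
    (hμ : Integrable (fun g ↦ (gnorm g * gnorm g⁻¹) ^ (2 * α)) μ) :
    kalpha α μ ≤
      sSup { x : ℝ | ∃ v : Ed d, ‖v‖ = 1 ∧
        x = ∫ g, (N2 g / ‖glCLM g v‖ ^ 2) ^ α ∂μ } := by
  have integral_le (v : Ed d) (hv : ‖v‖ = 1) := le_csSup
    (bddAbove_integral_N2_div_norm_glCLM_sq_rpow hα hμ) ⟨v, hv, rfl⟩
  refine Real.sSup_le ?_ (Real.sSup_nonneg ?_)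
  · rintro _ ⟨x, y, -, rfl⟩
    obtain ⟨v, w, hv, hw, ratio_le⟩ := exists_unit_forall_pdelta_ratio_rpow_le hα x y
    have hv_int := integrable_N2_div_norm_glCLM_sq_rpow hα hμ hv
    have hw_int := integrable_N2_div_norm_glCLM_sq_rpow hα hμ hw
    calc ∫ g, (pdelta (pact g x) (pact g y) / pdelta x y) ^ α ∂μ
        ≤ ∫ g, ((N2 g / ‖glCLM g v‖ ^ 2) ^ α + (N2 g / ‖glCLM g w‖ ^ 2) ^ α) / 2 ∂μ :=
          integral_mono_of_nonneg
            (ae_of_all μ fun g ↦ Real.rpow_nonneg (div_nonneg (pdelta_nonneg _ _)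
              (pdelta_nonneg _ _)) α)
            ((hv_int.add hw_int).div_const 2) (ae_of_all μ ratio_le)
      _ = (∫ g, (N2 g / ‖glCLM g v‖ ^ 2) ^ α ∂μ + ∫ g, (N2 g / ‖glCLM g w‖ ^ 2) ^ α ∂μ) / 2 := by
          rw [integral_div, integral_add hv_int hw_int]
      _ ≤ _ := by linarith [integral_le v hv, integral_le w hw]
  · rintro _ ⟨v, -, rfl⟩
    exact integral_nonneg fun g ↦ Real.rpow_nonneg (N2_div_norm_glCLM_sq_nonneg g v) α

theorem kalpha_le_sup_integral
    (d : ℕ) (hd : 2 ≤ d) (μ : Measure (GLd d)) [IsFiniteMeasure μ]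
    (hc : CompactlySupported μ) (α : ℝ) (hα : 0 < α) :
    kalpha α μ ≤
      sSup { x : ℝ | ∃ v : Ed d, ‖v‖ = 1 ∧
        x = ∫ g, (N2 g / ‖glCLM g v‖ ^ 2) ^ α ∂μ } :=
  kalpha_le_sup_integral_general μ hα.le
    (hc.integrable_of_continuous (continuous_gnorm_mul_gnorm_inv_rpow (by positivity)))

end
end
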